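/- arXiv:2311.10008 — 4 statements merged into one kernel-verified Lean document; each statement's English description precedes it below -/
import Mathlib

section
/- Let χ be a non-trivial Dirichlet character modulo 18. There exists a constant C > 0 such that for all real x ≥ 2, the absolute value of the sum of χ(n) over all positive integers n ≤ x, all of whose prime factors are congruent to 2 modulo 3, is at most C·x/log x. -/
/-!
Let `f n = χ n` if every prime factor `p` of `n` has `ψ p = -1`, and `f n = 0` otherwise. Then `f`
is completely multiplicative, so `∑_{n ≤ x} f n log n = ∑_{m ≤ x} f m ψ_f(x / m)` with
`ψ_f(y) = ∑_{n ≤ y} f n Λ n`, and it suffices to bound this by `O(x)`. At primes `f` is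
`(χ - χψ) / 2`, so up to proper prime powers `ψ_f(y)` is a main term `δ y` plus the errors in the
prime number theorem for `χ` and `χψ`.

The errors need only be summable over the hyperbola: `∑_{m ≤ x} |E(x / m)| = O(x)`, which follows
from `∫_1^∞ |E(t)| t^{-2} dt < ∞`. By Plancherel this is a statement on the derivative of the
transform `-L'/(s L) - δ/(s - 1)` on the lines `re s = σ`, uniformly as `σ → 1`, and there it is
enough that `L` and its derivatives are `O(log ^ k)` and `1 / L` is `O(log ^ 7)`.

The main term occurs only if `χψ = 1`. Then `f p ∈ {0, -1}`, so `f * 1` is bounded by `1`, and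
therefore `∑_{m ≤ x} f m / m` is bounded, which makes the total contribution of `δ x / m` be `O(x)`.
-/

open Complex Filter Topology MeasureTheory FourierTransform

section Plancherel

variable {V F : Type*} [NormedAddCommGroup V] [InnerProductSpace ℝ V] [FiniteDimensional ℝ V]
  [MeasurableSpace V] [BorelSpace V] [NormedAddCommGroup F] [InnerProductSpace ℂ F]
  [CompleteSpace F] {f : V → F}

theorem fourier_toLp_ae_eq_fourier (hf₁ : Integrable f) (hf₂ : MemLp f 2) :
    ((𝓕 (hf₂.toLp f) : Lp (α := V) F 2 volume) : V → F) =ᵐ[volume] 𝓕 f := by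
  have hcont : Continuous (𝓕 f) :=
    VectorFourier.fourierIntegral_continuous Real.continuous_fourierChar continuous_inner hf₁
  refine ae_eq_of_integral_contDiff_smul_eq ((Lp.memLp _).locallyIntegrable (by norm_num))
    hcont.locallyIntegrable fun g hg hgc => ?_
  have hgC : HasCompactSupport fun x => (g x : ℂ) :=
    hgc.comp_left (g := fun x : ℝ => (x : ℂ)) ofReal_zero
  let G : SchwartzMap V ℂ := hgC.toSchwartzMap (ofRealCLM.contDiff.comp hg)
  have hLp : (𝓕 (hf₂.toLp f : TemperedDistribution V F)) G =
      ∫ x, G x • (𝓕 (hf₂.toLp f) : Lp (α := V) F 2 volume) x := by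
    rw [Lp.fourier_toTemperedDistribution_eq, Lp.toTemperedDistribution_apply]
  have hflip : (𝓕 (hf₂.toLp f : TemperedDistribution V F)) G = ∫ x, G x • 𝓕 f x := by
    rw [TemperedDistribution.fourier_apply, Lp.toTemperedDistribution_apply]
    have h := VectorFourier.integral_fourierIntegral_smul_eq_flip (f := (G : V → ℂ)) (g := f)
      (L := innerₗ V) (μ := volume) (ν := volume)
      Real.continuous_fourierChar continuous_inner G.integrable hf₁
    rw [flip_innerₗ] at h
    refine Eq.trans (integral_congr_ae ?_) h
    filter_upwards [hf₂.coeFn_toLp] with x hx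
    rw [hx, SchwartzMap.fourier_coe]
    rfl
  exact_mod_cast hLp.symm.trans hflip

theorem eLpNorm_two_fourier_eq (hf₁ : Integrable f) (hf₂ : MemLp f 2) :
    eLpNorm (𝓕 f) 2 volume = eLpNorm f 2 volume := by
  rw [← eLpNorm_congr_ae (fourier_toLp_ae_eq_fourier hf₁ hf₂), ← eLpNorm_congr_ae hf₂.coeFn_toLp,
    ← Lp.enorm_def, ← Lp.enorm_def, ← ofReal_norm, ← ofReal_norm, Lp.norm_fourier_eq]

theorem integral_norm_sq_fourier_eq (hf₁ : Integrable f) (hf₂ : MemLp f 2) :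
    ∫ ξ, ‖𝓕 f ξ‖ ^ 2 = ∫ x, ‖f x‖ ^ 2 := by
  have hFf : MemLp (𝓕 f) 2 :=
    (memLp_congr_ae (fourier_toLp_ae_eq_fourier hf₁ hf₂)).mp (Lp.memLp _)
  have h := eLpNorm_two_fourier_eq hf₁ hf₂
  rw [hFf.eLpNorm_eq_integral_rpow_norm two_ne_zero ENNReal.ofNat_ne_top,
    hf₂.eLpNorm_eq_integral_rpow_norm two_ne_zero ENNReal.ofNat_ne_top,
    ENNReal.ofReal_eq_ofReal_iff (by positivity) (by positivity),
    Real.rpow_left_inj (by positivity) (by positivity) (by norm_num)] at h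
  simpa using h

end Plancherel

section TailMellin

/-- The transform `∫_1^∞ f(t) t^{-s-1} dt` by which Abel summation expresses a Dirichlet series
through the summatory function `f` of its coefficients. -/
noncomputable def tailMellin (f : ℝ → ℂ) (s : ℂ) : ℂ :=
  ∫ t in Set.Ioi (1 : ℝ), f t * (t : ℂ) ^ (-(s + 1))

theorem mellin_indicator_Ioi_one (f : ℝ → ℂ) (s : ℂ) :
    mellin ((Set.Ioi 1).indicator f) (-s) = tailMellin f s := by
  have hind : ∀ t : ℝ, (t : ℂ) ^ (-s - 1) • (Set.Ioi 1).indicator f t =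
      (Set.Ioi 1).indicator (fun t : ℝ => f t * (t : ℂ) ^ (-(s + 1))) t := fun t => by
    by_cases ht : t ∈ Set.Ioi 1
    · rw [Set.indicator_of_mem ht, Set.indicator_of_mem ht, smul_eq_mul, mul_comm, neg_add']
    · rw [Set.indicator_of_notMem ht, Set.indicator_of_notMem ht, smul_zero]
  simp only [mellin, hind]
  rw [setIntegral_indicator measurableSet_Ioi,
    Set.inter_eq_right.mpr (Set.Ioi_subset_Ioi zero_le_one), tailMellin]

variable {f : ℝ → ℂ} {A a : ℝ} {s : ℂ}

theorem integrableOn_mul_cpow_of_norm_le_rpow (hf : Measurable f)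
    (hfA : ∀ t, 1 < t → ‖f t‖ ≤ A * t ^ a) (hs : a < s.re) :
    IntegrableOn (fun t : ℝ => f t * (t : ℂ) ^ (-(s + 1))) (Set.Ioi 1) := by
  have hint : IntegrableOn (fun t : ℝ => A * t ^ (a - s.re - 1)) (Set.Ioi 1) :=
    (integrableOn_Ioi_rpow_of_lt (by linarith) one_pos).const_mul A
  refine hint.mono' (by fun_prop) ?_
  refine (ae_restrict_iff' measurableSet_Ioi).2 (Eventually.of_forall fun t (ht : 1 < t) => ?_)
  have ht0 : 0 < t := by linarith
  rw [norm_mul, norm_cpow_eq_rpow_re_of_pos ht0,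
    show a - s.re - 1 = a + (-(s + 1)).re by simp; ring, Real.rpow_add ht0, ← mul_assoc]
  gcongr
  exact hfA t ht

theorem hasDerivAt_tailMellin (hf : Measurable f) (hfA : ∀ t, 1 < t → ‖f t‖ ≤ A * t ^ a)
    (hs : a < s.re) :
    HasDerivAt (tailMellin f) (-tailMellin (fun t => Real.log t * f t) s) s := by
  have hloc : LocallyIntegrableOn ((Set.Ioi 1).indicator f) (Set.Ioi 0) := by
    have hpow : LocallyIntegrableOn (fun t : ℝ => A * t ^ a) (Set.Ioi 0) :=
      ContinuousOn.locallyIntegrableOn (continuousOn_const.mul (continuousOn_id.rpow_const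
        fun t ht => Or.inl (ne_of_gt ht))) measurableSet_Ioi
    refine hpow.mono (hf.indicator measurableSet_Ioi).aestronglyMeasurable
      (Eventually.of_forall fun t => ?_)
    rw [norm_indicator_eq_indicator_norm]
    exact Set.indicator_le' (fun t ht => (hfA t ht).trans (Real.le_norm_self _))
      (fun t _ => norm_nonneg _) t
  have htop : (Set.Ioi 1).indicator f =O[atTop] fun t : ℝ => t ^ (-(-a)) := by
    refine Asymptotics.IsBigO.of_bound A ?_
    filter_upwards [eventually_gt_atTop 1] with t ht
    rw [Set.indicator_of_mem (Set.mem_Ioi.2 ht), neg_neg, Real.norm_of_nonneg (by positivity)]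
    exact hfA t ht
  have hzero : (Set.Ioi 1).indicator f =O[𝓝[>] 0] fun t : ℝ => t ^ (-(-s.re - 1)) := by
    refine Asymptotics.IsBigO.of_bound 1 ?_
    filter_upwards [mem_nhdsWithin_of_mem_nhds (Iio_mem_nhds one_pos)] with t (ht : t < 1)
    rw [Set.indicator_of_notMem (by simpa using ht.le), norm_zero]
    positivity
  have h := (mellin_hasDerivAt_of_isBigO_rpow (s := -s) hloc htop (by simpa using hs) hzero
    (by simp)).2
  have hlog : (fun t => Real.log t • (Set.Ioi 1).indicator f t) =
      (Set.Ioi 1).indicator fun t => Real.log t * f t := by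
    ext t
    by_cases ht : t ∈ Set.Ioi 1
    · rw [Set.indicator_of_mem ht, Set.indicator_of_mem ht, real_smul]
    · rw [Set.indicator_of_notMem ht, Set.indicator_of_notMem ht, smul_zero]
  have hfun : tailMellin f = fun z => mellin ((Set.Ioi 1).indicator f) (-z) :=
    funext fun z => (mellin_indicator_Ioi_one f z).symm
  rw [hlog] at h
  rw [hfun, ← mellin_indicator_Ioi_one]
  simpa [Function.comp_def] using HasDerivAt.comp s h (hasDerivAt_neg s)

theorem norm_tailMellin_le_of_forall_le_eq_zero {N : ℝ} (hN : 1 ≤ N) (hfN : ∀ t ≤ N, f t = 0)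
    (hfA : ∀ t, ‖f t‖ ≤ A) (hs : 0 < s.re) :
    ‖tailMellin f s‖ ≤ A * N ^ (-s.re) / s.re := by
  have hN0 : 0 < N := by linarith
  have hsupp : tailMellin f s = ∫ t in Set.Ioi N, f t * (t : ℂ) ^ (-(s + 1)) := by
    refine setIntegral_eq_of_subset_of_forall_sdiff_eq_zero measurableSet_Ioi
      (Set.Ioi_subset_Ioi hN) fun t ht => ?_
    rw [hfN t (not_lt.mp ht.2), zero_mul]
  have hint : IntegrableOn (fun t : ℝ => A * t ^ (-s.re - 1)) (Set.Ioi N) :=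
    (integrableOn_Ioi_rpow_of_lt (by linarith) hN0).const_mul A
  calc ‖tailMellin f s‖ ≤ ∫ t in Set.Ioi N, A * t ^ (-s.re - 1) := by
        rw [hsupp]
        refine norm_integral_le_of_norm_le hint ?_
        refine (ae_restrict_iff' measurableSet_Ioi).2
          (Eventually.of_forall fun t (ht : N < t) => ?_)
        rw [norm_mul, norm_cpow_eq_rpow_re_of_pos (hN0.trans ht),
          show (-(s + 1)).re = -s.re - 1 by simp; ring]
        gcongr
        · exact Real.rpow_nonneg (hN0.trans ht).le _
        · exact hfA t
    _ = A * N ^ (-s.re) / s.re := by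
        rw [integral_const_mul, integral_Ioi_rpow_of_lt (by linarith) hN0]
        have := hs.ne'
        rw [sub_add_cancel]
        field_simp

theorem tailMellin_eq_fourier (f : ℝ → ℂ) (s : ℂ) :
    tailMellin f s = 𝓕 (fun u => Real.exp (s.re * u) • (Set.Ioi 1).indicator f (Real.exp (-u)))
      (-s.im / (2 * Real.pi)) := by
  rw [← mellin_indicator_Ioi_one, mellin_eq_fourier]
  simp only [neg_re, neg_im, neg_neg]

end TailMellin

section Tauberian

/-- The function of `u` whose Fourier transform is, up to sign and scaling, the derivative of
`tailMellin E` along the line `Re s = 1 + σ`. -/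
noncomputable def lineProfile (E : ℝ → ℂ) (σ u : ℝ) : ℂ :=
  Real.exp ((1 + σ) * u) • (Set.Ioi 1).indicator (fun t => Real.log t * E t) (Real.exp (-u))

variable {E : ℝ → ℂ} {A σ : ℝ}

theorem measurable_lineProfile (hE : Measurable E) (σ : ℝ) : Measurable (lineProfile E σ) := by
  have : Measurable ((Set.Ioi (1 : ℝ)).indicator fun t => (Real.log t : ℂ) * E t) :=
    Measurable.indicator (by fun_prop) measurableSet_Ioi
  unfold lineProfile
  fun_prop

theorem lineProfile_of_nonneg {u : ℝ} (hu : 0 ≤ u) : lineProfile E σ u = 0 := by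
  rw [lineProfile, Set.indicator_of_notMem (by simpa using hu), smul_zero]

theorem norm_lineProfile_of_nonpos {u : ℝ} (hu : u ≤ 0) :
    ‖lineProfile E σ u‖ = Real.exp (σ * u) * (|u| * (‖E (Real.exp (-u))‖ * Real.exp u)) := by
  rcases hu.eq_or_lt with rfl | hu
  · simp [lineProfile]
  rw [lineProfile, Set.indicator_of_mem (by simpa using hu), norm_smul, norm_mul, norm_real,
    Real.log_exp, Real.norm_eq_abs, Real.abs_exp, Real.norm_eq_abs, abs_neg, add_mul, one_mul,
    Real.exp_add]
  ring

theorem norm_comp_exp_neg_mul_exp_le (hEA : ∀ t, 1 < t → ‖E t‖ ≤ A * t) {u : ℝ} (hu : u < 0) :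
    ‖E (Real.exp (-u))‖ * Real.exp u ≤ A := by
  calc ‖E (Real.exp (-u))‖ * Real.exp u ≤ A * Real.exp (-u) * Real.exp u := by
        gcongr
        exact hEA _ (Real.one_lt_exp_iff.2 (neg_pos.2 hu))
    _ = A := by rw [mul_assoc, ← Real.exp_add, neg_add_cancel, Real.exp_zero, mul_one]

theorem norm_lineProfile_le (hA : 0 ≤ A) (hEA : ∀ t, 1 < t → ‖E t‖ ≤ A * t) (hσ : 0 < σ) (u : ℝ) :
    ‖lineProfile E σ u‖ ≤
      (Set.Iic 0).indicator (fun u => 2 * A / σ * Real.exp (σ / 2 * u)) u := by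
  rcases le_or_gt 0 u with hu | hu
  · rw [lineProfile_of_nonneg hu, norm_zero]
    exact Set.indicator_nonneg (fun _ _ => by positivity) u
  have habs : |u| ≤ 2 / σ * Real.exp (-(σ / 2 * u)) := by
    rw [abs_of_neg hu]
    calc -u = 2 / σ * (-(σ / 2 * u)) := by field_simp
      _ ≤ 2 / σ * Real.exp (-(σ / 2 * u)) := by
        gcongr
        linarith [Real.add_one_le_exp (-(σ / 2 * u))]
  rw [Set.indicator_of_mem (Set.mem_Iic.2 hu.le), norm_lineProfile_of_nonpos hu.le]
  calc Real.exp (σ * u) * (|u| * (‖E (Real.exp (-u))‖ * Real.exp u))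
      ≤ Real.exp (σ * u) * (2 / σ * Real.exp (-(σ / 2 * u)) * A) := by
        gcongr
        exact norm_comp_exp_neg_mul_exp_le hEA hu
    _ = 2 * A / σ * (Real.exp (σ * u) * Real.exp (-(σ / 2 * u))) := by ring
    _ = 2 * A / σ * Real.exp (σ / 2 * u) := by
        rw [← Real.exp_add]
        congr 2
        ring

theorem integrable_lineProfile (hE : Measurable E) (hA : 0 ≤ A)
    (hEA : ∀ t, 1 < t → ‖E t‖ ≤ A * t) (hσ : 0 < σ) : Integrable (lineProfile E σ) := by
  refine Integrable.mono' ?_ (measurable_lineProfile hE σ).aestronglyMeasurable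
    (Eventually.of_forall (norm_lineProfile_le hA hEA hσ))
  rw [integrable_indicator_iff measurableSet_Iic]
  exact (integrableOn_exp_mul_Iic (by positivity) 0).const_mul _

theorem memLp_two_lineProfile (hE : Measurable E) (hA : 0 ≤ A)
    (hEA : ∀ t, 1 < t → ‖E t‖ ≤ A * t) (hσ : 0 < σ) : MemLp (lineProfile E σ) 2 := by
  have hmeas := (measurable_lineProfile hE σ).aestronglyMeasurable (μ := volume)
  rw [memLp_two_iff_integrable_sq_norm hmeas]
  simp only [sq]
  refine (integrable_lineProfile hE hA hEA hσ).norm.bdd_mul (c := 2 * A / σ) hmeas.norm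
    (Eventually.of_forall fun u => ?_)
  rw [norm_norm]
  refine (norm_lineProfile_le hA hEA hσ u).trans
    (Set.indicator_le' (g := fun _ => 2 * A / σ) (fun v hv => ?_) (fun _ _ => by positivity) u)
  exact mul_le_of_le_one_right (by positivity)
    (Real.exp_le_one_iff.2 (mul_nonpos_of_nonneg_of_nonpos (by positivity) hv))

theorem norm_fourier_lineProfile (hE : Measurable E) (hEA : ∀ t, 1 < t → ‖E t‖ ≤ A * t)
    (hσ : 0 < σ) (w : ℝ) :
    ‖𝓕 (lineProfile E σ) w‖ =
      ‖deriv (tailMellin E) ((1 + σ : ℝ) - (2 * Real.pi * w : ℝ) * I)‖ := by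
  set s : ℂ := (1 + σ : ℝ) - (2 * Real.pi * w : ℝ) * I with hs
  have hre : s.re = 1 + σ := by simp [hs]
  have him : -s.im / (2 * Real.pi) = w := by simp [hs, Real.pi_ne_zero]
  rw [(hasDerivAt_tailMellin hE (a := 1) (by simpa using hEA) (by linarith)).deriv, norm_neg,
    tailMellin_eq_fourier, hre, him]
  rfl

theorem exists_integral_norm_sq_lineProfile_le {C κ : ℝ} (hE : Measurable E) (hA : 0 ≤ A)
    (hEA : ∀ t, 1 < t → ‖E t‖ ≤ A * t) (hκ : 1 / 2 < κ)
    (hderiv : ∀ s : ℂ, 1 < s.re → s.re ≤ 2 →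
      ‖deriv (tailMellin E) s‖ ≤ C * (1 + |s.im|) ^ (-κ)) :
    ∃ M : ℝ, ∀ σ, 0 < σ → σ ≤ 1 → ∫ u, ‖lineProfile E σ u‖ ^ 2 ≤ M := by
  have hC : 0 ≤ C := by
    have h := (norm_nonneg _).trans (hderiv 2 (by norm_num) (by norm_num))
    simpa using h
  have hint : Integrable fun w : ℝ => C ^ 2 * (1 + ‖w‖) ^ (-(2 * κ)) :=
    (integrable_one_add_norm (by simp; linarith)).const_mul _
  refine ⟨∫ w : ℝ, C ^ 2 * (1 + ‖w‖) ^ (-(2 * κ)), fun σ hσ hσ₁ => ?_⟩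
  rw [← integral_norm_sq_fourier_eq (integrable_lineProfile hE hA hEA hσ)
    (memLp_two_lineProfile hE hA hEA hσ)]
  refine integral_mono_of_nonneg (Eventually.of_forall fun w => by positivity) hint
    (Eventually.of_forall fun w => ?_)
  dsimp only
  rw [norm_fourier_lineProfile hE hEA hσ w]
  have hw : 1 + ‖w‖ ≤ 1 + |2 * Real.pi * w| := by
    rw [abs_mul, abs_of_pos Real.two_pi_pos, Real.norm_eq_abs]
    nlinarith [Real.pi_gt_three, abs_nonneg w]
  calc ‖deriv (tailMellin E) ((1 + σ : ℝ) - (2 * Real.pi * w : ℝ) * I)‖ ^ 2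
      ≤ (C * (1 + |2 * Real.pi * w|) ^ (-κ)) ^ 2 := by
        gcongr
        simpa using hderiv ((1 + σ : ℝ) - (2 * Real.pi * w : ℝ) * I) (by simpa using hσ)
          (by simp; linarith)
    _ ≤ (C * (1 + ‖w‖) ^ (-κ)) ^ 2 := by
        gcongr (C * ?_) ^ 2
        exact Real.rpow_le_rpow_of_nonpos (by positivity) hw (by linarith)
    _ = C ^ 2 * (1 + ‖w‖) ^ (-(2 * κ)) := by
        rw [mul_pow, ← Real.rpow_mul_natCast (by positivity)]
        congr 2
        push_cast
        ring

theorem sq_mul_le_norm_sq_lineProfile {V u : ℝ} (hV : 0 < V) (hVu : -V ≤ u) (hu : u ≤ 0) :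
    (|u| * (‖E (Real.exp (-u))‖ * Real.exp u)) ^ 2 ≤
      Real.exp 2 * ‖lineProfile E (1 / V) u‖ ^ 2 := by
  have hσu : -1 ≤ 1 / V * u := by
    rw [one_div, inv_mul_eq_div, le_div_iff₀ hV]
    linarith
  rw [norm_lineProfile_of_nonpos hu, mul_pow (Real.exp _), ← mul_assoc (Real.exp 2),
    ← Real.exp_nat_mul, ← Real.exp_add]
  refine le_mul_of_one_le_left (by positivity) (Real.one_le_exp ?_)
  push_cast
  linarith

theorem integrableOn_sq_mul_comp_exp_neg {M : ℝ} (hE : Measurable E) (hA : 0 ≤ A)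
    (hEA : ∀ t, 1 < t → ‖E t‖ ≤ A * t)
    (hM : ∀ σ, 0 < σ → σ ≤ 1 → ∫ u, ‖lineProfile E σ u‖ ^ 2 ≤ M) :
    IntegrableOn (fun u => (|u| * (‖E (Real.exp (-u))‖ * Real.exp u)) ^ 2) (Set.Iic 0) := by
  set h : ℝ → ℝ := fun u => (|u| * (‖E (Real.exp (-u))‖ * Real.exp u)) ^ 2
  have hmeas : Measurable h := by fun_prop
  have hsq : ∀ σ, 0 < σ → Integrable fun u => ‖lineProfile E σ u‖ ^ 2 := fun σ hσ =>
    (memLp_two_lineProfile hE hA hEA hσ).integrable_norm_pow two_ne_zero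
  have hle : ∀ V : ℝ, 0 < V → ∀ u ∈ Set.Ioc (-V) 0,
      h u ≤ Real.exp 2 * ‖lineProfile E (1 / V) u‖ ^ 2 := fun V hV u hu =>
    sq_mul_le_norm_sq_lineProfile hV hu.1.le hu.2
  have hIoc : ∀ V : ℝ, 0 < V → IntegrableOn h (Set.Ioc (-V) 0) := fun V hV =>
    ((hsq (1 / V) (by positivity)).const_mul (Real.exp 2)).integrableOn.mono'
      hmeas.aestronglyMeasurable ((ae_restrict_iff' measurableSet_Ioc).2
        (Eventually.of_forall fun u hu => by
          rw [Real.norm_of_nonneg (by positivity)]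
          exact hle V hV u hu))
  refine integrableOn_Iic_of_intervalIntegral_norm_bounded (Real.exp 2 * M) 0
    (a := fun n : ℕ => -((n : ℝ) + 1)) (fun n => hIoc _ (by positivity))
    (tendsto_neg_atTop_atBot.comp (tendsto_natCast_atTop_atTop.atTop_add tendsto_const_nhds))
    (Eventually.of_forall fun n => ?_)
  have hV : (0 : ℝ) < n + 1 := by positivity
  have hσ : (0 : ℝ) < 1 / (n + 1) := by positivity
  rw [intervalIntegral.integral_of_le (by linarith)]
  calc ∫ u in Set.Ioc (-((n : ℝ) + 1)) 0, ‖h u‖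
      ≤ ∫ u in Set.Ioc (-((n : ℝ) + 1)) 0, Real.exp 2 * ‖lineProfile E (1 / (n + 1)) u‖ ^ 2 := by
        refine setIntegral_mono_on (hIoc _ hV).norm ((hsq _ hσ).const_mul _).integrableOn
          measurableSet_Ioc fun u hu => ?_
        rw [Real.norm_of_nonneg (by positivity)]
        exact hle _ hV u hu
    _ ≤ ∫ u, Real.exp 2 * ‖lineProfile E (1 / (n + 1)) u‖ ^ 2 :=
        setIntegral_le_integral ((hsq _ hσ).const_mul _)
          (Eventually.of_forall fun u => mul_nonneg (Real.exp_pos 2).le (sq_nonneg _))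
    _ ≤ Real.exp 2 * M := by
        rw [integral_const_mul]
        gcongr
        refine hM _ hσ ((div_le_one hV).2 ?_)
        linarith [n.cast_nonneg (α := ℝ)]

theorem integrableOn_norm_comp_exp_neg_mul_exp (hE : Measurable E)
    (hEA : ∀ t, 1 < t → ‖E t‖ ≤ A * t)
    (hint : IntegrableOn (fun u => (|u| * (‖E (Real.exp (-u))‖ * Real.exp u)) ^ 2) (Set.Iic 0)) :
    IntegrableOn (fun u => ‖E (Real.exp (-u))‖ * Real.exp u) (Set.Iio 0) := by
  have hmaj := (hint.mono_set Set.Iio_subset_Iic_self).add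
    (integrable_inv_one_add_sq.const_mul (A + 1)).integrableOn
  refine hmaj.mono' (by fun_prop) ((ae_restrict_iff' measurableSet_Iio).2
    (Eventually.of_forall fun u hu => ?_))
  rw [Real.norm_of_nonneg (by positivity)]
  have hle := norm_comp_exp_neg_mul_exp_le hEA hu
  simp only [Pi.add_apply]
  generalize ‖E (Real.exp (-u))‖ * Real.exp u = h at hle ⊢
  rw [mul_pow, sq_abs, ← div_eq_mul_inv, ← sub_le_iff_le_add', le_div_iff₀ (by positivity)]
  linarith [sq_nonneg (u ^ 2 * h - 1 / 2), sq_nonneg (u * h)]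

theorem integrableOn_norm_div_sq_Ioi {C κ : ℝ} (hE : Measurable E)
    (hEA : ∀ t, 1 < t → ‖E t‖ ≤ A * t) (hκ : 1 / 2 < κ)
    (hderiv : ∀ s : ℂ, 1 < s.re → s.re ≤ 2 →
      ‖deriv (tailMellin E) s‖ ≤ C * (1 + |s.im|) ^ (-κ)) :
    IntegrableOn (fun t => ‖E t‖ / t ^ 2) (Set.Ioi 1) := by
  have hA : 0 ≤ A := by linarith [(norm_nonneg _).trans (hEA 2 one_lt_two)]
  obtain ⟨M, hM⟩ := exists_integral_norm_sq_lineProfile_le hE hA hEA hκ hderiv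
  have himage : (fun u => Real.exp (-u)) '' Set.Iio 0 = Set.Ioi 1 := by
    ext t
    refine ⟨?_, fun ht => ⟨-Real.log t, neg_neg_of_pos (Real.log_pos ht), ?_⟩⟩
    · rintro ⟨u, hu, rfl⟩
      exact Real.one_lt_exp_iff.2 (neg_pos.2 hu)
    · simp only [neg_neg, Real.exp_log (one_pos.trans ht)]
  have hexp : ∀ u ∈ Set.Iio (0 : ℝ),
      HasDerivWithinAt (fun u => Real.exp (-u)) (-Real.exp (-u)) (Set.Iio 0) u := fun u _ => by
    simpa using (hasDerivAt_neg u).exp.hasDerivWithinAt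
  rw [← himage, integrableOn_image_iff_integrableOn_abs_deriv_smul measurableSet_Iio hexp
    fun u _ v _ huv => neg_injective (Real.exp_injective huv)]
  refine (integrableOn_norm_comp_exp_neg_mul_exp hE hEA
    (integrableOn_sq_mul_comp_exp_neg hE hA hEA hM)).congr_fun (fun u _ => ?_) measurableSet_Iio
  simp only [abs_neg, Real.abs_exp, smul_eq_mul]
  rw [← neg_neg u, Real.exp_neg (-u), neg_neg]
  field_simp

end Tauberian

section HyperbolaSum

variable {E : ℝ → ℂ} {F : ℝ → ℝ}

theorem sub_mul_norm_le_integral_norm_div_sq {a b : ℝ} (ha : 1 ≤ a) (hab : a ≤ b)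
    (hint : IntegrableOn (fun t => ‖E t‖ / t ^ 2) (Set.Ioi 1))
    (hEF : ∀ y z, 1 ≤ y → y ≤ z → ‖E z - E y‖ ≤ F z - F y) :
    (a⁻¹ - b⁻¹) * ‖E b‖ ≤ (∫ t in a..b, ‖E t‖ / t ^ 2) + (a⁻¹ - b⁻¹) * (F b - F a) := by
  have h0 : (0 : ℝ) ∉ Set.uIcc a b := by
    rw [Set.uIcc_of_le hab]
    exact fun h => by linarith [h.1]
  have hsq : ∫ t in a..b, t ^ (-2 : ℤ) = a⁻¹ - b⁻¹ := by
    rw [integral_zpow (Or.inr ⟨by norm_num, h0⟩)]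
    norm_num
    ring
  have hconst : ∫ t in a..b, (‖E b‖ - (F b - F a)) * t ^ (-2 : ℤ) ≤
      ∫ t in a..b, ‖E t‖ / t ^ 2 := by
    refine intervalIntegral.integral_mono_on hab
      ((intervalIntegral.intervalIntegrable_zpow (Or.inr h0)).const_mul _)
      ((intervalIntegrable_iff_integrableOn_Ioc_of_le hab).2 (hint.mono_set fun t ht => ?_))
      fun t ht => ?_
    · exact ha.trans_lt ht.1
    · rw [zpow_neg, zpow_ofNat, ← div_eq_mul_inv]
      gcongr
      linarith [norm_sub_norm_le (E b) (E t), hEF t b (ha.trans ht.1) ht.2,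
        (norm_nonneg _).trans (hEF a t ha ht.1)]
  rw [intervalIntegral.integral_const_mul, hsq] at hconst
  linarith

theorem sum_Ico_norm_div_le {x : ℝ} (hx : 0 < x)
    (hint : IntegrableOn (fun t => ‖E t‖ / t ^ 2) (Set.Ioi 1))
    (hEF : ∀ y z, 1 ≤ y → y ≤ z → ‖E z - E y‖ ≤ F z - F y) {m : ℕ} (hm : 1 ≤ m) (hmx : m ≤ x) :
    ∑ n ∈ Finset.Ico 1 m, ‖E (x / n)‖ ≤
      x * (∫ t in (x / m)..x, ‖E t‖ / t ^ 2) + (F x - F (x / m)) := by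
  induction m, hm using Nat.le_induction with
  | base => simp
  | succ m hm ih =>
    have : (0 : ℝ) < m := by exact_mod_cast hm
    have hmx' : (m : ℝ) + 1 ≤ x := by exact_mod_cast hmx
    have h₁ : 1 ≤ x / (m + 1) := (one_le_div (by positivity)).2 hmx'
    have h₂ : x / (m + 1) ≤ x / m := by gcongr; linarith
    have h₃ : x / m ≤ x := div_le_self hx.le (by exact_mod_cast hm)
    have hint' : ∀ a b : ℝ, 1 ≤ a → a ≤ b →
        IntervalIntegrable (fun t => ‖E t‖ / t ^ 2) volume a b := fun a b ha hab =>
      (intervalIntegrable_iff_integrableOn_Ioc_of_le hab).2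
        (hint.mono_set fun t ht => ha.trans_lt ht.1)
    have hsplit := intervalIntegral.integral_add_adjacent_intervals (hint' _ _ h₁ h₂)
      (hint' _ _ (h₁.trans h₂) h₃)
    have hstep := sub_mul_norm_le_integral_norm_div_sq h₁ h₂ hint hEF
    have hwidth : (x / (m + 1))⁻¹ - (x / m)⁻¹ = x⁻¹ := by field_simp; ring
    rw [hwidth] at hstep
    have hscaled : ‖E (x / m)‖ ≤
        x * (∫ t in (x / (m + 1))..(x / m), ‖E t‖ / t ^ 2) + (F (x / m) - F (x / (m + 1))) := by
      have := mul_le_mul_of_nonneg_left hstep hx.le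
      rwa [mul_add, mul_inv_cancel_left₀ hx.ne', mul_inv_cancel_left₀ hx.ne'] at this
    rw [Finset.sum_Ico_succ_top hm]
    push_cast
    rw [← hsplit, mul_add]
    linarith [ih (by linarith)]

theorem exists_sum_norm_div_le {A B : ℝ}
    (hint : IntegrableOn (fun t => ‖E t‖ / t ^ 2) (Set.Ioi 1))
    (hEA : ∀ t, 1 ≤ t → ‖E t‖ ≤ A * t)
    (hEF : ∀ y z, 1 ≤ y → y ≤ z → ‖E z - E y‖ ≤ F z - F y)
    (hF : ∀ t, 1 ≤ t → 0 ≤ F t) (hFB : ∀ t, 1 ≤ t → F t ≤ B * t) :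
    ∃ C : ℝ, ∀ x, 1 ≤ x → ∑ n ∈ Finset.Icc 1 ⌊x⌋₊, ‖E (x / n)‖ ≤ C * x := by
  have hA : 0 ≤ A := by simpa using (norm_nonneg _).trans (hEA 1 le_rfl)
  refine ⟨(∫ t in Set.Ioi (1 : ℝ), ‖E t‖ / t ^ 2) + B + A, fun x hx => ?_⟩
  have hx0 : 0 < x := by linarith
  have hN : 1 ≤ ⌊x⌋₊ := (Nat.one_le_floor_iff x).2 hx
  have hN0 : (0 : ℝ) < ⌊x⌋₊ := by exact_mod_cast hN
  have hNx : (⌊x⌋₊ : ℝ) ≤ x := Nat.floor_le hx0.le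
  have hy : 1 ≤ x / ⌊x⌋₊ := (one_le_div hN0).2 hNx
  have hyx : x / ⌊x⌋₊ ≤ x := div_le_self hx0.le (by exact_mod_cast hN)
  have hIoc : ∫ t in (x / ⌊x⌋₊)..x, ‖E t‖ / t ^ 2 ≤ ∫ t in Set.Ioi (1 : ℝ), ‖E t‖ / t ^ 2 := by
    rw [intervalIntegral.integral_of_le hyx]
    exact setIntegral_mono_set hint (Eventually.of_forall fun t => by positivity)
      (Eventually.of_forall fun t ht => hy.trans_lt ht.1)
  rw [← Finset.Ico_insert_right hN, Finset.sum_insert Finset.right_notMem_Ico]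
  have hIco := sum_Ico_norm_div_le hx0 hint hEF hN hNx
  have hlast := (hEA _ hy).trans (mul_le_mul_of_nonneg_left hyx hA)
  linarith [mul_le_mul_of_nonneg_left hIoc hx0.le, hF _ hy, hFB x hx]

end HyperbolaSum

section PeriodicSums

variable {q : ℕ} [NeZero q]

theorem sum_range_natCast_add {M : Type*} [AddCommMonoid M] (f : ZMod q → M) (N : ℕ) :
    ∑ k ∈ Finset.range q, f ((N + k : ℕ) : ZMod q) = ∑ a, f a := by
  rw [← Equiv.sum_comp (Equiv.addLeft (N : ZMod q)) f, Finset.sum_range]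
  obtain ⟨n, rfl⟩ : ∃ n, q = n + 1 := ⟨q - 1, (Nat.succ_pred (NeZero.ne q)).symm⟩
  refine Finset.sum_congr rfl fun k _ => ?_
  rw [Nat.cast_add, Equiv.coe_addLeft]
  congr 2
  exact Fin.cast_val_eq_self k

variable (Φ : ZMod q → ℂ)

/-- The mean value over a period, which is also the residue at `1` of the `L`-function of `Φ`. -/
noncomputable def periodMean : ℂ := (∑ a, Φ a) / q

theorem periodic_sum_range_sub_periodMean :
    Function.Periodic
      (fun N : ℕ => ∑ k ∈ Finset.range N, Φ ((k + 1 : ℕ) : ZMod q) - periodMean Φ * N) q := by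
  intro N
  have hq : (q : ℂ) ≠ 0 := NeZero.ne _
  have hshift : ∑ k ∈ Finset.range q, Φ ((N + k + 1 : ℕ) : ZMod q) = periodMean Φ * q := by
    rw [periodMean, div_mul_cancel₀ _ hq, ← sum_range_natCast_add Φ (N + 1)]
    exact Finset.sum_congr rfl fun k _ => by rw [add_right_comm]
  simp only [Finset.sum_range_add]
  rw [hshift, Nat.cast_add]
  ring

theorem exists_norm_sum_Ioc_sub_le :
    ∃ C : ℝ, ∀ N M : ℕ, N ≤ M →
      ‖∑ k ∈ Finset.Ioc N M, Φ (k : ZMod q) - periodMean Φ * ((M : ℂ) - N)‖ ≤ C := by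
  set g : ℕ → ℂ := fun N => ∑ k ∈ Finset.range N, Φ ((k + 1 : ℕ) : ZMod q) - periodMean Φ * N
    with hg
  have hper : Function.Periodic g q := periodic_sum_range_sub_periodMean Φ
  have hgle : ∀ N, ‖g N‖ ≤ ∑ r ∈ Finset.range q, ‖g r‖ := fun N => by
    rw [← hper.map_mod_nat N]
    exact Finset.single_le_sum (f := fun r => ‖g r‖) (fun _ _ => norm_nonneg _)
      (Finset.mem_range.2 (Nat.mod_lt _ (NeZero.pos q)))
  refine ⟨2 * ∑ r ∈ Finset.range q, ‖g r‖, fun N M hNM => ?_⟩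
  have hsum : ∑ k ∈ Finset.Ioc N M, Φ (k : ZMod q) - periodMean Φ * ((M : ℂ) - N) =
      g M - g N := by
    rw [← Finset.Ico_add_one_add_one_eq_Ioc,
      ← Finset.sum_Ico_add' (fun k : ℕ => Φ (k : ZMod q)) N M 1, Finset.sum_Ico_eq_sub _ hNM]
    simp only [hg]
    ring
  rw [hsum]
  linarith [norm_sub_le (g M) (g N), hgle M, hgle N]

/-- The discrepancy `∑_{N < k ≤ u} Φ k - κ (u - N)` with `κ` the mean of `Φ`, extended by `0` to
`u ≤ N`. -/
noncomputable def tailRemainder (N : ℕ) (u : ℝ) : ℂ :=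
  ∑ k ∈ Finset.Ioc N ⌊u⌋₊, Φ (k : ZMod q) - periodMean Φ * (max (u - N) 0 : ℝ)

theorem tailRemainder_of_le {N : ℕ} {u : ℝ} (hu : u ≤ N) : tailRemainder Φ N u = 0 := by
  rw [tailRemainder, Finset.Ioc_eq_empty (not_lt.2 (Nat.floor_le_of_le hu)),
    max_eq_right (sub_nonpos.2 hu)]
  simp

theorem measurable_tailRemainder (N : ℕ) : Measurable (tailRemainder Φ N) :=
  ((measurable_from_nat (f := fun m => ∑ k ∈ Finset.Ioc N m, Φ (k : ZMod q))).comp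
    Nat.measurable_floor).sub (by fun_prop)

theorem exists_norm_tailRemainder_le : ∃ C : ℝ, ∀ N u, ‖tailRemainder Φ N u‖ ≤ C := by
  obtain ⟨C, hC⟩ := exists_norm_sum_Ioc_sub_le Φ
  have hC0 : 0 ≤ C := (norm_nonneg _).trans (hC 0 0 le_rfl)
  refine ⟨C + ‖periodMean Φ‖, fun N u => ?_⟩
  rcases le_or_gt u N with hu | hu
  · rw [tailRemainder_of_le Φ hu, norm_zero]
    positivity
  have hu0 : 0 ≤ u := N.cast_nonneg.trans hu.le
  have hsplit : tailRemainder Φ N u =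
      (∑ k ∈ Finset.Ioc N ⌊u⌋₊, Φ (k : ZMod q) - periodMean Φ * ((⌊u⌋₊ : ℂ) - N)) -
        periodMean Φ * (u - ⌊u⌋₊ : ℝ) := by
    rw [tailRemainder, max_eq_left (sub_nonneg.2 hu.le)]
    push_cast
    ring
  have hfract : ‖((u - ⌊u⌋₊ : ℝ) : ℂ)‖ ≤ 1 := by
    rw [norm_real, Real.norm_of_nonneg (sub_nonneg.2 (Nat.floor_le hu0))]
    linarith [Nat.lt_floor_add_one u]
  rw [hsplit]
  refine (norm_sub_le _ _).trans (add_le_add (hC N _ (Nat.le_floor hu.le)) ?_)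
  rw [norm_mul]
  exact mul_le_of_le_one_right (norm_nonneg _) hfract

end PeriodicSums

section Truncation

theorem LSeries_eq_sum_term_add {f : ℕ → ℂ} {s : ℂ} (hf : LSeriesSummable f s) (N : ℕ) :
    LSeries f s = ∑ n ∈ Finset.range (N + 1), LSeries.term f s n +
      LSeries ((Set.Ioi N).indicator f) s := by
  rw [LSeries, ← hf.sum_add_tsum_compl (s := Finset.range (N + 1)), tsum_subtype, LSeries]
  congr 2
  ext n
  by_cases hn : N < n
  · rw [Set.indicator_of_mem (by simpa using hn), LSeries.term_of_ne_zero (by lia),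
      LSeries.term_of_ne_zero (by lia), Set.indicator_of_mem (Set.mem_Ioi.2 hn)]
  · rw [Set.indicator_of_notMem (by simpa using hn)]
    rcases eq_or_ne n 0 with rfl | hn0
    · rw [LSeries.term_zero]
    · rw [LSeries.term_of_ne_zero hn0, Set.indicator_of_notMem (by simpa using hn), zero_div]

theorem tailMellin_max_sub_zero {N : ℝ} (hN : 1 ≤ N) {s : ℂ} (hs : 1 < s.re) :
    tailMellin (fun t => (max (t - N) 0 : ℝ)) s = (N : ℂ) ^ (1 - s) / (s * (s - 1)) := by
  have hN0 : 0 < N := by linarith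
  have hs0 : s ≠ 0 := fun h => by norm_num [h] at hs
  have hs1 : 1 - s ≠ 0 := fun h => by norm_num [← sub_eq_zero.1 h] at hs
  have hs1' : s - 1 ≠ 0 := fun h => hs1 (by rw [← neg_sub, h, neg_zero])
  have hint₁ : IntegrableOn (fun t : ℝ => (t : ℂ) ^ (-s)) (Set.Ioi N) :=
    integrableOn_Ioi_cpow_of_lt (by simpa using hs) hN0
  have hint₂ : IntegrableOn (fun t : ℝ => N * (t : ℂ) ^ (-(s + 1))) (Set.Ioi N) :=
    (integrableOn_Ioi_cpow_of_lt (by simp; linarith) hN0).const_mul _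
  have hramp : Set.EqOn (fun t : ℝ => ((max (t - N) 0 : ℝ) : ℂ) * (t : ℂ) ^ (-(s + 1)))
      (fun t => (t : ℂ) ^ (-s) - N * (t : ℂ) ^ (-(s + 1))) (Set.Ioi N) := fun t (ht : N < t) => by
    have ht0 : (t : ℂ) ≠ 0 := ofReal_ne_zero.2 (hN0.trans ht).ne'
    have hpow : (t : ℂ) ^ (-s) = t * (t : ℂ) ^ (-(s + 1)) := by
      rw [show -s = 1 + -(s + 1) by ring, cpow_add _ _ ht0, cpow_one]
    simp only [max_eq_left (sub_nonneg.2 ht.le), hpow, ofReal_sub]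
    ring
  have hpow : (N : ℂ) ^ (1 - s) = N * (N : ℂ) ^ (-s) := by
    rw [sub_eq_add_neg, cpow_add _ _ (ofReal_ne_zero.2 hN0.ne'), cpow_one]
  rw [tailMellin, setIntegral_eq_of_subset_of_forall_sdiff_eq_zero measurableSet_Ioi
      (Set.Ioi_subset_Ioi hN) fun t ht => by
        rw [max_eq_right (sub_nonpos.2 (not_lt.1 ht.2)), ofReal_zero, zero_mul],
    setIntegral_congr_fun measurableSet_Ioi hramp, integral_sub hint₁ hint₂, integral_const_mul,
    integral_Ioi_cpow_of_lt (by simpa using hs) hN0,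
    integral_Ioi_cpow_of_lt (by simp; linarith) hN0,
    show -s + 1 = 1 - s by ring, show -(s + 1) + 1 = -s by ring, hpow]
  field_simp
  ring

variable {f g : ℝ → ℂ} {s : ℂ}

theorem tailMellin_add_const_mul (c : ℂ)
    (hf : IntegrableOn (fun t : ℝ => f t * (t : ℂ) ^ (-(s + 1))) (Set.Ioi 1))
    (hg : IntegrableOn (fun t : ℝ => g t * (t : ℂ) ^ (-(s + 1))) (Set.Ioi 1)) :
    tailMellin (fun t => f t + c * g t) s = tailMellin f s + c * tailMellin g s := by
  simp only [tailMellin, add_mul, mul_assoc]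
  rw [integral_add hf (hg.const_mul c), integral_const_mul]

theorem LSeries_eq_mul_tailMellin {f : ℕ → ℂ} {A : ℝ} (hfA : ∀ n, ‖f n‖ ≤ A) (hs : 1 < s.re) :
    LSeries f s = s * tailMellin (fun t => ∑ k ∈ Finset.Icc 1 ⌊t⌋₊, f k) s := by
  refine LSeries_eq_mul_integral' f zero_le_one hs (.of_bound A (Eventually.of_forall fun n => ?_))
  rw [Real.norm_of_nonneg (Finset.sum_nonneg fun _ _ => norm_nonneg _), Real.rpow_one,
    Real.norm_natCast]
  simpa [mul_comm] using Finset.sum_le_card_nsmul (Finset.Icc 1 n) (fun k => ‖f k‖) A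
    fun k _ => hfA k

end Truncation

section PeriodicLFunction

variable {q : ℕ} [NeZero q] (Φ : ZMod q → ℂ)

theorem sum_Icc_indicator_Ioi_natCast (N : ℕ) (t : ℝ) :
    ∑ k ∈ Finset.Icc 1 ⌊t⌋₊, (Set.Ioi N).indicator (fun n : ℕ => Φ n) k =
      tailRemainder Φ N t + periodMean Φ * (max (t - N) 0 : ℝ) := by
  rw [tailRemainder, sub_add_cancel, Finset.sum_indicator_eq_sum_filter]
  refine Finset.sum_congr ?_ fun _ _ => rfl
  ext k
  simp only [Finset.mem_filter, Finset.mem_Icc, Finset.mem_Ioc, Set.mem_Ioi]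
  lia

theorem LSeries_indicator_Ioi_natCast {N : ℕ} (hN : 1 ≤ N) {s : ℂ} (hs : 1 < s.re) :
    LSeries ((Set.Ioi N).indicator fun n : ℕ => Φ n) s =
      s * tailMellin (tailRemainder Φ N) s + periodMean Φ * (N : ℂ) ^ (1 - s) / (s - 1) := by
  obtain ⟨C, hC⟩ := exists_norm_tailRemainder_le Φ
  have hbound : ∀ n, ‖(Set.Ioi N).indicator (fun n : ℕ => Φ n) n‖ ≤ ∑ a, ‖Φ a‖ := fun n =>
    (norm_indicator_le_norm_self _ _).trans
      (Finset.single_le_sum (f := fun a => ‖Φ a‖) (fun _ _ => norm_nonneg _) (Finset.mem_univ _))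
  have hintR := integrableOn_mul_cpow_of_norm_le_rpow (measurable_tailRemainder Φ N)
    (A := C) (a := 0) (fun t _ => by simpa using hC N t) (zero_lt_one.trans hs)
  have hintM := integrableOn_mul_cpow_of_norm_le_rpow
    (f := fun t => ((max (t - N) 0 : ℝ) : ℂ)) (A := 1) (a := 1) (by fun_prop) (fun t ht => by
      rw [norm_real, Real.norm_of_nonneg (le_max_right _ _), Real.rpow_one, one_mul]
      exact max_le (sub_le_self _ N.cast_nonneg) (by linarith)) hs
  have hs0 : s ≠ 0 := fun h => by norm_num [h] at hs
  rw [LSeries_eq_mul_tailMellin hbound hs]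
  simp only [sum_Icc_indicator_Ioi_natCast]
  rw [tailMellin_add_const_mul _ hintR hintM, tailMellin_max_sub_zero (mod_cast hN) hs,
    ofReal_natCast]
  field_simp

/-- The expression obtained for the `L`-function of `Φ` by summing the terms `n ≤ N` of its
Dirichlet series as they stand and the rest by parts. -/
noncomputable def truncatedLFunction (N : ℕ) (s : ℂ) : ℂ :=
  ∑ n ∈ Finset.range (N + 1), LSeries.term (fun n => Φ n) s n +
    (s * tailMellin (tailRemainder Φ N) s + periodMean Φ * (N : ℂ) ^ (1 - s) / (s - 1))

theorem LFunction_eq_truncatedLFunction_of_one_lt_re {N : ℕ} (hN : 1 ≤ N) {s : ℂ}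
    (hs : 1 < s.re) : ZMod.LFunction Φ s = truncatedLFunction Φ N s := by
  rw [ZMod.LFunction_eq_LSeries Φ hs,
    LSeries_eq_sum_term_add (ZMod.LSeriesSummable_of_one_lt_re Φ hs) N,
    LSeries_indicator_Ioi_natCast Φ hN hs, truncatedLFunction]

theorem differentiableAt_truncatedLFunction {N : ℕ} (hN : 1 ≤ N) {s : ℂ} (hs : 0 < s.re)
    (hs1 : s ≠ 1) : DifferentiableAt ℂ (truncatedLFunction Φ N) s := by
  obtain ⟨C, hC⟩ := exists_norm_tailRemainder_le Φ
  have hN0 : (N : ℂ) ≠ 0 := Nat.cast_ne_zero.2 (by lia)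
  have hterms : DifferentiableAt ℂ
      (fun s => ∑ n ∈ Finset.range (N + 1), LSeries.term (fun n => Φ n) s n) s :=
    .fun_sum fun n _ => (LSeries.hasDerivAt_term _ n s).differentiableAt
  have hmellin : DifferentiableAt ℂ (tailMellin (tailRemainder Φ N)) s :=
    (hasDerivAt_tailMellin (measurable_tailRemainder Φ N) (A := C) (a := 0)
      (fun t _ => by simpa using hC N t) hs).differentiableAt
  have hpole : DifferentiableAt ℂ (fun s => periodMean Φ * (N : ℂ) ^ (1 - s) / (s - 1)) s :=
    .fun_div (((by fun_prop : DifferentiableAt ℂ (fun s : ℂ => 1 - s) s).const_cpow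
      (Or.inl hN0)).const_mul _) (by fun_prop) (sub_ne_zero.2 hs1)
  exact hterms.add ((differentiableAt_id.mul hmellin).add hpole)

theorem LFunction_eq_truncatedLFunction {N : ℕ} (hN : 1 ≤ N) {s : ℂ} (hs : 0 < s.re)
    (hs1 : s.im ≠ 0) : ZMod.LFunction Φ s = truncatedLFunction Φ N s := by
  let U : Set ℂ := {z | 0 < z.re} ∩ {z | 0 < s.im * z.im}
  have hUopen : IsOpen U := (isOpen_lt continuous_const continuous_re).inter
    (isOpen_lt continuous_const (continuous_const.mul continuous_im))
  have hUconv : Convex ℝ U := (convex_halfSpace_re_gt 0).inter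
    (convex_halfSpace_gt (f := fun z : ℂ => s.im * z.im)
      (s.im • imLm : ℂ →ₗ[ℝ] ℝ).isLinear 0)
  have hne : ∀ z ∈ U, z ≠ 1 := by
    rintro z hz rfl
    simpa using hz.2
  have hdiffL : DifferentiableOn ℂ (ZMod.LFunction Φ) U := fun z hz =>
    (ZMod.differentiableAt_LFunction Φ z (Or.inl (hne z hz))).differentiableWithinAt
  have hdiffT : DifferentiableOn ℂ (truncatedLFunction Φ N) U := fun z hz =>
    (differentiableAt_truncatedLFunction Φ hN hz.1 (hne z hz)).differentiableWithinAt
  have hmem : (2 + s.im * I : ℂ) ∈ U := ⟨by simp, by simpa using hs1⟩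
  have hnear : ZMod.LFunction Φ =ᶠ[𝓝 (2 + s.im * I)] truncatedLFunction Φ N := by
    have hre : {z : ℂ | 1 < z.re} ∈ 𝓝 (2 + s.im * I : ℂ) :=
      (isOpen_lt continuous_const continuous_re).mem_nhds (by simp)
    filter_upwards [hre] with z hz
    exact LFunction_eq_truncatedLFunction_of_one_lt_re Φ hN hz
  exact (hdiffL.analyticOnNhd hUopen).eqOn_of_preconnected_of_eventuallyEq
    (hdiffT.analyticOnNhd hUopen) hUconv.isPreconnected hmem hnear
    ⟨hs, mul_self_pos.2 hs1⟩

theorem two_le_log_of_eight_le {t : ℝ} (ht : 8 ≤ t) : 2 ≤ Real.log t := by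
  rw [Real.le_log_iff_exp_le (by linarith), show (2 : ℝ) = 1 + 1 by norm_num, Real.exp_add]
  nlinarith [Real.exp_one_lt_d9, Real.exp_pos 1]

theorem rpow_le_exp_one {x t a : ℝ} (hx : 1 ≤ x) (hxt : x ≤ t) (ha : a ≤ 1 / Real.log t) :
    x ^ a ≤ Real.exp 1 := by
  have hx0 : 0 < x := by linarith
  rw [Real.rpow_def_of_pos hx0, Real.exp_le_exp]
  have hlog : 0 ≤ Real.log x := Real.log_nonneg hx
  have hlog' : Real.log x ≤ Real.log t := Real.log_le_log hx0 hxt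
  calc Real.log x * a ≤ Real.log x * (1 / Real.log t) := by gcongr
    _ = Real.log x / Real.log t := mul_one_div _ _
    _ ≤ 1 := div_le_one_of_le₀ hlog' (hlog.trans hlog')

theorem norm_sum_term_le {f : ℕ → ℂ} {A t : ℝ} {N : ℕ} {s : ℂ} (hfA : ∀ n, ‖f n‖ ≤ A)
    (hNt : N ≤ t) (hs : 1 - 1 / Real.log t ≤ s.re) :
    ‖∑ n ∈ Finset.range (N + 1), LSeries.term f s n‖ ≤
      A * Real.exp 1 * (1 + Real.log N) := by
  have hA : 0 ≤ A := (norm_nonneg _).trans (hfA 0)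
  have hterm : ∀ n ∈ Finset.Icc 1 N, ‖LSeries.term f s n‖ ≤ A * Real.exp 1 * (n : ℝ)⁻¹ := by
    intro n hn
    obtain ⟨hn1, hnN⟩ := Finset.mem_Icc.1 hn
    have hn1' : (1 : ℝ) ≤ n := mod_cast hn1
    have hpow : (n : ℝ) ^ (-s.re) = (n : ℝ) ^ (1 - s.re) * (n : ℝ)⁻¹ := by
      rw [← Real.rpow_neg_one, ← Real.rpow_add (by linarith)]
      ring_nf
    rw [LSeries.norm_term_eq, if_neg (by lia), div_eq_mul_inv, ← Real.rpow_neg n.cast_nonneg,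
      hpow, ← mul_assoc]
    gcongr
    · exact hfA n
    · exact rpow_le_exp_one hn1' (le_trans (mod_cast hnN) hNt) (by linarith)
  rw [Finset.range_eq_Ico, Finset.sum_eq_sum_Ico_succ_bot (by lia), LSeries.term_zero, zero_add,
    zero_add, Finset.Ico_add_one_right_eq_Icc]
  calc _ ≤ ∑ n ∈ Finset.Icc 1 N, A * Real.exp 1 * (n : ℝ)⁻¹ := norm_sum_le_of_le _ hterm
    _ = A * Real.exp 1 * (harmonic N : ℝ) := by
      rw [← Finset.mul_sum, harmonic_eq_sum_Icc]
      push_cast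
      rfl
    _ ≤ _ := by
      gcongr
      exact harmonic_le_one_add_log N

theorem norm_mul_tailMellin_tailRemainder_le {C : ℝ} {N : ℕ} {s : ℂ}
    (hC : ∀ u, ‖tailRemainder Φ N u‖ ≤ C) (hN : 1 ≤ N) (hre : 1 / 2 ≤ s.re) (hnorm : ‖s‖ ≤ 2 * N) :
    ‖s * tailMellin (tailRemainder Φ N) s‖ ≤ 4 * C * (N : ℝ) ^ (1 - s.re) := by
  have hC0 : 0 ≤ C := (norm_nonneg _).trans (hC 0)
  have hN0 : (0 : ℝ) < N := by exact_mod_cast hN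
  have hmellin := norm_tailMellin_le_of_forall_le_eq_zero (s := s) (mod_cast hN)
    (fun u hu => tailRemainder_of_le Φ hu) hC (by linarith)
  calc _ ≤ 2 * N * (C * (N : ℝ) ^ (-s.re) / s.re) := by rw [norm_mul]; gcongr
    _ = 2 * C * (N : ℝ) ^ (1 - s.re) / s.re := by
      rw [sub_eq_add_neg, Real.rpow_add hN0, Real.rpow_one]
      ring
    _ ≤ 2 * C * (N : ℝ) ^ (1 - s.re) / (1 / 2) := by gcongr
    _ = _ := by ring

theorem norm_mul_natCast_cpow_div_le (c : ℂ) {N : ℕ} (hN : 0 < N) {s : ℂ} (hs : 1 ≤ |s.im|) :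
    ‖c * (N : ℂ) ^ (1 - s) / (s - 1)‖ ≤ ‖c‖ * (N : ℝ) ^ (1 - s.re) := by
  have hden : 1 ≤ ‖s - 1‖ := hs.trans (by simpa using abs_im_le_norm (s - 1))
  rw [norm_div, norm_mul, norm_natCast_cpow_of_pos hN, sub_re, one_re]
  exact div_le_self (by positivity) hden

theorem exists_norm_LFunction_le_log : ∃ C : ℝ, ∀ s : ℂ, 8 ≤ |s.im| →
    1 - 1 / Real.log |s.im| ≤ s.re → s.re ≤ 3 →
      ‖ZMod.LFunction Φ s‖ ≤ C * Real.log |s.im| := by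
  obtain ⟨C, hC⟩ := exists_norm_tailRemainder_le Φ
  have hC0 : 0 ≤ C := (norm_nonneg _).trans (hC 0 0)
  have hΦ : ∀ n : ℕ, ‖Φ n‖ ≤ ∑ a, ‖Φ a‖ := fun n =>
    Finset.single_le_sum (f := fun a => ‖Φ a‖) (fun _ _ => norm_nonneg _) (Finset.mem_univ _)
  set e := Real.exp 1
  refine ⟨(∑ a, ‖Φ a‖) * e * 2 + 4 * C * e + ‖periodMean Φ‖ * e, fun s ht hs hs3 => ?_⟩
  set t := |s.im| with ht_def
  set N := ⌊t⌋₊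
  have hlog : 2 ≤ Real.log t := two_le_log_of_eight_le ht
  have hN : (8 : ℝ) ≤ N := mod_cast Nat.le_floor (n := 8) (mod_cast ht)
  have hN1 : 1 ≤ N := by exact_mod_cast (show (1 : ℝ) ≤ N by linarith)
  have hNt : (N : ℝ) ≤ t := Nat.floor_le (abs_nonneg _)
  have hre : 1 / 2 ≤ s.re := by linarith [one_div_le_one_div_of_le two_pos hlog]
  have him : s.im ≠ 0 := fun h => by norm_num [ht_def, h] at ht
  have hpow : (N : ℝ) ^ (1 - s.re) ≤ e := rpow_le_exp_one (by linarith) hNt (by linarith)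
  have hsum := norm_sum_term_le hΦ hNt hs
  have hsumlog : 1 + Real.log N ≤ 2 * Real.log t := by
    linarith [Real.log_le_log (by linarith) hNt]
  have hnorm : ‖s‖ ≤ 2 * N := by
    linarith [norm_le_abs_re_add_abs_im s, abs_of_nonneg (show 0 ≤ s.re by linarith),
      Nat.lt_floor_add_one t]
  have htail : ‖s * tailMellin (tailRemainder Φ N) s‖ ≤ 4 * C * e * Real.log t := by
    calc _ ≤ 4 * C * (N : ℝ) ^ (1 - s.re) :=
        norm_mul_tailMellin_tailRemainder_le Φ (hC N) hN1 hre hnorm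
      _ ≤ 4 * C * e := by gcongr
      _ ≤ _ := le_mul_of_one_le_right (by positivity) (by linarith)
  have hpole : ‖periodMean Φ * (N : ℂ) ^ (1 - s) / (s - 1)‖ ≤
      ‖periodMean Φ‖ * e * Real.log t := by
    calc _ ≤ ‖periodMean Φ‖ * (N : ℝ) ^ (1 - s.re) :=
        norm_mul_natCast_cpow_div_le _ hN1 (by linarith)
      _ ≤ ‖periodMean Φ‖ * e := by gcongr
      _ ≤ _ := le_mul_of_one_le_right (by positivity) (by linarith)
  rw [LFunction_eq_truncatedLFunction Φ hN1 (by linarith) him]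
  calc _ ≤ (∑ a, ‖Φ a‖) * e * (2 * Real.log t) +
        (4 * C * e * Real.log t + ‖periodMean Φ‖ * e * Real.log t) :=
      (norm_add_le _ _).trans (add_le_add (hsum.trans (by gcongr))
        ((norm_add_le _ _).trans (add_le_add htail hpole)))
    _ = _ := by ring

theorem exists_norm_iteratedDeriv_LFunction_le_log_pow (k : ℕ) : ∃ C : ℝ, ∀ s : ℂ,
    10 ≤ |s.im| → 1 ≤ s.re → s.re ≤ 2 →
      ‖iteratedDeriv k (ZMod.LFunction Φ) s‖ ≤ C * Real.log |s.im| ^ (k + 1) := by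
  obtain ⟨C, hC⟩ := exists_norm_LFunction_le_log Φ
  refine ⟨k.factorial * (2 * |C|) * 2 ^ k, fun s ht hs hs2 => ?_⟩
  set t := |s.im|
  set r : ℝ := 1 / (2 * Real.log t) with hr
  have hlog : 2 ≤ Real.log t := two_le_log_of_eight_le (by linarith)
  have hr0 : 0 < r := by positivity
  have hr1 : r ≤ 1 / 4 := one_div_le_one_div_of_le (by norm_num) (by linarith)
  have hball : ∀ z ∈ Metric.closedBall s r,
      z.im ≠ 0 ∧ ‖ZMod.LFunction Φ z‖ ≤ 2 * |C| * Real.log t := by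
    intro z hz
    rw [Metric.mem_closedBall, dist_eq] at hz
    have him := abs_le.1 ((abs_abs_sub_abs_le_abs_sub z.im s.im).trans
      ((abs_im_le_norm (z - s)).trans hz))
    have hre := abs_le.1 ((abs_re_le_norm (z - s)).trans hz)
    rw [sub_re] at hre
    have hlogz : Real.log |z.im| ≤ 2 * Real.log t := by
      calc Real.log |z.im| ≤ Real.log (t ^ 2) := Real.log_le_log (by linarith) (by nlinarith)
        _ = 2 * Real.log t := by rw [Real.log_pow, Nat.cast_ofNat]
    have hlogz2 : 2 ≤ Real.log |z.im| := two_le_log_of_eight_le (by linarith)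
    have hrz : r ≤ 1 / Real.log |z.im| := one_div_le_one_div_of_le (by linarith) hlogz
    refine ⟨fun h => by norm_num [h] at hlogz2, ?_⟩
    calc _ ≤ C * Real.log |z.im| := hC z (by linarith) (by linarith) (by linarith)
      _ ≤ |C| * (2 * Real.log t) := by
        gcongr
        exact le_abs_self C
      _ = _ := by ring
  have hdiff : DiffContOnCl ℂ (ZMod.LFunction Φ) (Metric.ball s r) := by
    refine DifferentiableOn.diffContOnCl fun z hz => ?_
    rw [closure_ball _ hr0.ne'] at hz
    refine (ZMod.differentiableAt_LFunction Φ z (Or.inl ?_)).differentiableWithinAt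
    rintro rfl
    exact (hball 1 hz).1 one_im
  refine (norm_iteratedDeriv_le_of_forall_mem_sphere_norm_le k hr0 hdiff fun z hz =>
    (hball z (Metric.sphere_subset_closedBall hz)).2).trans_eq ?_
  rw [hr, one_div, inv_pow, div_inv_eq_mul, mul_pow]
  ring

end PeriodicLFunction

section LowerBound

theorem le_mul_pow_seven_of_pow_three_le {y : ℝ → ℝ} {C D ℓ x : ℝ} (hC : 1 ≤ C) (hD : 1 ≤ D)
    (hℓ : 1 ≤ ℓ) (hy : ∀ x, 0 ≤ y x) (hpow : ∀ x, 0 < x → x ≤ 1 → x ^ 3 ≤ D * ℓ * y x ^ 4)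
    (hlip : ∀ x x', 0 < x → x ≤ x' → x' ≤ 1 → y x' ≤ y x + C * ℓ ^ 2 * (x' - x))
    (hx0 : 0 < x) (hx1 : x ≤ 1) : 1 / (16 * C ^ 3 * D) ≤ y x * ℓ ^ 7 := by
  set ε := 1 / (16 * C ^ 4 * D) with hε
  have hε0 : 0 < ε := by positivity
  have hε1 : ε ≤ 1 := by
    refine div_le_one_of_le₀ ?_ (by positivity)
    nlinarith [one_le_pow₀ (n := 4) hC]
  have hCε : 1 / (16 * C ^ 3 * D) = C * ε := by
    rw [hε]
    field_simp
  have hlarge : ∀ x, 0 < x → x ≤ 1 → ε ≤ x * ℓ ^ 9 → 2 * (C * ε) ≤ y x * ℓ ^ 7 := by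
    intro x hx0 hx1 hx
    refine le_of_pow_le_pow_left₀ four_ne_zero (mul_nonneg (hy x) (by positivity)) ?_
    calc (2 * (C * ε)) ^ 4 = ε ^ 3 / D := by rw [hε]; field_simp; norm_num
      _ ≤ (x * ℓ ^ 9) ^ 3 / D := by gcongr
      _ = ℓ ^ 27 * x ^ 3 / D := by ring
      _ ≤ ℓ ^ 27 * (D * ℓ * y x ^ 4) / D := by gcongr; exact hpow x hx0 hx1
      _ = (y x * ℓ ^ 7) ^ 4 := by field_simp
  rw [hCε]
  rcases le_total ε (x * ℓ ^ 9) with hx | hx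
  · linarith [hlarge x hx0 hx1 hx, mul_pos (zero_lt_one.trans_le hC) hε0]
  have hxx' : x ≤ ε / ℓ ^ 9 := (le_div_iff₀ (by positivity)).2 hx
  have hx'1 : ε / ℓ ^ 9 ≤ 1 := div_le_one_of_le₀ (hε1.trans (one_le_pow₀ hℓ)) (by positivity)
  have hε' : ε / ℓ ^ 9 * ℓ ^ 9 = ε := div_mul_cancel₀ _ (by positivity)
  have h₁ := hlarge (ε / ℓ ^ 9) (by positivity) hx'1 hε'.ge
  have h₂ : y (ε / ℓ ^ 9) ≤ y x + C * ℓ ^ 2 * (ε / ℓ ^ 9) :=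
    (hlip x _ hx0 hxx' hx'1).trans (by gcongr; linarith)
  have h₃ : (y x + C * ℓ ^ 2 * (ε / ℓ ^ 9)) * ℓ ^ 7 = y x * ℓ ^ 7 + C * ε := by
    linear_combination C * hε'
  nlinarith [mul_le_mul_of_nonneg_right h₂ (show 0 ≤ ℓ ^ 7 by positivity)]

variable {q : ℕ} [NeZero q]

variable (q) in
theorem exists_norm_LFunctionTrivChar_one_add_le : ∃ C : ℝ, 1 ≤ C ∧ ∀ x : ℝ, 0 < x → x ≤ 1 →
    ‖DirichletCharacter.LFunctionTrivChar q (1 + x)‖ ≤ C / x := by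
  have hcont : ContinuousOn (fun x : ℝ => DirichletCharacter.LFunctionTrivChar₁ q (1 + x))
      (Set.Icc 0 1) :=
    ((DirichletCharacter.differentiable_LFunctionTrivChar₁ q).continuous.comp
      (by fun_prop : Continuous fun x : ℝ => (1 + x : ℂ))).continuousOn
  obtain ⟨C, hC⟩ := isCompact_Icc.exists_bound_of_continuousOn hcont
  refine ⟨max C 1, le_max_right _ _, fun x hx0 hx1 => ?_⟩
  have hne : (1 + x : ℂ) ≠ 1 := by simpa using hx0.ne'
  have hbound := hC x ⟨hx0.le, hx1⟩
  rw [DirichletCharacter.LFunctionTrivChar₁, Function.update_of_ne hne, add_sub_cancel_left,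
    norm_mul, norm_real, Real.norm_of_nonneg hx0.le] at hbound
  rw [le_div_iff₀' hx0]
  exact hbound.trans (le_max_left _ _)

variable (η : DirichletCharacter ℂ q)

theorem exists_norm_LFunction_le_log_of_one_le_re : ∃ C : ℝ, 1 ≤ C ∧ ∀ s : ℂ, 10 ≤ |s.im| →
    1 ≤ s.re → s.re ≤ 2 → ‖η.LFunction s‖ ≤ C * Real.log |s.im| := by
  obtain ⟨C, hC⟩ := exists_norm_iteratedDeriv_LFunction_le_log_pow (fun a => η a) 0
  refine ⟨max C 1, le_max_right _ _, fun s ht hs hs2 => ?_⟩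
  have hbound := hC s ht hs hs2
  rw [iteratedDeriv_zero, zero_add, pow_one] at hbound
  exact hbound.trans (mul_le_mul_of_nonneg_right (le_max_left _ _)
    (Real.log_nonneg (by linarith)))

theorem exists_pow_three_le_norm_LFunction_pow_four : ∃ D : ℝ, 1 ≤ D ∧ ∀ t x : ℝ, 10 ≤ |t| →
    0 < x → x ≤ 1 → x ^ 3 ≤ D * Real.log |t| * ‖η.LFunction (1 + x + I * t)‖ ^ 4 := by
  obtain ⟨C₁, hC₁, htriv⟩ := exists_norm_LFunctionTrivChar_one_add_le q
  obtain ⟨C₂, hC₂, hsq⟩ := exists_norm_LFunction_le_log_of_one_le_re (η ^ 2)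
  refine ⟨C₁ ^ 3 * (2 * C₂), by nlinarith [one_le_pow₀ (n := 3) hC₁], fun t x ht hx0 hx1 => ?_⟩
  have him : |(1 + x + 2 * I * t : ℂ).im| = 2 * |t| := by simp [abs_mul]
  have hlog : Real.log (2 * |t|) ≤ 2 * Real.log |t| := by
    calc Real.log (2 * |t|) ≤ Real.log (|t| ^ 2) := Real.log_le_log (by linarith) (by nlinarith)
      _ = 2 * Real.log |t| := by rw [Real.log_pow, Nat.cast_ofNat]
  have hη2 : ‖(η ^ 2).LFunction (1 + x + 2 * I * t)‖ ≤ C₂ * (2 * Real.log |t|) := by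
    have hbound := hsq (1 + x + 2 * I * t) (by rw [him]; linarith) (by simp; linarith)
      (by simp; linarith)
    rw [him] at hbound
    exact hbound.trans (by gcongr)
  have hone : 1 ≤ (C₁ / x) ^ 3 * ‖η.LFunction (1 + x + I * t)‖ ^ 4 *
      (C₂ * (2 * Real.log |t|)) := by
    have hprod := DirichletCharacter.norm_LFunction_product_ge_one η hx0 t
    rw [norm_mul, norm_mul, norm_pow, norm_pow] at hprod
    refine hprod.trans ?_
    gcongr
    exact htriv x hx0 hx1
  calc x ^ 3 ≤ x ^ 3 * ((C₁ / x) ^ 3 * ‖η.LFunction (1 + x + I * t)‖ ^ 4 *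
        (C₂ * (2 * Real.log |t|))) := le_mul_of_one_le_right (by positivity) hone
    _ = _ := by field_simp

theorem exists_norm_LFunction_sub_le : ∃ C : ℝ, 1 ≤ C ∧ ∀ t x x' : ℝ, 10 ≤ |t| →
    0 < x → x ≤ x' → x' ≤ 1 → ‖η.LFunction (1 + x' + I * t) - η.LFunction (1 + x + I * t)‖ ≤
      C * Real.log |t| ^ 2 * (x' - x) := by
  obtain ⟨C, hC⟩ := exists_norm_iteratedDeriv_LFunction_le_log_pow (fun a => η a) 1
  refine ⟨max C 1, le_max_right _ _, fun t x x' ht hx0 hxx' hx'1 => ?_⟩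
  have hderiv : ∀ u ∈ Set.Icc x x', HasDerivWithinAt (fun u : ℝ => η.LFunction (1 + u + I * t))
      (deriv η.LFunction (1 + u + I * t)) (Set.Icc x x') u := by
    intro u _
    have hne : (1 + u + I * t : ℂ) ≠ 1 := fun h => by
      have : t = 0 := by simpa using congrArg im h
      norm_num [this] at ht
    have hL := (η.differentiableAt_LFunction _ (Or.inl hne)).hasDerivAt
    have hline : HasDerivAt (fun u : ℝ => (1 + u + I * t : ℂ)) 1 u :=
      ((hasDerivAt_id u).ofReal_comp.const_add 1).add_const (I * t : ℂ)
    simpa only [Function.comp_def, mul_one] using (hL.comp u hline).hasDerivWithinAt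
  have hbound : ∀ u ∈ Set.Ico x x',
      ‖deriv η.LFunction (1 + u + I * t)‖ ≤ max C 1 * Real.log |t| ^ 2 := by
    rintro u ⟨hxu, hux'⟩
    have hk := hC (1 + u + I * t) (by simpa using ht) (by simp; linarith) (by simp; linarith)
    rw [iteratedDeriv_one, show (1 + u + I * t : ℂ).im = t by simp] at hk
    exact hk.trans (mul_le_mul_of_nonneg_right (le_max_left _ _) (sq_nonneg _))
  simpa using norm_image_sub_le_of_norm_deriv_le_segment' hderiv hbound x'
    (Set.right_mem_Icc.2 hxx')

theorem exists_le_norm_LFunction_mul_log_pow : ∃ c : ℝ, 0 < c ∧ ∀ s : ℂ, 10 ≤ |s.im| →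
    1 < s.re → s.re ≤ 2 → c ≤ ‖η.LFunction s‖ * Real.log |s.im| ^ 7 := by
  obtain ⟨D, hD, hpow⟩ := exists_pow_three_le_norm_LFunction_pow_four η
  obtain ⟨C, hC, hlip⟩ := exists_norm_LFunction_sub_le η
  refine ⟨1 / (16 * C ^ 3 * D), by positivity, fun s ht hs hs2 => ?_⟩
  have hlog : 1 ≤ Real.log |s.im| := by
    linarith [two_le_log_of_eight_le (t := |s.im|) (by linarith)]
  have hlower := le_mul_pow_seven_of_pow_three_le (x := s.re - 1)
    (y := fun x => ‖η.LFunction (1 + x + I * s.im)‖) hC hD hlog (fun _ => norm_nonneg _)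
    (fun x => hpow s.im x ht)
    (fun x x' hx hxx' hx' => sub_le_iff_le_add'.1
      ((norm_sub_norm_le _ _).trans (hlip s.im x x' ht hx hxx' hx')))
    (by linarith) (by linarith)
  have hs_eq : (1 + (s.re - 1 : ℝ) + I * s.im : ℂ) = s := by
    apply Complex.ext <;> simp
  rwa [hs_eq] at hlower

end LowerBound

section LogDerivative

variable {q : ℕ} [NeZero q] (η : DirichletCharacter ℂ q)

open Classical in
/-- The order, `1` or `0`, of the pole of `L(s, η)` at `s = 1`. -/
noncomputable def poleOrder : ℂ := if η = 1 then 1 else 0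

open Classical in
/-- The entire function `(s - 1) ^ poleOrder η * L(s, η)`. -/
noncomputable def regularLFunction : ℂ → ℂ :=
  if η = 1 then DirichletCharacter.LFunctionTrivChar₁ q else η.LFunction

/-- The transform
`∫_1^∞ (∑_{n ≤ t} η n Λ n - δ t) t^{-s-1} dt = -L'(s, η) / (s L(s, η)) - δ / (s - 1)` with
`δ = poleOrder η`, written so that it is visibly analytic on `1 ≤ re s`. -/
noncomputable def primeErrorTransform (s : ℂ) : ℂ :=
  -(deriv (regularLFunction η) s / regularLFunction η s + poleOrder η) / s

theorem norm_poleOrder_le_one : ‖poleOrder η‖ ≤ 1 := by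
  unfold poleOrder
  split_ifs <;> simp

theorem differentiable_regularLFunction : Differentiable ℂ (regularLFunction η) := by
  unfold regularLFunction
  split_ifs with hη
  · exact DirichletCharacter.differentiable_LFunctionTrivChar₁ q
  · exact DirichletCharacter.differentiable_LFunction hη

theorem regularLFunction_ne_zero {s : ℂ} (hs : 1 ≤ s.re) : regularLFunction η s ≠ 0 := by
  unfold regularLFunction
  split_ifs with hη
  · rcases eq_or_ne s 1 with rfl | hs1
    · exact DirichletCharacter.LFunctionTrivChar₁_apply_one_ne_zero q
    · rw [DirichletCharacter.LFunctionTrivChar₁, Function.update_of_ne hs1]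
      exact mul_ne_zero (sub_ne_zero.2 hs1)
        (DirichletCharacter.LFunction_ne_zero_of_one_le_re _ (Or.inr hs1) hs)
  · exact DirichletCharacter.LFunction_ne_zero_of_one_le_re _ (Or.inl hη) hs

theorem analyticAt_primeErrorTransform {s : ℂ} (hs : 1 ≤ s.re) :
    AnalyticAt ℂ (primeErrorTransform η) s := by
  have hs0 : s ≠ 0 := fun h => by norm_num [h] at hs
  have hG : AnalyticAt ℂ (regularLFunction η) s := (differentiable_regularLFunction η).analyticAt s
  exact ((hG.deriv.div hG (regularLFunction_ne_zero η hs)).add analyticAt_const).neg.div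
    analyticAt_id hs0

theorem primeErrorTransform_eq {s : ℂ} (hs : 1 < s.re) : primeErrorTransform η s =
    -(deriv η.LFunction s / η.LFunction s) / s - poleOrder η / (s - 1) := by
  have hs1 : s ≠ 1 := fun h => by norm_num [h] at hs
  have hs0 : s ≠ 0 := fun h => by norm_num [h] at hs
  have hs1' := sub_ne_zero.2 hs1
  have hL := DirichletCharacter.LFunction_ne_zero_of_one_le_re η (Or.inr hs1) hs.le
  unfold primeErrorTransform regularLFunction poleOrder
  split_ifs with hη
  · subst hη
    rw [DirichletCharacter.deriv_LFunctionTrivChar₁_apply_of_ne_one q hs1,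
      DirichletCharacter.LFunctionTrivChar₁, Function.update_of_ne hs1,
      DirichletCharacter.LFunctionTrivChar]
    field_simp
    ring
  · rw [add_zero, zero_div, sub_zero]

theorem deriv_primeErrorTransform_eq {s : ℂ} (hs : 1 < s.re) :
    deriv (primeErrorTransform η) s =
      -(deriv (deriv η.LFunction) s / η.LFunction s - (deriv η.LFunction s / η.LFunction s) ^ 2) / s
        + deriv η.LFunction s / η.LFunction s / s ^ 2 + poleOrder η / (s - 1) ^ 2 := by
  have hs1 : s ≠ 1 := fun h => by norm_num [h] at hs
  have hs0 : s ≠ 0 := fun h => by norm_num [h] at hs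
  have hs1' := sub_ne_zero.2 hs1
  have hL := DirichletCharacter.LFunction_ne_zero_of_one_le_re η (Or.inr hs1) hs.le
  have hnear : primeErrorTransform η =ᶠ[𝓝 s] fun s =>
      -(deriv η.LFunction s / η.LFunction s) / s - poleOrder η / (s - 1) := by
    filter_upwards [(isOpen_lt continuous_const continuous_re).mem_nhds hs] with z hz
    exact primeErrorTransform_eq η hz
  have hdiff : DifferentiableOn ℂ η.LFunction {z | z ≠ 1} := fun z hz =>
    (η.differentiableAt_LFunction z (Or.inl hz)).differentiableWithinAt
  have hana : AnalyticAt ℂ η.LFunction s := hdiff.analyticAt (isOpen_ne.mem_nhds hs1)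
  have hderiv := ((hana.deriv.differentiableAt.hasDerivAt.fun_div hana.differentiableAt.hasDerivAt
    hL).fun_neg.fun_div (hasDerivAt_id' s) hs0).fun_sub
      ((hasDerivAt_const s (poleOrder η)).fun_div ((hasDerivAt_id' s).sub_const 1) hs1')
  rw [hnear.deriv_eq, hderiv.deriv]
  field_simp
  ring

theorem exists_norm_iteratedDeriv_div_LFunction_le (k : ℕ) : ∃ C : ℝ, 0 ≤ C ∧ ∀ s : ℂ,
    10 ≤ |s.im| → 1 < s.re → s.re ≤ 2 →
      ‖iteratedDeriv k η.LFunction s / η.LFunction s‖ ≤ C * Real.log |s.im| ^ (k + 8) := by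
  obtain ⟨C, hC⟩ := exists_norm_iteratedDeriv_LFunction_le_log_pow (fun a => η a) k
  obtain ⟨c, hc0, hc⟩ := exists_le_norm_LFunction_mul_log_pow η
  refine ⟨|C| / c, by positivity, fun s ht hs hs2 => ?_⟩
  have hlog : 2 ≤ Real.log |s.im| := two_le_log_of_eight_le (by linarith)
  have hlower := hc s ht hs hs2
  have hL : 0 < ‖η.LFunction s‖ :=
    pos_of_mul_pos_left (hc0.trans_le hlower) (by positivity)
  rw [norm_div, div_le_iff₀ hL]
  calc _ ≤ C * Real.log |s.im| ^ (k + 1) := hC s ht hs.le hs2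
    _ ≤ |C| * Real.log |s.im| ^ (k + 1) := by gcongr; exact le_abs_self C
    _ = |C| / c * Real.log |s.im| ^ (k + 1) * c := by field_simp
    _ ≤ |C| / c * Real.log |s.im| ^ (k + 1) * (‖η.LFunction s‖ * Real.log |s.im| ^ 7) := by gcongr
    _ = _ := by ring

theorem exists_norm_deriv_primeErrorTransform_le_log_pow : ∃ C : ℝ, 0 ≤ C ∧ ∀ s : ℂ,
    10 ≤ |s.im| → 1 < s.re → s.re ≤ 2 →
      ‖deriv (primeErrorTransform η) s‖ ≤ C * (Real.log |s.im| ^ 18 / |s.im|) := by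
  obtain ⟨C₁, hC₁, hfirst⟩ := exists_norm_iteratedDeriv_div_LFunction_le η 1
  obtain ⟨C₂, hC₂, hsecond⟩ := exists_norm_iteratedDeriv_div_LFunction_le η 2
  refine ⟨C₂ + C₁ ^ 2 + C₁ + 1, by positivity, fun s ht hs hs2 => ?_⟩
  set ℓ := Real.log |s.im|
  have hℓ : 1 ≤ ℓ := by linarith [two_le_log_of_eight_le (t := |s.im|) (by linarith)]
  have ht0 : 0 < |s.im| := by linarith
  have hd₁ : ‖deriv η.LFunction s / η.LFunction s‖ ≤ C₁ * ℓ ^ 9 := by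
    simpa only [iteratedDeriv_one] using hfirst s ht hs hs2
  have hd₂ : ‖deriv (deriv η.LFunction) s / η.LFunction s‖ ≤ C₂ * ℓ ^ 10 := by
    simpa only [iteratedDeriv_succ, iteratedDeriv_zero] using hsecond s ht hs hs2
  have him : |s.im| ≤ ‖s‖ := abs_im_le_norm s
  have him' : |s.im| ≤ ‖s - 1‖ := by simpa using abs_im_le_norm (s - 1)
  have hfirst_term : ‖deriv (deriv η.LFunction) s / η.LFunction s -
      (deriv η.LFunction s / η.LFunction s) ^ 2‖ ≤ (C₂ + C₁ ^ 2) * ℓ ^ 18 := by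
    refine (norm_sub_le _ _).trans ?_
    rw [norm_pow, add_mul]
    refine add_le_add (hd₂.trans (by gcongr; norm_num)) ?_
    calc _ ≤ (C₁ * ℓ ^ 9) ^ 2 := by gcongr
      _ = C₁ ^ 2 * ℓ ^ 18 := by ring
  rw [deriv_primeErrorTransform_eq η hs]
  calc _ ≤ (C₂ + C₁ ^ 2) * ℓ ^ 18 / |s.im| + C₁ * ℓ ^ 18 / |s.im| + ℓ ^ 18 / |s.im| := by
        refine norm_add₃_le.trans (add_le_add_three ?_ ?_ ?_)
        · rw [norm_div, norm_neg]
          gcongr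
        · rw [norm_div, norm_pow]
          exact div_le_div₀ (by positivity) (hd₁.trans (by gcongr; norm_num)) ht0 (by nlinarith)
        · rw [norm_div, norm_pow]
          exact div_le_div₀ (by positivity)
            ((norm_poleOrder_le_one η).trans (one_le_pow₀ hℓ)) ht0 (by nlinarith)
    _ = _ := by ring

theorem exists_log_pow_div_le (k : ℕ) {ε : ℝ} (hε : 0 < ε) :
    ∃ C : ℝ, 0 ≤ C ∧ ∀ t : ℝ, 1 ≤ t → Real.log t ^ k / t ≤ C * (1 + t) ^ (ε - 1) := by
  set δ := ε / (k + 1) with hδ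
  have hδ0 : 0 < δ := by positivity
  have hkδ : δ * k ≤ ε := by
    rw [hδ, div_mul_eq_mul_div, div_le_iff₀ (by positivity)]
    gcongr
    linarith
  refine ⟨2 / δ ^ k, by positivity, fun t ht => ?_⟩
  have hlog : Real.log t ≤ (1 + t) ^ δ / δ :=
    (Real.log_le_log (by linarith) (by linarith)).trans (Real.log_le_rpow_div (by linarith) hδ0)
  calc Real.log t ^ k / t ≤ ((1 + t) ^ δ / δ) ^ k / ((1 + t) / 2) := by
        have := Real.log_nonneg ht
        gcongr
        linarith
    _ = 2 / δ ^ k * ((1 + t) ^ (δ * k) / (1 + t)) := by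
      rw [div_pow, ← Real.rpow_mul_natCast (by linarith)]
      field_simp
    _ ≤ 2 / δ ^ k * ((1 + t) ^ ε / (1 + t)) := by
      gcongr
      linarith
    _ = _ := by rw [Real.rpow_sub_one (by linarith)]

theorem exists_norm_deriv_primeErrorTransform_le : ∃ C : ℝ, ∀ s : ℂ, 1 < s.re → s.re ≤ 2 →
    ‖deriv (primeErrorTransform η) s‖ ≤ C * (1 + |s.im|) ^ (-(3 / 4) : ℝ) := by
  obtain ⟨C, hC0, hC⟩ := exists_norm_deriv_primeErrorTransform_le_log_pow η
  obtain ⟨C', hC'0, hC'⟩ := exists_log_pow_div_le 18 (ε := 1 / 4) (by norm_num)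
  have hcompact : IsCompact (Set.Icc (1 : ℝ) 2 ×ℂ Set.Icc (-10 : ℝ) 10) :=
    isCompact_Icc.reProdIm isCompact_Icc
  have hcont : ContinuousOn (deriv (primeErrorTransform η))
      (Set.Icc (1 : ℝ) 2 ×ℂ Set.Icc (-10 : ℝ) 10) := fun s hs =>
    (analyticAt_primeErrorTransform η hs.1.1).deriv.continuousAt.continuousWithinAt
  obtain ⟨M, hM⟩ := hcompact.exists_bound_of_continuousOn hcont
  refine ⟨max (C * C') (|M| * 11), fun s hs hs2 => ?_⟩
  rcases le_total 10 |s.im| with him | him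
  · calc _ ≤ C * (Real.log |s.im| ^ 18 / |s.im|) := hC s him hs hs2
      _ ≤ C * (C' * (1 + |s.im|) ^ (1 / 4 - 1 : ℝ)) := by gcongr; exact hC' _ (by linarith)
      _ = C * C' * (1 + |s.im|) ^ (-(3 / 4) : ℝ) := by norm_num [mul_assoc]
      _ ≤ _ := by gcongr; exact le_max_left _ _
  · have hinv : (11 : ℝ)⁻¹ ≤ (1 + |s.im|) ^ (-(3 / 4) : ℝ) := by
      rw [← Real.rpow_neg_one]
      calc (11 : ℝ) ^ (-1 : ℝ) ≤ (1 + |s.im|) ^ (-1 : ℝ) :=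
            Real.rpow_le_rpow_of_nonpos (by positivity) (by linarith) (by norm_num)
        _ ≤ _ := Real.rpow_le_rpow_of_exponent_le (by linarith [abs_nonneg s.im]) (by norm_num)
    calc _ ≤ |M| := (hM s ⟨⟨hs.le, hs2⟩, abs_le.1 him⟩).trans (le_abs_self M)
      _ = |M| * 11 * 11⁻¹ := by field_simp
      _ ≤ _ := by gcongr; exact le_max_right _ _

end LogDerivative

section PrimeMeans

open ArithmeticFunction (vonMangoldt)
open Chebyshev (psi)

variable {a b : ℕ → ℂ} {δ ε : ℂ}

/-- The weighted Chebyshev function `ψ_a(x) = ∑_{n ≤ x} a n Λ n`. -/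
noncomputable def weightedPsi (a : ℕ → ℂ) (x : ℝ) : ℂ :=
  ∑ n ∈ Finset.Icc 1 ⌊x⌋₊, a n * (vonMangoldt n : ℂ)

/-- The error term `ψ_a(x) - δ x` when `δ` is the expected mean value of `a` over the primes. -/
noncomputable def primeError (a : ℕ → ℂ) (δ : ℂ) (x : ℝ) : ℂ := weightedPsi a x - δ * x

/-- `a` has mean value `δ` over the primes, in the sense that the error terms `ψ_a(y) - δ y` at
`y = x, x / 2, x / 3, …` have sum `O(x)`. -/
def HasPrimeMean (a : ℕ → ℂ) (δ : ℂ) : Prop :=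
  ∃ C : ℝ, ∀ x : ℝ, 1 ≤ x → ∑ n ∈ Finset.Icc 1 ⌊x⌋₊, ‖primeError a δ (x / n)‖ ≤ C * x

theorem norm_mul_vonMangoldt_le {z : ℂ} (hz : ‖z‖ ≤ 1) (n : ℕ) :
    ‖z * (vonMangoldt n : ℂ)‖ ≤ vonMangoldt n := by
  rw [norm_mul, norm_real, Real.norm_of_nonneg ArithmeticFunction.vonMangoldt_nonneg]
  exact mul_le_of_le_one_left ArithmeticFunction.vonMangoldt_nonneg hz

theorem norm_weightedPsi_le (ha : ∀ n, ‖a n‖ ≤ 1) (x : ℝ) : ‖weightedPsi a x‖ ≤ psi x :=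
  norm_sum_le_of_le _ fun n _ => norm_mul_vonMangoldt_le (ha n) n

theorem measurable_weightedPsi (a : ℕ → ℂ) : Measurable (weightedPsi a) :=
  (measurable_from_nat (f := fun N : ℕ => ∑ n ∈ Finset.Icc 1 N, a n * (vonMangoldt n : ℂ))).comp
    Nat.measurable_floor

theorem measurable_primeError (a : ℕ → ℂ) (δ : ℂ) : Measurable (primeError a δ) :=
  (measurable_weightedPsi a).sub (by fun_prop)

theorem norm_weightedPsi_le_mul (ha : ∀ n, ‖a n‖ ≤ 1) {x : ℝ} (hx : 0 ≤ x) :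
    ‖weightedPsi a x‖ ≤ (Real.log 4 + 4) * x :=
  (norm_weightedPsi_le ha x).trans (Chebyshev.psi_le_const_mul_self hx)

theorem norm_primeError_le (ha : ∀ n, ‖a n‖ ≤ 1) (hδ : ‖δ‖ ≤ 1) {x : ℝ} (hx : 0 ≤ x) :
    ‖primeError a δ x‖ ≤ (Real.log 4 + 5) * x := by
  have hδx : ‖δ * x‖ ≤ 1 * x := by
    rw [norm_mul, norm_real, Real.norm_of_nonneg hx]
    gcongr
  have := norm_sub_le_of_le (norm_weightedPsi_le_mul ha hx) hδx
  rw [primeError]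
  linarith

theorem norm_primeError_sub_le (ha : ∀ n, ‖a n‖ ≤ 1) (hδ : ‖δ‖ ≤ 1) {y z : ℝ} (hyz : y ≤ z) :
    ‖primeError a δ z - primeError a δ y‖ ≤ (psi z + z) - (psi y + y) := by
  have hfloor := Nat.floor_mono hyz
  have hψa : weightedPsi a z = weightedPsi a y + ∑ n ∈ Finset.Ioc ⌊y⌋₊ ⌊z⌋₊, a n * vonMangoldt n :=
    (Finset.sum_Ioc_consecutive _ (Nat.zero_le _) hfloor).symm
  have hψ : psi z = psi y + ∑ n ∈ Finset.Ioc ⌊y⌋₊ ⌊z⌋₊, vonMangoldt n :=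
    (Finset.sum_Ioc_consecutive _ (Nat.zero_le _) hfloor).symm
  have hsum : ‖∑ n ∈ Finset.Ioc ⌊y⌋₊ ⌊z⌋₊, a n * (vonMangoldt n : ℂ)‖ ≤
      ∑ n ∈ Finset.Ioc ⌊y⌋₊ ⌊z⌋₊, vonMangoldt n :=
    norm_sum_le_of_le _ fun n _ => norm_mul_vonMangoldt_le (ha n) n
  have hlin : ‖δ * ((z - y : ℝ) : ℂ)‖ ≤ 1 * (z - y) := by
    rw [norm_mul, norm_real, Real.norm_of_nonneg (sub_nonneg.2 hyz)]
    exact mul_le_mul_of_nonneg_right hδ (sub_nonneg.2 hyz)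
  calc ‖primeError a δ z - primeError a δ y‖
      = ‖∑ n ∈ Finset.Ioc ⌊y⌋₊ ⌊z⌋₊, a n * (vonMangoldt n : ℂ) - δ * ((z - y : ℝ) : ℂ)‖ := by
        rw [primeError, primeError, hψa]
        push_cast
        ring_nf
    _ ≤ _ := norm_sub_le_of_le hsum hlin
    _ = _ := by rw [hψ]; ring

theorem tailMellin_const_mul_ofReal (δ : ℂ) {s : ℂ} (hs : 1 < s.re) :
    tailMellin (fun t => δ * t) s = δ / (s - 1) := by
  have hs1 : s - 1 ≠ 0 := sub_ne_zero.2 fun h => by norm_num [h] at hs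
  have hs1' : -s + 1 ≠ 0 := fun h => hs1 (by linear_combination -h)
  calc tailMellin (fun t => δ * t) s = ∫ t in Set.Ioi (1 : ℝ), δ * (t : ℂ) ^ (-s) := by
        refine setIntegral_congr_fun measurableSet_Ioi fun t ht => ?_
        have ht0 : (t : ℂ) ≠ 0 := ofReal_ne_zero.2 (one_pos.trans ht).ne'
        simp only [show -s = -(s + 1) + 1 by ring, cpow_add _ _ ht0, cpow_one]
        ring
    _ = δ / (s - 1) := by
        rw [integral_const_mul, integral_Ioi_cpow_of_lt (by simpa using hs) one_pos, ofReal_one,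
          one_cpow]
        field_simp
        ring

theorem LSeries_mul_vonMangoldt_eq_mul_tailMellin (ha : ∀ n, ‖a n‖ ≤ 1) {s : ℂ} (hs : 1 < s.re) :
    LSeries (fun n => a n * (vonMangoldt n : ℂ)) s = s * tailMellin (weightedPsi a) s := by
  refine LSeries_eq_mul_integral' _ zero_le_one hs
    (.of_bound (Real.log 4 + 4) (Eventually.of_forall fun n => ?_))
  rw [Real.norm_of_nonneg (Finset.sum_nonneg fun _ _ => norm_nonneg _), Real.rpow_one,
    Real.norm_natCast]
  calc ∑ k ∈ Finset.Icc 1 n, ‖a k * (vonMangoldt k : ℂ)‖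
      ≤ ∑ k ∈ Finset.Icc 1 n, vonMangoldt k :=
        Finset.sum_le_sum fun k _ => norm_mul_vonMangoldt_le (ha k) k
    _ = psi n := by rw [psi, Nat.floor_natCast]; rfl
    _ ≤ (Real.log 4 + 4) * n := Chebyshev.psi_le_const_mul_self n.cast_nonneg

theorem tailMellin_primeError (ha : ∀ n, ‖a n‖ ≤ 1) (δ : ℂ) {s : ℂ} (hs : 1 < s.re) :
    tailMellin (primeError a δ) s =
      LSeries (fun n => a n * (vonMangoldt n : ℂ)) s / s - δ / (s - 1) := by
  have hs0 : s ≠ 0 := fun h => by norm_num [h] at hs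
  have hψ : IntegrableOn (fun t => weightedPsi a t * (t : ℂ) ^ (-(s + 1))) (Set.Ioi 1) :=
    integrableOn_mul_cpow_of_norm_le_rpow (measurable_weightedPsi a) (a := 1)
      (fun t ht => by
        simpa only [Real.rpow_one] using norm_weightedPsi_le_mul ha (one_pos.trans ht).le) hs
  have hlin : IntegrableOn (fun t : ℝ => (t : ℂ) * (t : ℂ) ^ (-(s + 1))) (Set.Ioi 1) :=
    integrableOn_mul_cpow_of_norm_le_rpow measurable_ofReal (A := 1) (a := 1)
      (fun t ht => by simp [abs_of_pos (one_pos.trans ht)]) hs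
  have hid : tailMellin (fun t => (t : ℂ)) s = 1 / (s - 1) := by
    simpa only [one_mul] using tailMellin_const_mul_ofReal 1 hs
  calc tailMellin (primeError a δ) s
      = tailMellin (fun t => weightedPsi a t + -δ * t) s := by
        congr 1
        ext t
        rw [primeError]
        ring
    _ = _ := by
        rw [tailMellin_add_const_mul (-δ) hψ hlin, hid,
          LSeries_mul_vonMangoldt_eq_mul_tailMellin ha hs, mul_div_cancel_left₀ _ hs0]
        ring

variable {q : ℕ} [NeZero q] (η : DirichletCharacter ℂ q)

theorem tailMellin_primeError_dirichletCharacter {s : ℂ} (hs : 1 < s.re) :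
    tailMellin (primeError (fun n => η n) (poleOrder η)) s = primeErrorTransform η s := by
  rw [tailMellin_primeError (fun n => η.norm_le_one n) _ hs, primeErrorTransform_eq η hs,
    DirichletCharacter.deriv_LFunction_eq_deriv_LSeries η hs,
    DirichletCharacter.LFunction_eq_LSeries η hs, ← neg_div,
    ← DirichletCharacter.LSeries_twist_vonMangoldt_eq η hs]
  rfl

theorem hasPrimeMean_dirichletCharacter : HasPrimeMean (fun n => η n) (poleOrder η) := by
  have hη : ∀ n : ℕ, ‖η n‖ ≤ 1 := fun n => η.norm_le_one n
  have hδ := norm_poleOrder_le_one η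
  obtain ⟨C, hC⟩ := exists_norm_deriv_primeErrorTransform_le η
  have hint := integrableOn_norm_div_sq_Ioi (measurable_primeError (fun n => η n) (poleOrder η))
    (fun t ht => norm_primeError_le hη hδ (one_pos.trans ht).le) (κ := 3 / 4) (by norm_num)
    fun s hs hs2 => by
      have heq : tailMellin (primeError (fun n => η n) (poleOrder η)) =ᶠ[𝓝 s]
          primeErrorTransform η := by
        filter_upwards [(isOpen_lt continuous_const continuous_re).mem_nhds hs] with z hz
        exact tailMellin_primeError_dirichletCharacter η hz
      rw [heq.deriv_eq]
      exact hC s hs hs2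
  exact exists_sum_norm_div_le hint (fun t ht => norm_primeError_le hη hδ (zero_le_one.trans ht))
    (fun y z _ hyz => norm_primeError_sub_le hη hδ hyz)
    (fun t ht => add_nonneg (Chebyshev.psi_nonneg t) (zero_le_one.trans ht))
    (B := Real.log 4 + 5) fun t ht => by
      linarith [Chebyshev.psi_le_const_mul_self (zero_le_one.trans ht)]

end PrimeMeans

section PrimeMeanCalculus

open ArithmeticFunction (vonMangoldt)
open Chebyshev (psi theta)

variable {a b : ℕ → ℂ} {δ ε : ℂ}

theorem sum_one_div_sqrt_le (N : ℕ) : ∑ n ∈ Finset.Icc 1 N, 1 / √(n : ℝ) ≤ 2 * √N := by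
  induction N with
  | zero => simp
  | succ N ih =>
    rw [Finset.sum_Icc_succ_top (Nat.le_add_left 1 N)]
    have hpos : 0 < √((N + 1 : ℕ) : ℝ) := Real.sqrt_pos.2 (by positivity)
    have hstep : 1 / √((N + 1 : ℕ) : ℝ) ≤ 2 * √((N + 1 : ℕ) : ℝ) - 2 * √(N : ℝ) := by
      rw [div_le_iff₀ hpos]
      have hsq := Real.sq_sqrt (N.cast_nonneg (α := ℝ))
      have hsq' := Real.sq_sqrt ((N + 1).cast_nonneg (α := ℝ))
      push_cast at hsq' ⊢
      nlinarith [sq_nonneg (√((N : ℝ) + 1) - √(N : ℝ))]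
    linarith

theorem sum_sqrt_div_le {x : ℝ} (hx : 0 ≤ x) :
    ∑ n ∈ Finset.Icc 1 ⌊x⌋₊, √(x / n) ≤ 2 * x :=
  calc ∑ n ∈ Finset.Icc 1 ⌊x⌋₊, √(x / n) = √x * ∑ n ∈ Finset.Icc 1 ⌊x⌋₊, 1 / √(n : ℝ) := by
        simp only [Real.sqrt_div hx, Finset.mul_sum, mul_one_div]
    _ ≤ √x * (2 * √x) := by
        gcongr
        exact (sum_one_div_sqrt_le _).trans (by gcongr; exact Nat.floor_le hx)
    _ = 2 * x := by rw [mul_left_comm, Real.mul_self_sqrt hx]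

theorem norm_weightedPsi_sub_le {M : ℝ} (hprime : ∀ p, p.Prime → a p = b p)
    (hM : ∀ n, ‖a n - b n‖ ≤ M) (x : ℝ) :
    ‖weightedPsi a x - weightedPsi b x‖ ≤ M * (psi x - theta x) := by
  rw [Chebyshev.psi_sub_theta_eq_sum_not_prime, Finset.sum_filter, Finset.mul_sum, weightedPsi,
    weightedPsi, ← Finset.sum_sub_distrib]
  refine norm_sum_le_of_le _ fun n _ => ?_
  rw [← sub_mul]
  split_ifs with hn
  · simp [hprime n hn]
  · rw [norm_mul, norm_real, Real.norm_of_nonneg ArithmeticFunction.vonMangoldt_nonneg]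
    exact mul_le_mul_of_nonneg_right (hM n) ArithmeticFunction.vonMangoldt_nonneg

namespace HasPrimeMean

theorem sub (ha : HasPrimeMean a δ) (hb : HasPrimeMean b ε) :
    HasPrimeMean (fun n => a n - b n) (δ - ε) := by
  obtain ⟨C, hC⟩ := ha
  obtain ⟨D, hD⟩ := hb
  have herr : ∀ x, primeError (fun n => a n - b n) (δ - ε) x =
      primeError a δ x - primeError b ε x := fun x => by
    simp only [primeError, weightedPsi, sub_mul, Finset.sum_sub_distrib]
    ring
  refine ⟨C + D, fun x hx => ?_⟩
  calc ∑ n ∈ Finset.Icc 1 ⌊x⌋₊, ‖primeError (fun n => a n - b n) (δ - ε) (x / n)‖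
      ≤ ∑ n ∈ Finset.Icc 1 ⌊x⌋₊, (‖primeError a δ (x / n)‖ + ‖primeError b ε (x / n)‖) :=
        Finset.sum_le_sum fun n _ => by rw [herr]; exact norm_sub_le _ _
    _ ≤ (C + D) * x := by
        rw [Finset.sum_add_distrib]
        linarith [hC x hx, hD x hx]

theorem const_mul (c : ℂ) (ha : HasPrimeMean a δ) : HasPrimeMean (fun n => c * a n) (c * δ) := by
  obtain ⟨C, hC⟩ := ha
  have herr : ∀ x, primeError (fun n => c * a n) (c * δ) x = c * primeError a δ x := fun x => by
    simp only [primeError, weightedPsi, mul_sub, Finset.mul_sum, mul_assoc]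
  refine ⟨‖c‖ * C, fun x hx => ?_⟩
  simp only [herr, norm_mul, ← Finset.mul_sum, mul_assoc]
  exact mul_le_mul_of_nonneg_left (hC x hx) (norm_nonneg c)

-- The proper prime powers up to `y` contribute `O(√y)`, and `∑ n ≤ x, √(x / n) = O(x)`.
theorem congr_primes {M : ℝ} (ha : HasPrimeMean a δ) (hprime : ∀ p, p.Prime → b p = a p)
    (hM : ∀ n, ‖b n - a n‖ ≤ M) : HasPrimeMean b δ := by
  obtain ⟨C, hC⟩ := ha
  obtain ⟨D, hD⟩ := Chebyshev.psi_sub_theta_le_mul_sqrt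
  have hM0 : 0 ≤ M := (norm_nonneg _).trans (hM 0)
  have hD0 : 0 ≤ D := by
    simpa using (sub_nonneg.2 (Chebyshev.theta_le_psi 1)).trans (hD 1)
  have herr : ∀ x, ‖primeError b δ x‖ ≤ ‖primeError a δ x‖ + M * D * √x := fun x =>
    calc ‖primeError b δ x‖ = ‖primeError a δ x + (weightedPsi b x - weightedPsi a x)‖ := by
          simp only [primeError]
          ring_nf
      _ ≤ ‖primeError a δ x‖ + M * (psi x - theta x) :=
          norm_add_le_of_le le_rfl (norm_weightedPsi_sub_le hprime hM x)
      _ ≤ ‖primeError a δ x‖ + M * D * √x := by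
          rw [mul_assoc]
          gcongr
          exact hD x
  refine ⟨C + M * D * 2, fun x hx => ?_⟩
  calc ∑ n ∈ Finset.Icc 1 ⌊x⌋₊, ‖primeError b δ (x / n)‖
      ≤ ∑ n ∈ Finset.Icc 1 ⌊x⌋₊, (‖primeError a δ (x / n)‖ + M * D * √(x / n)) :=
        Finset.sum_le_sum fun n _ => herr _
    _ = (∑ n ∈ Finset.Icc 1 ⌊x⌋₊, ‖primeError a δ (x / n)‖) +
          M * D * ∑ n ∈ Finset.Icc 1 ⌊x⌋₊, √(x / n) := by
        rw [Finset.sum_add_distrib, Finset.mul_sum]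
    _ ≤ C * x + M * D * (2 * x) := by
        gcongr
        exacts [hC x hx, sum_sqrt_div_le (zero_le_one.trans hx)]
    _ = (C + M * D * 2) * x := by ring

end HasPrimeMean

end PrimeMeanCalculus

section CompletelyMultiplicative

open ArithmeticFunction (vonMangoldt)

variable {f : ℕ →*₀ ℂ} {δ : ℂ}

/-- A completely multiplicative function as an element of the Dirichlet convolution ring. -/
def completelyMultiplicative (f : ℕ →*₀ ℂ) : ArithmeticFunction ℂ := ⟨f, map_zero f⟩

theorem isMultiplicative_completelyMultiplicative (f : ℕ →*₀ ℂ) :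
    (completelyMultiplicative f).IsMultiplicative :=
  ⟨map_one f, fun _ => map_mul f _ _⟩

theorem sum_divisorsAntidiagonal_mul_vonMangoldt (f : ℕ →*₀ ℂ) (n : ℕ) :
    ∑ x ∈ n.divisorsAntidiagonal, f x.1 * (f x.2 * (vonMangoldt x.2 : ℂ)) = f n * Real.log n :=
  calc ∑ x ∈ n.divisorsAntidiagonal, f x.1 * (f x.2 * (vonMangoldt x.2 : ℂ))
      = ∑ x ∈ n.divisorsAntidiagonal, f n * (vonMangoldt x.2 : ℂ) :=
        Finset.sum_congr rfl fun x hx => by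
          rw [← mul_assoc, ← map_mul, (Nat.mem_divisorsAntidiagonal.1 hx).1]
    _ = f n * Real.log n := by
        rw [← Finset.mul_sum, Nat.sum_divisorsAntidiagonal' (f := fun _ d => (vonMangoldt d : ℂ)),
          ← ofReal_sum, ArithmeticFunction.vonMangoldt_sum]

theorem sum_mul_log_eq_sum_mul_weightedPsi (f : ℕ →*₀ ℂ) (x : ℝ) :
    ∑ n ∈ Finset.Icc 1 ⌊x⌋₊, f n * Real.log n =
      ∑ m ∈ Finset.Icc 1 ⌊x⌋₊, f m * weightedPsi f (x / m) := by
  have hconv := ArithmeticFunction.sum_Ioc_mul_eq_sum_sum (completelyMultiplicative f)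
    ⟨fun n => f n * (vonMangoldt n : ℂ), by simp⟩ ⌊x⌋₊
  simp only [← Nat.floor_div_natCast] at hconv
  exact (Finset.sum_congr rfl fun n _ =>
    (sum_divisorsAntidiagonal_mul_vonMangoldt f n).symm).trans hconv

theorem norm_sum_mul_log_div_le (hf : ∀ n, ‖f n‖ ≤ 1) {x : ℝ} (hx : 0 ≤ x) :
    ‖∑ n ∈ Finset.Icc 1 ⌊x⌋₊, f n * Real.log (x / n)‖ ≤ 4 * x :=
  calc ‖∑ n ∈ Finset.Icc 1 ⌊x⌋₊, f n * Real.log (x / n)‖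
      ≤ ∑ n ∈ Finset.Icc 1 ⌊x⌋₊, 2 * √(x / n) := by
        refine norm_sum_le_of_le _ fun n hn => ?_
        obtain ⟨hn1, hnx⟩ := Finset.mem_Icc.1 hn
        have hlog : 0 ≤ Real.log (x / n) :=
          Real.log_nonneg ((one_le_div (by positivity)).2 ((Nat.le_floor_iff hx).1 hnx))
        have hlog_le := Real.log_le_rpow_div (div_nonneg hx n.cast_nonneg) one_half_pos
        rw [← Real.sqrt_eq_rpow] at hlog_le
        rw [norm_mul, norm_real, Real.norm_of_nonneg hlog]
        linarith [mul_le_of_le_one_left hlog (hf n)]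
    _ ≤ 4 * x := by
        rw [← Finset.mul_sum]
        linarith [sum_sqrt_div_le hx]

theorem sum_mul_log_eq_add (f : ℕ → ℂ) {x : ℝ} (hx : 0 < x) :
    (∑ n ∈ Finset.Icc 1 ⌊x⌋₊, f n) * Real.log x =
      ∑ n ∈ Finset.Icc 1 ⌊x⌋₊, f n * Real.log n +
        ∑ n ∈ Finset.Icc 1 ⌊x⌋₊, f n * Real.log (x / n) := by
  rw [← Finset.sum_add_distrib, Finset.sum_mul]
  refine Finset.sum_congr rfl fun n hn => ?_
  rw [Real.log_div hx.ne' (Nat.cast_ne_zero.2 (Nat.one_le_iff_ne_zero.1 (Finset.mem_Icc.1 hn).1))]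
  push_cast
  ring

theorem HasPrimeMean.exists_norm_sum_mul_log_le (hδ : HasPrimeMean f δ) (hf : ∀ n, ‖f n‖ ≤ 1)
    {B : ℝ} (hB : ∀ N : ℕ, ‖δ * ∑ n ∈ Finset.Icc 1 N, f n / n‖ ≤ B) :
    ∃ C : ℝ, ∀ x : ℝ, 1 ≤ x → ‖∑ n ∈ Finset.Icc 1 ⌊x⌋₊, f n * Real.log n‖ ≤ C * x := by
  obtain ⟨C, hC⟩ := hδ
  refine ⟨C + B, fun x hx => ?_⟩
  have hsplit : ∑ n ∈ Finset.Icc 1 ⌊x⌋₊, f n * Real.log n =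
      ∑ m ∈ Finset.Icc 1 ⌊x⌋₊, f m * primeError f δ (x / m) +
        (δ * ∑ m ∈ Finset.Icc 1 ⌊x⌋₊, f m / m) * x := by
    rw [sum_mul_log_eq_sum_mul_weightedPsi, Finset.mul_sum, Finset.sum_mul,
      ← Finset.sum_add_distrib]
    refine Finset.sum_congr rfl fun m _ => ?_
    rw [primeError]
    push_cast
    ring
  have herr : ‖∑ m ∈ Finset.Icc 1 ⌊x⌋₊, f m * primeError f δ (x / m)‖ ≤ C * x :=
    (norm_sum_le_of_le _ fun m _ => by
      rw [norm_mul]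
      exact mul_le_of_le_one_left (norm_nonneg _) (hf m)).trans (hC x hx)
  have hmain : ‖(δ * ∑ m ∈ Finset.Icc 1 ⌊x⌋₊, f m / m) * x‖ ≤ B * x := by
    rw [norm_mul, norm_real, Real.norm_of_nonneg (zero_le_one.trans hx)]
    exact mul_le_mul_of_nonneg_right (hB _) (zero_le_one.trans hx)
  rw [hsplit, add_mul]
  exact norm_add_le_of_le herr hmain

theorem HasPrimeMean.exists_norm_sum_le (hδ : HasPrimeMean f δ) (hf : ∀ n, ‖f n‖ ≤ 1)
    {B : ℝ} (hB : ∀ N : ℕ, ‖δ * ∑ n ∈ Finset.Icc 1 N, f n / n‖ ≤ B) :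
    ∃ C : ℝ, 0 < C ∧ ∀ x : ℝ, 2 ≤ x →
      ‖∑ n ∈ Finset.Icc 1 ⌊x⌋₊, f n‖ ≤ C * x / Real.log x := by
  obtain ⟨C, hC⟩ := hδ.exists_norm_sum_mul_log_le hf hB
  have hC0 : 0 ≤ C := by simpa using (norm_nonneg _).trans (hC 1 le_rfl)
  refine ⟨C + 4, by positivity, fun x hx => ?_⟩
  have hx0 : 0 < x := by linarith
  have hlog : 0 < Real.log x := Real.log_pos (by linarith)
  rw [le_div_iff₀ hlog]
  calc ‖∑ n ∈ Finset.Icc 1 ⌊x⌋₊, f n‖ * Real.log x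
      = ‖(∑ n ∈ Finset.Icc 1 ⌊x⌋₊, f n) * Real.log x‖ := by
        rw [norm_mul, norm_real, Real.norm_of_nonneg hlog.le]
    _ ≤ C * x + 4 * x := by
        rw [sum_mul_log_eq_add _ hx0]
        exact norm_add_le_of_le (hC x (by linarith)) (norm_sum_mul_log_div_le hf hx0.le)
    _ = (C + 4) * x := by ring

theorem norm_completelyMultiplicative_mul_zeta_le_one
    (hf : ∀ p, p.Prime → f p = 0 ∨ f p = -1) (n : ℕ) :
    ‖(completelyMultiplicative f * (ArithmeticFunction.zeta : ArithmeticFunction ℂ)) n‖ ≤ 1 := by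
  have hmult := (isMultiplicative_completelyMultiplicative f).mul
    (ArithmeticFunction.isMultiplicative_zeta.natCast (R := ℂ))
  induction n using Nat.recOnPosPrimePosCoprime with
  | zero => simp
  | one => simp [hmult.1]
  | prime_pow p k hp _ =>
    have hvalue : ∀ n, completelyMultiplicative f n = f n := fun _ => rfl
    rw [ArithmeticFunction.coe_mul_zeta_apply, Nat.sum_divisors_prime_pow hp]
    simp only [hvalue, map_pow]
    rcases hf p hp with hp0 | hp1
    · simp [hp0, zero_pow_eq]
    · rw [hp1, neg_one_geom_sum]
      split_ifs <;> simp
  | coprime m n _ _ hmn ihm ihn =>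
    rw [hmult.map_mul_of_coprime hmn, norm_mul]
    exact mul_le_one₀ ihm (norm_nonneg _) ihn

-- `∑ n ≤ N, f n * ⌊N / n⌋` is a sum of `N` values of `f * 1`, hence bounded by `N`.
theorem norm_sum_div_le_two (hf : ∀ n, ‖f n‖ ≤ 1) (hprime : ∀ p, p.Prime → f p = 0 ∨ f p = -1)
    (N : ℕ) : ‖∑ n ∈ Finset.Icc 1 N, f n / n‖ ≤ 2 := by
  rcases N.eq_zero_or_pos with rfl | hN
  · simp
  have hfloor : ‖∑ n ∈ Finset.Icc 1 N, f n * ((N / n : ℕ) : ℂ)‖ ≤ N := by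
    have hconv := ArithmeticFunction.sum_Ioc_mul_zeta_eq_sum (completelyMultiplicative f) N
    change ‖∑ n ∈ Finset.Ioc 0 N, completelyMultiplicative f n * ((N / n : ℕ) : ℂ)‖ ≤ N
    rw [← hconv]
    simpa using norm_sum_le_of_le (Finset.Ioc 0 N) fun n _ =>
      norm_completelyMultiplicative_mul_zeta_le_one hprime n
  have hfract : ‖∑ n ∈ Finset.Icc 1 N, f n * ((N / n : ℂ) - (N / n : ℕ))‖ ≤ N := by
    have hterm : ∀ n ∈ Finset.Icc 1 N, ‖f n * ((N / n : ℂ) - (N / n : ℕ))‖ ≤ 1 := fun n _ => by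
      have hcast : (N / n : ℂ) - (N / n : ℕ) = ((N / n - ⌊(N / n : ℝ)⌋₊ : ℝ) : ℂ) := by
        rw [Nat.floor_div_eq_div]
        push_cast
        rfl
      rw [norm_mul, hcast, norm_real, Real.norm_eq_abs, abs_of_nonneg
        (sub_nonneg.2 (Nat.floor_le (by positivity)))]
      exact mul_le_one₀ (hf n) (sub_nonneg.2 (Nat.floor_le (by positivity)))
        (by linarith [Nat.lt_floor_add_one (N / n : ℝ)])
    simpa using norm_sum_le_of_le _ hterm
  have hsum : (N : ℂ) * ∑ n ∈ Finset.Icc 1 N, f n / n = ∑ n ∈ Finset.Icc 1 N,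
      f n * ((N / n : ℕ) : ℂ) + ∑ n ∈ Finset.Icc 1 N, f n * ((N / n : ℂ) - (N / n : ℕ)) := by
    rw [← Finset.sum_add_distrib, Finset.mul_sum]
    exact Finset.sum_congr rfl fun n _ => by ring
  have hmul : (N : ℝ) * ‖∑ n ∈ Finset.Icc 1 N, f n / n‖ ≤ N * 2 := by
    rw [← norm_natCast N, ← norm_mul, hsum, norm_natCast]
    linarith [norm_add_le_of_le hfloor hfract]
  exact le_of_mul_le_mul_left hmul (Nat.cast_pos.2 hN)

end CompletelyMultiplicative

section QuadraticSieve

variable {q : ℕ}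

/-- The completely multiplicative function that agrees with `χ` at the positive integers all of
whose prime factors satisfy `P`, and vanishes elsewhere. -/
noncomputable def restrictPrimeFactors (χ : DirichletCharacter ℂ q) (P : ℕ → Prop)
    [DecidablePred P] : ℕ →*₀ ℂ where
  toFun n := if n ≠ 0 ∧ ∀ p ∈ n.primeFactors, P p then χ n else 0
  map_zero' := by simp
  map_one' := by simp
  map_mul' m n := by
    rcases eq_or_ne m 0 with rfl | hm
    · simp
    rcases eq_or_ne n 0 with rfl | hn
    · simp
    simp only [Nat.primeFactors_mul hm hn, Finset.mem_union, or_imp, forall_and, mul_ne_zero hm hn,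
      hm, hn, ne_eq, not_false_eq_true, true_and, Nat.cast_mul, map_mul]
    split_ifs <;> simp_all

section

variable (χ : DirichletCharacter ℂ q) (P : ℕ → Prop) [DecidablePred P]

theorem restrictPrimeFactors_apply {n : ℕ} (hn : n ≠ 0) :
    restrictPrimeFactors χ P n = if ∀ p ∈ n.primeFactors, P p then χ n else 0 :=
  if_congr (and_iff_right hn) rfl rfl

theorem restrictPrimeFactors_apply_prime {p : ℕ} (hp : p.Prime) :
    restrictPrimeFactors χ P p = if P p then χ p else 0 := by
  simp [restrictPrimeFactors_apply χ P hp.ne_zero, hp.primeFactors]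

theorem norm_restrictPrimeFactors_le_one (n : ℕ) : ‖restrictPrimeFactors χ P n‖ ≤ 1 := by
  change ‖ite _ _ _‖ ≤ 1
  split_ifs
  · exact χ.norm_le_one n
  · simp

theorem sum_filter_primeFactors (N : ℕ) :
    ∑ n ∈ (Finset.Icc 1 N).filter (fun n => ∀ p ∈ n.primeFactors, P p), χ n =
      ∑ n ∈ Finset.Icc 1 N, restrictPrimeFactors χ P n := by
  rw [Finset.sum_filter]
  exact Finset.sum_congr rfl fun n hn =>
    (restrictPrimeFactors_apply χ P (Nat.one_le_iff_ne_zero.1 (Finset.mem_Icc.1 hn).1)).symm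

end

variable {f : ℕ →*₀ ℂ} {χ ψ : DirichletCharacter ℂ q}

theorem hasPrimeMean_of_eq_half_mul_one_sub [NeZero q] (hf : ∀ n, ‖f n‖ ≤ 1) (hχ : χ ≠ 1)
    (hprime : ∀ p, p.Prime → f p = 1 / 2 * (χ p * (1 - ψ p))) :
    HasPrimeMean f (-(1 / 2 * poleOrder (χ * ψ))) := by
  have hmean := ((hasPrimeMean_dirichletCharacter χ).sub
    (hasPrimeMean_dirichletCharacter (χ * ψ))).const_mul (1 / 2)
  rw [show poleOrder χ = 0 from if_neg hχ, zero_sub, mul_neg] at hmean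
  refine hmean.congr_primes (M := 2) (fun p hp => ?_) fun n => ?_
  · rw [hprime p hp, MulChar.mul_apply]
    ring
  · have hdiff := norm_sub_le_of_le (χ.norm_le_one n) ((χ * ψ).norm_le_one n)
    have hhalf : ‖(1 / 2 : ℂ) * (χ n - (χ * ψ) n)‖ ≤ 1 := by
      rw [norm_mul, norm_div, norm_one, Complex.norm_ofNat]
      linarith
    exact (norm_sub_le_of_le (hf n) hhalf).trans (by norm_num)

theorem eq_zero_or_eq_neg_one_of_mul_eq_one (hψ : ψ.IsQuadratic) (hχψ : χ * ψ = 1)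
    (hprime : ∀ p, p.Prime → f p = 1 / 2 * (χ p * (1 - ψ p))) {p : ℕ} (hp : p.Prime) :
    f p = 0 ∨ f p = -1 := by
  rw [hprime p hp]
  by_cases hunit : IsUnit (p : ZMod q)
  · have hone : χ p * ψ p = 1 := by rw [← MulChar.mul_apply, hχψ, MulChar.one_apply hunit]
    rcases hψ p with h | h | h
    · simp [h] at hone
    · simp [h]
    · right
      rw [h] at hone ⊢
      linear_combination -hone
  · simp [χ.map_nonunit hunit]

theorem exists_norm_sum_le_of_isQuadratic [NeZero q] (hf : ∀ n, ‖f n‖ ≤ 1) (hχ : χ ≠ 1)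
    (hψ : ψ.IsQuadratic) (hprime : ∀ p, p.Prime → f p = 1 / 2 * (χ p * (1 - ψ p))) :
    ∃ C : ℝ, 0 < C ∧ ∀ x : ℝ, 2 ≤ x →
      ‖∑ n ∈ Finset.Icc 1 ⌊x⌋₊, f n‖ ≤ C * x / Real.log x := by
  refine (hasPrimeMean_of_eq_half_mul_one_sub hf hχ hprime).exists_norm_sum_le hf (B := 1)
    fun N => ?_
  by_cases hχψ : χ * ψ = 1
  · have hsum := norm_sum_div_le_two hf
      (fun p => eq_zero_or_eq_neg_one_of_mul_eq_one hψ hχψ hprime) N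
    rw [poleOrder, if_pos hχψ, norm_mul]
    norm_num
    linarith
  · simp [poleOrder, if_neg hχψ]

/-- The non-trivial character modulo `3`. -/
noncomputable def characterModThree : DirichletCharacter ℂ 3 :=
  (quadraticChar (ZMod 3)).ringHomComp (Int.castRingHom ℂ)

theorem isQuadratic_characterModThree : characterModThree.IsQuadratic :=
  (quadraticChar_isQuadratic (ZMod 3)).comp _

theorem characterModThree_natCast_eq_neg_one_iff (n : ℕ) :
    characterModThree n = -1 ↔ n % 3 = 2 := by
  have hvalue : ∀ a : ZMod 3, quadraticChar (ZMod 3) a = -1 ↔ a = 2 := by decide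
  rw [characterModThree, MulChar.ringHomComp_apply, eq_intCast, ← Int.cast_one, ← Int.cast_neg,
    Int.cast_inj, hvalue]
  exact ZMod.natCast_eq_natCast_iff' n 2 3

theorem changeLevel_natCast_of_coprime {m N : ℕ} (hmN : m ∣ N) (χ : DirichletCharacter ℂ m) {n : ℕ}
    (hn : n.Coprime N) : DirichletCharacter.changeLevel hmN χ n = χ n := by
  simpa only [Int.cast_natCast] using
    DirichletCharacter.changeLevel_eq_cast_of_dvd' χ hmN (Nat.isCoprime_iff_coprime.2 hn)

theorem restrictPrimeFactors_apply_prime_eq_half_mul {q m : ℕ} (χ : DirichletCharacter ℂ q)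
    {ψ : DirichletCharacter ℂ m} (hψ : ψ.IsQuadratic) {p : ℕ} (hp : p.Prime) :
    restrictPrimeFactors χ (fun p => ψ p = -1) p =
      1 / 2 * (DirichletCharacter.changeLevel (dvd_mul_right q m) χ p *
        (1 - DirichletCharacter.changeLevel (dvd_mul_left m q) ψ p)) := by
  rw [restrictPrimeFactors_apply_prime χ _ hp]
  by_cases hcop : p.Coprime (q * m)
  · rw [changeLevel_natCast_of_coprime _ χ hcop, changeLevel_natCast_of_coprime _ ψ hcop]
    have hunit : IsUnit (p : ZMod m) := (ZMod.isUnit_iff_coprime p m).2 hcop.coprime_mul_left_right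
    rcases hψ p with h | h | h
    · exact absurd h (hunit.map ψ).ne_zero
    · norm_num [h]
    · rw [if_pos h, h]
      ring
  · rw [MulChar.map_nonunit _ (mt (ZMod.isUnit_iff_coprime p (q * m)).1 hcop), zero_mul, mul_zero,
      ite_eq_right_iff]
    intro hψp
    refine χ.map_nonunit fun hq => hcop (((ZMod.isUnit_iff_coprime p q).1 hq).mul_right ?_)
    by_contra hm
    rw [ψ.map_nonunit (mt (ZMod.isUnit_iff_coprime p m).1 hm)] at hψp
    norm_num at hψp

theorem isQuadratic_changeLevel {m N : ℕ} (hmN : m ∣ N) {ψ : DirichletCharacter ℂ m}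
    (hψ : ψ.IsQuadratic) : (DirichletCharacter.changeLevel hmN ψ).IsQuadratic := by
  rw [MulChar.isQuadratic_iff_sq_eq_one] at hψ ⊢
  rw [← map_pow, hψ, map_one]

end QuadraticSieve

theorem stmt_9_general {q m : ℕ} [NeZero q] [NeZero m] (χ : DirichletCharacter ℂ q) (hχ : χ ≠ 1)
    {ψ : DirichletCharacter ℂ m} (hψ : ψ.IsQuadratic) :
    ∃ C : ℝ, 0 < C ∧ ∀ x : ℝ, 2 ≤ x →
      ‖∑ n ∈ (Finset.Icc 1 ⌊x⌋₊).filter (fun n : ℕ => ∀ p ∈ n.primeFactors, ψ (p : ZMod m) = -1),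
          χ n‖ ≤ C * x / Real.log x := by
  simp only [sum_filter_primeFactors χ (fun p => ψ p = -1)]
  exact exists_norm_sum_le_of_isQuadratic (norm_restrictPrimeFactors_le_one χ _)
    (mt (DirichletCharacter.changeLevel_eq_one_iff (dvd_mul_right q m)).1 hχ)
    (isQuadratic_changeLevel _ hψ)
    fun _ hp => restrictPrimeFactors_apply_prime_eq_half_mul χ hψ hp

/-- For a non-trivial Dirichlet character `χ` modulo 18, the sum of
`χ(n)` over positive integers `n ≤ x` all of whose prime factors are `≡ 2 (mod 3)`
is `O(x/log x)`. -/
theorem stmt_9 (χ : DirichletCharacter ℂ 18) (hχ : χ ≠ 1) :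
    ∃ C : ℝ, 0 < C ∧ ∀ x : ℝ, 2 ≤ x →
      ‖∑ n ∈ (Finset.Icc 1 ⌊x⌋₊).filter (fun n => ∀ p ∈ n.primeFactors, p % 3 = 2),
          χ (n : ZMod 18)‖ ≤ C * x / Real.log x := by
  simpa only [characterModThree_natCast_eq_neg_one_iff] using
    stmt_9_general χ hχ isQuadratic_characterModThree
end

section
/- There exists a constant C > 0 such that for all real B ≥ 3, the number of quadruples (a₀,a₁,a₂,a₃) of positive integers, each at most B, for which there exist positive integers r₀,r₁,r₂,r₃ and b₀,b₁,b₂,b₃, squarefree positive integers u₀₁,u₀₂,u₀₃,u₁₂,u₁₃,u₂₃, and squarefree positive integers v_{ij} for all ordered pairs (i,j) with i ≠ j in {0,1,2,3}, satisfying: a₀ = r₀·b₀³·u₀₁·u₀₂·u₀₃·v₀₁·v₁₀²·v₀₂·v₂₀²·v₀₃·v₃₀², a₁ = r₁·b₁³·u₀₁·u₁₂·u₁₃·v₁₀·v₀₁²·v₁₂·v₂₁²·v₁₃·v₃₁², a₂ = r₂·b₂³·u₀₂·u₁₂·u₂₃·v₂₀·v₀₂²·v₂₁·v₁₂²·v₂₃·v₃₂²,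 a₃ = r₃·b₃³·u₀₃·u₁₃·u₂₃·v₃₀·v₀₃²·v₃₁·v₁₃²·v₃₂·v₂₃², every prime dividing r₀ equals 3, and every prime dividing r₁, r₂ or r₃ is less than 17, is at most C·B²·(log B)². -/
/-!
Write `aᵢ = c i · ∏_{j ≠ i} uᵢⱼ`, with `c i` the contribution of `rᵢ`, `bᵢ` and the `v`'s. Sort the
`u`'s into dyadic boxes `2 ^ kₑ ≤ uₑ < 2 ^ (kₑ + 1)`, one exponent `kₑ` for each edge `e` of
the complete graph on four vertices. As every edge has two ends, such a box contains
`∏ₑ 2 ^ kₑ = ∏ᵢ √2 ^ Kᵢ` points, where `Kᵢ` is the sum of `k` over the edges at `i` and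
`2 ^ Kᵢ ≤ B / c i`. The six exponents are determined by the four sums `Kᵢ` together with two of the
exponents, each of which takes `O(log B)` values. Summing the four geometric series over `Kᵢ` gives
`≪ ∏ᵢ √(B / c i) · (log B) ^ 2` choices of `u` for given `c`. Finally every `v` and every `b` enters
`∏ᵢ c i` to the power three, so `∑ ∏ᵢ (c i) ^ (-1/2)` is bounded by a product of convergent series
`∑ n ^ (-3/2)` and `∑ r ^ (-1/2)`, the latter over numbers with prime factors in a finite set.
-/

open Finset Real

section Analysis

lemma sum_pow_le_of_forall_pow_le {q Y : ℝ} (hq : 1 < q) (hY : 0 ≤ Y) (s : Finset ℕ)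
    (hs : ∀ k ∈ s, q ^ k ≤ Y) : ∑ k ∈ s, q ^ k ≤ q / (q - 1) * Y := by
  have hq₁ : 0 < q - 1 := sub_pos.2 hq
  rcases s.eq_empty_or_nonempty with rfl | hne
  · simpa using mul_nonneg (div_nonneg (by linarith) hq₁.le) hY
  have hsub : s ⊆ range (s.max' hne + 1) := fun k hk ↦
    mem_range.2 (Nat.lt_succ_of_le (s.le_max' k hk))
  calc ∑ k ∈ s, q ^ k ≤ ∑ k ∈ range (s.max' hne + 1), q ^ k :=
        sum_le_sum_of_subset_of_nonneg hsub fun _ _ _ ↦ by positivity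
    _ = (q ^ (s.max' hne + 1) - 1) / (q - 1) := geom_sum_eq hq.ne' _
    _ ≤ q * q ^ s.max' hne / (q - 1) := by
        rw [pow_succ']
        gcongr
        linarith
    _ = q / (q - 1) * q ^ s.max' hne := by ring
    _ ≤ q / (q - 1) * Y := by
        gcongr
        exact hs _ (s.max'_mem hne)

lemma natLog_floor_add_one_le {B : ℝ} (hB : 2 ≤ B) :
    (Nat.log 2 ⌊B⌋₊ : ℝ) + 1 ≤ 2 / log 2 * log B := by
  have hfloor : 0 < ⌊B⌋₊ := Nat.floor_pos.2 (by linarith)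
  have hlog : (Nat.log 2 ⌊B⌋₊ : ℝ) ≤ logb 2 B :=
    (natLog_le_logb _ _).trans <|
      logb_le_logb_of_le one_lt_two (by exact_mod_cast hfloor) (Nat.floor_le (by linarith))
  have hone : 1 ≤ logb 2 B := by
    rw [le_logb_iff_rpow_le one_lt_two (by linarith)]
    simpa using hB
  calc (Nat.log 2 ⌊B⌋₊ : ℝ) + 1 ≤ 2 * logb 2 B := by linarith
    _ = 2 / log 2 * log B := by rw [logb]; ring

lemma summable_prod_apply {ι : Type*} [Fintype ι] {α : ι → Type*} {f : ∀ i, α i → ℝ}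
    (hf₀ : ∀ i x, 0 ≤ f i x) (hf : ∀ i, Summable (f i)) :
    Summable fun x : ∀ i, α i ↦ ∏ i, f i (x i) := by
  classical
  refine summable_of_sum_le (c := ∏ i, ∑' y, f i y) (fun x ↦ prod_nonneg fun i _ ↦ hf₀ i _)
    fun s ↦ ?_
  have hsub : s ⊆ Fintype.piFinset fun i ↦ s.image fun x ↦ x i := fun x hx ↦
    Fintype.mem_piFinset.2 fun i ↦ mem_image_of_mem _ hx
  calc ∑ x ∈ s, ∏ i, f i (x i)
      ≤ ∑ x ∈ Fintype.piFinset fun i ↦ s.image fun x ↦ x i, ∏ i, f i (x i) :=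
        sum_le_sum_of_subset_of_nonneg hsub fun _ _ _ ↦ prod_nonneg fun i _ ↦ hf₀ i _
    _ = ∏ i, ∑ y ∈ s.image fun x ↦ x i, f i y := (prod_univ_sum _ _).symm
    _ ≤ ∏ i, ∑' y, f i y := prod_le_prod (fun i _ ↦ sum_nonneg fun y _ ↦ hf₀ i y)
        fun i _ ↦ (hf i).sum_le_tsum _ fun y _ ↦ hf₀ i y

/-- The completely multiplicative function `n ↦ n ^ σ` on the natural numbers. -/
noncomputable def natRpowHom (σ : ℝ) : ℕ →* ℝ where
  toFun n := (n : ℝ) ^ σ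
  map_one' := by simp
  map_mul' m n := by rw [Nat.cast_mul, mul_rpow m.cast_nonneg n.cast_nonneg]

lemma natRpowHom_nonneg (σ : ℝ) (n : ℕ) : 0 ≤ natRpowHom σ n := rpow_nonneg n.cast_nonneg _

lemma summable_factoredNumbers_natRpowHom (s : Finset ℕ) {σ : ℝ} (hσ : σ < 0) :
    Summable fun n : Nat.factoredNumbers s ↦ natRpowHom σ n := by
  have hlt {p : ℕ} (hp : p.Prime) : ‖natRpowHom σ p‖ < 1 := by
    rw [norm_of_nonneg (natRpowHom_nonneg σ p)]
    exact rpow_lt_one_of_one_lt_of_neg (by exact_mod_cast hp.one_lt) hσ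
  exact (EulerProduct.summable_and_hasSum_factoredNumbers_prod_filter_prime_geometric
    hlt s).1.congr fun n ↦ norm_of_nonneg (natRpowHom_nonneg σ n)

lemma summable_natRpowHom_pow {σ : ℝ} {m : ℕ} (h : σ * m < -1) :
    Summable fun n : ℕ ↦ natRpowHom σ n ^ m :=
  (summable_nat_rpow.2 h).congr fun n ↦ rpow_mul_natCast n.cast_nonneg σ m

end Analysis

section Counting

lemma finite_of_forall_natCast_le {ι : Type*} [Finite ι] {A : Set (ι → ℕ)} {B : ℝ}
    (hA : ∀ a ∈ A, ∀ i, (a i : ℝ) ≤ B) : A.Finite :=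
  (Set.Finite.pi' fun _ ↦ Set.finite_Iic ⌊B⌋₊).subset fun a ha i ↦ Nat.le_floor (hA a ha i)

lemma ncard_le_tsum_of_forall_card_le {α W U : Type*} {S : Set α} (hS : S.Finite)
    {g : W → U → α} (hg : ∀ a ∈ S, ∃ w u, a = g w u) {b : W → ℝ} (hb₀ : ∀ w, 0 ≤ b w)
    (hb : Summable b) (hcard : ∀ w (T : Finset U), (∀ u ∈ T, g w u ∈ S) → (#T : ℝ) ≤ b w) :
    (S.ncard : ℝ) ≤ ∑' w, b w := by
  classical
  obtain ⟨A, rfl⟩ := hS.exists_finset_coe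
  obtain ⟨Q, -, rfl⟩ : ∃ Q : Finset (W × U), (Q : Set (W × U)) ⊆ Set.univ ∧
      (Q.image fun p ↦ g p.1 p.2) = A :=
    subset_set_image_iff.1 fun a ha ↦
      have ⟨w, u, h⟩ := hg a ha
      ⟨(w, u), Set.mem_univ _, h.symm⟩
  have hfiber (w : W) : (#{p ∈ Q | p.1 = w} : ℝ) ≤ b w := by
    have hinj : ∀ p ∈ ({p ∈ Q | p.1 = w} : Finset _), ∀ p' ∈ ({p ∈ Q | p.1 = w} : Finset _),
        p.2 = p'.2 → p = p' := fun p hp p' hp' h ↦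
      Prod.ext ((mem_filter.1 hp).2.trans (mem_filter.1 hp').2.symm) h
    rw [← card_image_of_injOn hinj]
    refine hcard w _ (forall_mem_image.2 fun p hp ↦ ?_)
    obtain ⟨hpQ, rfl⟩ := mem_filter.1 hp
    exact mem_coe.2 (mem_image_of_mem _ hpQ)
  rw [Set.ncard_coe_finset]
  calc _ ≤ (#Q : ℝ) := by exact_mod_cast card_image_le
    _ = ∑ w ∈ Q.image Prod.fst, (#{p ∈ Q | p.1 = w} : ℝ) := by
        exact_mod_cast card_eq_sum_card_image Prod.fst Q
    _ ≤ ∑ w ∈ Q.image Prod.fst, b w := sum_le_sum fun w _ ↦ hfiber w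
    _ ≤ ∑' w, b w := hb.sum_le_tsum _ fun w _ ↦ hb₀ w

lemma card_filter_log_eq_le {ι : Type*} [Fintype ι] {S : Finset (ι → ℕ)}
    (hS : ∀ u ∈ S, ∀ i, u i ≠ 0) (k : ι → ℕ) :
    #{u ∈ S | (fun i ↦ Nat.log 2 (u i)) = k} ≤ ∏ i, 2 ^ k i := by
  classical
  have hsub : {u ∈ S | (fun i ↦ Nat.log 2 (u i)) = k} ⊆
      Fintype.piFinset fun i ↦ Ico (2 ^ k i) (2 ^ (k i + 1)) := by
    intro u hu
    obtain ⟨huS, rfl⟩ := mem_filter.1 hu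
    exact Fintype.mem_piFinset.2 fun i ↦
      mem_Ico.2 ⟨Nat.pow_log_le_self 2 (hS u huS i), Nat.lt_pow_succ_log_self one_lt_two _⟩
  calc _ ≤ _ := card_le_card hsub
    _ = ∏ i, 2 ^ k i := by simp [pow_succ, mul_two]

end Counting

section Incidence

variable {V E : Type*} [Fintype E] [DecidableEq V] {ends : E → Finset V}

/-- The sum of the edge weights `k` over the edges at the vertex `i`. The graph is given by the map
`ends` sending an edge to its set of ends. -/
def vertexSum (ends : E → Finset V) (k : E → ℕ) (i : V) : ℕ := ∑ e with i ∈ ends e, k e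

/-- The product of the edge weights `u` over the edges at the vertex `i`. -/
def vertexProd (ends : E → Finset V) (u : E → ℕ) (i : V) : ℕ := ∏ e with i ∈ ends e, u e

lemma prod_two_pow_eq_prod_sqrt_two_pow_vertexSum [Fintype V] (hends : ∀ e, #(ends e) = 2)
    (k : E → ℕ) : ∏ e, (2 : ℝ) ^ k e = ∏ i, √2 ^ vertexSum ends k i := by
  calc ∏ e, (2 : ℝ) ^ k e = ∏ e, ∏ _i ∈ ends e, √2 ^ k e := by
        simp only [prod_const, hends, pow_right_comm _ _ 2, sq_sqrt zero_le_two]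
    _ = ∏ i, ∏ e with i ∈ ends e, √2 ^ k e := prod_comm' fun e i ↦ by simp
    _ = ∏ i, √2 ^ vertexSum ends k i := by simp only [prod_pow_eq_pow_sum, vertexSum]

lemma two_pow_vertexSum_log_le_vertexProd {u : E → ℕ} (hu : ∀ e, u e ≠ 0) (i : V) :
    2 ^ vertexSum ends (fun e ↦ Nat.log 2 (u e)) i ≤ vertexProd ends u i := by
  rw [vertexSum, vertexProd, ← prod_pow_eq_pow_sum]
  exact prod_le_prod' fun e _ ↦ Nat.pow_log_le_self 2 (hu e)

/-- The ratio `q / (q - 1)` at `q = √2` by which a geometric sum of powers of `√2` exceeds its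
largest term. -/
noncomputable def geomConst : ℝ := √2 / (√2 - 1)

lemma geomConst_pos : 0 < geomConst := div_pos (by positivity) (sub_pos.2 one_lt_sqrt_two)

variable [Fintype V] {F : Finset E}

theorem sum_prod_sqrt_two_pow_vertexSum_le
    (hF : Function.Injective fun k : E → ℕ ↦ (vertexSum ends k, F.restrict k))
    {T : Finset (E → ℕ)} {L : ℕ} {X : V → ℝ} (hL : ∀ k ∈ T, ∀ e ∈ F, k e ≤ L)
    (hX : ∀ k ∈ T, ∀ i, 2 ^ vertexSum ends k i ≤ X i) :
    ∑ k ∈ T, ∏ i, √2 ^ vertexSum ends k i ≤ (∏ i, geomConst * √(X i)) * (L + 1) ^ #F := by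
  classical
  let A (i : V) : Finset ℕ := T.image fun k ↦ vertexSum ends k i
  let R : Finset (F → ℕ) := Fintype.piFinset fun _ ↦ range (L + 1)
  have hsub : T.image (fun k ↦ (vertexSum ends k, F.restrict k)) ⊆ Fintype.piFinset A ×ˢ R := by
    refine image_subset_iff.2 fun k hk ↦ mem_product.2 ⟨?_, ?_⟩
    · exact Fintype.mem_piFinset.2 fun i ↦ mem_image_of_mem _ hk
    · exact Fintype.mem_piFinset.2 fun e ↦ mem_range.2 (Nat.lt_succ_of_le (hL k hk e e.2))
  have hgeom (i : V) : ∑ n ∈ A i, √2 ^ n ≤ geomConst * √(X i) := by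
    refine sum_pow_le_of_forall_pow_le one_lt_sqrt_two (sqrt_nonneg _) _ fun n hn ↦ ?_
    obtain ⟨k, hk, rfl⟩ := mem_image.1 hn
    refine le_sqrt_of_sq_le ?_
    rw [pow_right_comm, sq_sqrt zero_le_two]
    exact hX k hk i
  calc ∑ k ∈ T, ∏ i, √2 ^ vertexSum ends k i
      = ∑ x ∈ T.image fun k ↦ (vertexSum ends k, F.restrict k), ∏ i, √2 ^ x.1 i := by
        rw [sum_image hF.injOn]
    _ ≤ ∑ x ∈ Fintype.piFinset A ×ˢ R, ∏ i, √2 ^ x.1 i :=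
        sum_le_sum_of_subset_of_nonneg hsub fun _ _ _ ↦ by positivity
    _ = (∏ i, ∑ n ∈ A i, √2 ^ n) * (L + 1) ^ #F := by
        simp [sum_product, ← mul_sum, mul_comm, prod_univ_sum, R]
    _ ≤ (∏ i, geomConst * √(X i)) * (L + 1) ^ #F := by
        gcongr with i
        exact hgeom i

theorem card_le_of_vertexProd_le (hends : ∀ e, #(ends e) = 2)
    (hF : Function.Injective fun k : E → ℕ ↦ (vertexSum ends k, F.restrict k))
    {S : Finset (E → ℕ)} {N : ℕ} {X : V → ℝ} (hS : ∀ u ∈ S, ∀ e, u e ≠ 0)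
    (hN : ∀ u ∈ S, ∀ e ∈ F, u e ≤ N) (hX : ∀ u ∈ S, ∀ i, (vertexProd ends u i : ℝ) ≤ X i) :
    (#S : ℝ) ≤ (∏ i, geomConst * √(X i)) * (Nat.log 2 N + 1) ^ #F := by
  classical
  let dyadic (u : E → ℕ) (e : E) : ℕ := Nat.log 2 (u e)
  have hbox (k : E → ℕ) : (#{u ∈ S | dyadic u = k} : ℝ) ≤ ∏ i, √2 ^ vertexSum ends k i := by
    rw [← prod_two_pow_eq_prod_sqrt_two_pow_vertexSum hends]
    exact_mod_cast card_filter_log_eq_le hS k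
  calc (#S : ℝ) = ∑ k ∈ S.image dyadic, (#{u ∈ S | dyadic u = k} : ℝ) := by
        exact_mod_cast card_eq_sum_card_image dyadic S
    _ ≤ ∑ k ∈ S.image dyadic, ∏ i, √2 ^ vertexSum ends k i := sum_le_sum fun k _ ↦ hbox k
    _ ≤ _ := by
        refine sum_prod_sqrt_two_pow_vertexSum_le hF
          (forall_mem_image.2 fun u hu e he ↦ Nat.log_mono_right (hN u hu e he))
          (forall_mem_image.2 fun u hu i ↦ (hX u hu i).trans' ?_)
        exact_mod_cast two_pow_vertexSum_log_le_vertexProd (hS u hu) i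

theorem card_le_of_mul_vertexProd_le (hends : ∀ e, #(ends e) = 2)
    (hF : Function.Injective fun k : E → ℕ ↦ (vertexSum ends k, F.restrict k))
    {S : Finset (E → ℕ)} {c : V → ℕ} {B : ℝ} (hpos : ∀ u ∈ S, ∀ i, 0 < c i * vertexProd ends u i)
    (hle : ∀ u ∈ S, ∀ i, (c i * vertexProd ends u i : ℕ) ≤ B) :
    (#S : ℝ) ≤
      (∏ i, (√(c i))⁻¹) * (geomConst * √B) ^ Fintype.card V * (Nat.log 2 ⌊B⌋₊ + 1) ^ #F := by
  have hdvd (u : E → ℕ) (e : E) : ∃ i, u e ∣ c i * vertexProd ends u i := by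
    obtain ⟨i, hi⟩ := card_pos.1 (hends e ▸ two_pos)
    exact ⟨i, (dvd_prod_of_mem u (mem_filter.2 ⟨mem_univ e, hi⟩)).mul_left _⟩
  have hu₀ : ∀ u ∈ S, ∀ e, u e ≠ 0 := fun u hu e ↦
    have ⟨i, hi⟩ := hdvd u e
    ne_zero_of_dvd_ne_zero (hpos u hu i).ne' hi
  have huB : ∀ u ∈ S, ∀ e ∈ F, u e ≤ ⌊B⌋₊ := fun u hu e _ ↦
    have ⟨i, hi⟩ := hdvd u e
    (Nat.le_of_dvd (hpos u hu i) hi).trans (Nat.le_floor (hle u hu i))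
  have hX : ∀ u ∈ S, ∀ i, (vertexProd ends u i : ℝ) ≤ B / c i := fun u hu i ↦ by
    rw [le_div_iff₀' (by exact_mod_cast Nat.pos_of_mul_pos_right (hpos u hu i))]
    exact_mod_cast hle u hu i
  refine (card_le_of_vertexProd_le hends hF hu₀ huB hX).trans_eq ?_
  simp only [sqrt_div' B (Nat.cast_nonneg _), div_eq_mul_inv _ (√_), prod_mul_distrib,
    prod_const, card_univ]
  ring

theorem ncard_mul_vertexProd_le {W : Type*} (hends : ∀ e, #(ends e) = 2)
    (hF : Function.Injective fun k : E → ℕ ↦ (vertexSum ends k, F.restrict k)) {c : W → V → ℕ}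
    (hc : Summable fun w ↦ ∏ i, (√(c w i))⁻¹) (B : ℝ) :
    ({a : V → ℕ | (∀ i, 0 < a i ∧ (a i : ℝ) ≤ B) ∧
        ∃ w u, a = fun i ↦ c w i * vertexProd ends u i}.ncard : ℝ) ≤
      (∑' w, ∏ i, (√(c w i))⁻¹) * (geomConst * √B) ^ Fintype.card V *
        (Nat.log 2 ⌊B⌋₊ + 1) ^ #F := by
  have := geomConst_pos
  have hsum := (hc.mul_right ((geomConst * √B) ^ Fintype.card V)).mul_right
    (((Nat.log 2 ⌊B⌋₊ : ℝ) + 1) ^ #F)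
  rw [← tsum_mul_right, ← tsum_mul_right]
  exact ncard_le_tsum_of_forall_card_le (finite_of_forall_natCast_le fun a ha i ↦ (ha.1 i).2)
    (fun a ha ↦ ha.2) (fun w ↦ by positivity) hsum fun w S hS ↦
      card_le_of_mul_vertexProd_le hends hF (fun u hu i ↦ ((hS u hu).1 i).1)
        fun u hu i ↦ ((hS u hu).1 i).2

end Incidence

section Coefficients

variable {V : Type*} [Fintype V]

/-- The part `rᵢ bᵢ³ ∏_{j ≠ i} vᵢⱼ vⱼᵢ²` of `aᵢ`, where `bᵢ` is encoded as the diagonal entry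
`v i i`: the factor for `j = i` is `bᵢ · bᵢ²`. -/
def vertexCoeff (r : V → ℕ) (v : V → V → ℕ) (i : V) : ℕ := r i * ∏ j, v i j * v j i ^ 2

lemma prod_vertexCoeff (r : V → ℕ) (v : V → V → ℕ) :
    ∏ i, vertexCoeff r v i = (∏ i, r i) * ∏ i, ∏ j, v i j ^ 3 := by
  have hswap : ∏ i, ∏ j, v j i ^ 2 = ∏ i, ∏ j, v i j ^ 2 := prod_comm
  simp only [vertexCoeff, prod_mul_distrib, hswap, pow_succ' _ 2]

lemma summable_prod_inv_sqrt_vertexCoeff (s : Finset ℕ) :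
    Summable fun w : (V → Nat.factoredNumbers s) × (V → V → ℕ) ↦
      ∏ i, (√(vertexCoeff (fun j ↦ w.1 j) w.2 i))⁻¹ := by
  let f : ℕ →* ℝ := natRpowHom (-(1 / 2))
  have hf₀ : ∀ n, 0 ≤ f n := natRpowHom_nonneg _
  have hf₃ : ∀ n, 0 ≤ f n ^ 3 := fun n ↦ pow_nonneg (hf₀ n) 3
  have hsqrt (n : ℕ) : (√n)⁻¹ = f n := by
    rw [sqrt_eq_rpow, ← rpow_neg n.cast_nonneg]
    rfl
  have hf_factored : Summable fun n : Nat.factoredNumbers s ↦ f n :=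
    summable_factoredNumbers_natRpowHom s (by norm_num)
  have hf_cube : Summable fun n ↦ f n ^ 3 :=
    summable_natRpowHom_pow (by norm_num)
  have hr : Summable fun r : V → Nat.factoredNumbers s ↦ ∏ i, f (r i) :=
    summable_prod_apply (f := fun _ (n : Nat.factoredNumbers s) ↦ f n) (fun _ n ↦ hf₀ n)
      fun _ ↦ hf_factored
  have hrow : Summable fun x : V → ℕ ↦ ∏ j, f (x j) ^ 3 :=
    summable_prod_apply (f := fun _ n ↦ f n ^ 3) (fun _ ↦ hf₃) fun _ ↦ hf_cube
  have hv : Summable fun v : V → V → ℕ ↦ ∏ i, ∏ j, f (v i j) ^ 3 :=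
    summable_prod_apply (f := fun _ (x : V → ℕ) ↦ ∏ j, f (x j) ^ 3)
      (fun _ x ↦ prod_nonneg fun j _ ↦ hf₃ (x j)) fun _ ↦ hrow
  have hrv := hr.mul_of_nonneg hv (fun r ↦ prod_nonneg fun i _ ↦ hf₀ (r i)) fun v ↦
    prod_nonneg fun i _ ↦ prod_nonneg fun j _ ↦ hf₃ (v i j)
  refine hrv.congr fun w ↦ ?_
  simp only [hsqrt, ← map_prod, prod_vertexCoeff, map_mul, ← map_pow]

end Coefficients

theorem stmt_11_general {V E : Type*} [Fintype V] [Fintype E] [DecidableEq V]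
    {ends : E → Finset V} (hends : ∀ e, #(ends e) = 2) {F : Finset E}
    (hF : Function.Injective fun k : E → ℕ ↦ (vertexSum ends k, F.restrict k)) (s : Finset ℕ) :
    ∃ C : ℝ, 0 < C ∧ ∀ B : ℝ, 2 ≤ B →
      ({a : V → ℕ | (∀ i, 0 < a i ∧ (a i : ℝ) ≤ B) ∧
          ∃ (r : V → ℕ) (v : V → V → ℕ) (u : E → ℕ), (∀ i, r i ∈ Nat.factoredNumbers s) ∧
            a = fun i ↦ vertexCoeff r v i * vertexProd ends u i}.ncard : ℝ) ≤
        C * √B ^ Fintype.card V * log B ^ #F := by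
  let c (w : (V → Nat.factoredNumbers s) × (V → V → ℕ)) : V → ℕ :=
    vertexCoeff (fun i ↦ w.1 i) w.2
  set T : ℝ := ∑' w, ∏ i, (√(c w i))⁻¹
  have : 0 ≤ T := tsum_nonneg fun w ↦ by positivity
  have := geomConst_pos
  refine ⟨(T + 1) * geomConst ^ Fintype.card V * (2 / log 2) ^ #F, by positivity, fun B hB ↦ ?_⟩
  calc _ ≤ T * (geomConst * √B) ^ Fintype.card V * (Nat.log 2 ⌊B⌋₊ + 1) ^ #F := by
        convert ncard_mul_vertexProd_le hends hF (summable_prod_inv_sqrt_vertexCoeff s) B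
          using 5 with a
        refine and_congr_right fun _ ↦ ⟨?_, ?_⟩
        · rintro ⟨r, v, u, hr, rfl⟩
          exact ⟨(fun i ↦ ⟨r i, hr i⟩, v), u, rfl⟩
        · rintro ⟨w, u, rfl⟩
          exact ⟨fun i ↦ w.1 i, w.2, u, fun i ↦ (w.1 i).2, rfl⟩
    _ ≤ (T + 1) * (geomConst * √B) ^ Fintype.card V * (2 / log 2 * log B) ^ #F := by
        gcongr
        · linarith
        · exact natLog_floor_add_one_le hB
    _ = _ := by ring

section CompleteGraph

/-- The edges of the complete graph on four vertices, in the order `01, 02, 03, 12, 13, 23`. -/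
def k4Ends : Fin 6 → Finset (Fin 4) := ![{0, 1}, {0, 2}, {0, 3}, {1, 2}, {1, 3}, {2, 3}]

lemma card_k4Ends (e : Fin 6) : #(k4Ends e) = 2 := by
  fin_cases e <;> rfl

lemma vertexSum_k4Ends (k : Fin 6 → ℕ) :
    vertexSum k4Ends k = ![k 0 + k 1 + k 2, k 0 + k 3 + k 4, k 1 + k 3 + k 5, k 2 + k 4 + k 5] := by
  funext i
  fin_cases i <;> rw [vertexSum, sum_filter] <;> simp [k4Ends, Fin.sum_univ_six]

lemma vertexProd_k4Ends (u : Fin 6 → ℕ) :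
    vertexProd k4Ends u =
      ![u 0 * u 1 * u 2, u 0 * u 3 * u 4, u 1 * u 3 * u 5, u 2 * u 4 * u 5] := by
  funext i
  fin_cases i <;> rw [vertexProd, prod_filter] <;> simp [k4Ends, Fin.prod_univ_six]

lemma injective_vertexSum_k4Ends :
    Function.Injective fun k : Fin 6 → ℕ ↦
      (vertexSum k4Ends k, ({0, 1} : Finset (Fin 6)).restrict k) := by
  intro k k' h
  obtain ⟨hsum, hfree⟩ := Prod.ext_iff.1 h
  have h₀ : k 0 = k' 0 := congrFun hfree ⟨0, by simp⟩
  have h₁ : k 1 = k' 1 := congrFun hfree ⟨1, by simp⟩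
  simp only [vertexSum_k4Ends, Matrix.vecCons_inj, and_true] at hsum
  funext e
  fin_cases e <;> simp <;> omega

lemma vertexCoeff_mul_vertexProd_k4Ends (r₀ r₁ r₂ r₃ b₀ b₁ b₂ b₃ v01 v02 v03 v10 v12 v13 v20 v21
    v23 v30 v31 v32 u01 u02 u03 u12 u13 u23 : ℕ) :
    (fun i ↦ vertexCoeff ![r₀, r₁, r₂, r₃]
      ![![b₀, v01, v02, v03], ![v10, b₁, v12, v13], ![v20, v21, b₂, v23], ![v30, v31, v32, b₃]] i *
        vertexProd k4Ends ![u01, u02, u03, u12, u13, u23] i) =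
      ![r₀ * b₀ ^ 3 * u01 * u02 * u03 * v01 * v10 ^ 2 * v02 * v20 ^ 2 * v03 * v30 ^ 2,
        r₁ * b₁ ^ 3 * u01 * u12 * u13 * v10 * v01 ^ 2 * v12 * v21 ^ 2 * v13 * v31 ^ 2,
        r₂ * b₂ ^ 3 * u02 * u12 * u23 * v20 * v02 ^ 2 * v21 * v12 ^ 2 * v23 * v32 ^ 2,
        r₃ * b₃ ^ 3 * u03 * u13 * u23 * v30 * v03 ^ 2 * v31 * v13 ^ 2 * v32 * v23 ^ 2] := by
  funext i
  fin_cases i <;> simp [vertexCoeff, vertexProd_k4Ends, Fin.prod_univ_four] <;> ring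

end CompleteGraph

/-- The number of quadruples `(a₀,a₁,a₂,a₃)` of positive integers at
most `B` admitting the factorizations from Propositions 5.2 and 5.3 of the paper
(with `r₀` a power of 3, primes dividing `r₁r₂r₃` less than 17, `bᵢ` arbitrary,
`u`'s and `v`'s squarefree) is at most `C·B²·(log B)²`. -/
theorem stmt_11 :
    ∃ C : ℝ, 0 < C ∧ ∀ B : ℝ, 3 ≤ B →
      (({t : ℕ × ℕ × ℕ × ℕ |
          0 < t.1 ∧ 0 < t.2.1 ∧ 0 < t.2.2.1 ∧ 0 < t.2.2.2 ∧
          (t.1 : ℝ) ≤ B ∧ (t.2.1 : ℝ) ≤ B ∧ (t.2.2.1 : ℝ) ≤ B ∧ (t.2.2.2 : ℝ) ≤ B ∧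
          ∃ r₀ r₁ r₂ r₃ b₀ b₁ b₂ b₃ u01 u02 u03 u12 u13 u23
            v01 v10 v02 v20 v03 v30 v12 v21 v13 v31 v23 v32 : ℕ,
            0 < r₀ ∧ 0 < r₁ ∧ 0 < r₂ ∧ 0 < r₃ ∧
            0 < b₀ ∧ 0 < b₁ ∧ 0 < b₂ ∧ 0 < b₃ ∧
            Squarefree u01 ∧ Squarefree u02 ∧ Squarefree u03 ∧
            Squarefree u12 ∧ Squarefree u13 ∧ Squarefree u23 ∧
            Squarefree v01 ∧ Squarefree v10 ∧ Squarefree v02 ∧ Squarefree v20 ∧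
            Squarefree v03 ∧ Squarefree v30 ∧ Squarefree v12 ∧ Squarefree v21 ∧
            Squarefree v13 ∧ Squarefree v31 ∧ Squarefree v23 ∧ Squarefree v32 ∧
            t.1 = r₀ * b₀ ^ 3 * u01 * u02 * u03 * v01 * v10 ^ 2 * v02 * v20 ^ 2 *
              v03 * v30 ^ 2 ∧
            t.2.1 = r₁ * b₁ ^ 3 * u01 * u12 * u13 * v10 * v01 ^ 2 * v12 * v21 ^ 2 *
              v13 * v31 ^ 2 ∧
            t.2.2.1 = r₂ * b₂ ^ 3 * u02 * u12 * u23 * v20 * v02 ^ 2 * v21 * v12 ^ 2 *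
              v23 * v32 ^ 2 ∧
            t.2.2.2 = r₃ * b₃ ^ 3 * u03 * u13 * u23 * v30 * v03 ^ 2 * v31 * v13 ^ 2 *
              v32 * v23 ^ 2 ∧
            (∀ p : ℕ, p.Prime → p ∣ r₀ → p = 3) ∧
            (∀ p : ℕ, p.Prime → (p ∣ r₁ ∨ p ∣ r₂ ∨ p ∣ r₃) → p < 17)}.ncard : ℝ)) ≤
        C * B ^ 2 * Real.log B ^ 2 := by
  obtain ⟨C, hC, hcount⟩ := stmt_11_general card_k4Ends injective_vertexSum_k4Ends (range 17)
  refine ⟨C, hC, fun B hB ↦ le_trans ?_ ((hcount B (by linarith)).trans_eq ?_)⟩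
  · refine Nat.cast_le.2 (Set.ncard_le_ncard_of_injOn (fun t ↦ ![t.1, t.2.1, t.2.2.1, t.2.2.2])
      ?_ (fun t _ t' _ h ↦ ?_) (finite_of_forall_natCast_le fun a ha i ↦ (ha.1 i).2))
    · rintro ⟨a₀, a₁, a₂, a₃⟩ ⟨p₀, p₁, p₂, p₃, l₀, l₁, l₂, l₃, r₀, r₁, r₂, r₃, b₀, b₁, b₂, b₃,
        u01, u02, u03, u12, u13, u23, v01, v10, v02, v20, v03, v30, v12, v21, v13, v31, v23, v32,
        -, -, -, -, -, -, -, -, -, -, -, -, -, -, -, -, -, -, -, -, -, -, -, -, -, -,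
        rfl, rfl, rfl, rfl, hr₀, hr⟩
      refine ⟨fun i ↦ ?_, ![r₀, r₁, r₂, r₃], _, _, fun i ↦ Nat.mem_factoredNumbers'.2 ?_,
        (vertexCoeff_mul_vertexProd_k4Ends ..).symm⟩
      · fin_cases i
        exacts [⟨p₀, l₀⟩, ⟨p₁, l₁⟩, ⟨p₂, l₂⟩, ⟨p₃, l₃⟩]
      · fin_cases i
        exacts [fun p hp h ↦ by simp [hr₀ p hp h],
          fun p hp h ↦ mem_range.2 (hr p hp (.inl h)),
          fun p hp h ↦ mem_range.2 (hr p hp (.inr (.inl h))),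
          fun p hp h ↦ mem_range.2 (hr p hp (.inr (.inr h)))]
    · simpa [Prod.ext_iff] using h
  · have : √B ^ 4 = B ^ 2 := by rw [pow_mul (√B) 2 2, sq_sqrt (by linarith)]
    simp [this]
end

section
/- Let a₀ be a fixed nonzero integer. There exists a constant C > 0, depending only on a₀, such that for all real B ≥ 1, the number of triples (a₁,a₂,a₃) of positive integers, each at most B, for which there exist positive integers r₁,r₂,r₃ and b₁,b₂,b₃, squarefree positive integers u₁₂,u₁₃,u₂₃, and squarefree positive integers v_{ij} for all ordered pairs (i,j) with i ≠ j in {1,2,3}, satisfying: a₁ = r₁·b₁³·u₁₂·u₁₃·v₁₂·v₂₁²·v₁₃·v₃₁², a₂ = r₂·b₂³·u₁₂·u₂₃·v₂₁·v₁₂²·v₂₃·v₃₂², a₃ = r₃·b₃³·u₁₃·u₂₃·v₃₁·v₁₃²·v₃₂·v₂₃², and such that every prime dividing r₁, r₂ or r₃ either divides a₀ or is less than 17, is at most C·B^{3/2}. -/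
/-!
After dividing out cofactors `D₁`, `D₂`, `D₃`, a factorization leaves only a triple of the form
`(x y, x z, y z)`, with `x = u₁₂`, `y = u₁₃`, `z = u₂₃`. At most one of `x`, `y`, `z` can be large,
and summing over the two small ones shows that `O(B ^ (3 / 2) / √(D₁ D₂ D₃))` such triples fit in
the box of side `B`. The product `D₁ D₂ D₃` is `r₁ r₂ r₃` times the cube of the product of the `bᵢ`
and `vᵢⱼ`, so the sum of `1 / √(D₁ D₂ D₃)` over all cofactors converges: `∑ n ^ (-3 / 2)` does, and
so does the sum of `1 / √r` over the integers `r` composed of finitely many primes.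
-/

section Counting

variable {α ι : Type*}

theorem ncard_le_tsum_of_subset_iUnion {S : Set α} (hS : S.Finite) {A : ι → Set α} {F : ι → ℝ}
    (hF : Summable F) (hSA : S ⊆ ⋃ i, A i) (hA : ∀ i, ((S ∩ A i).ncard : ℝ) ≤ F i) :
    (S.ncard : ℝ) ≤ ∑' i, F i := by
  classical
  have hF_nonneg (i : ι) : 0 ≤ F i := (Nat.cast_nonneg _).trans (hA i)
  lift S to Finset α using hS
  rcases isEmpty_or_nonempty ι with _ | _
  · simp_all
  have hcover (t : α) (ht : t ∈ S) : ∃ i, t ∈ A i := Set.mem_iUnion.1 (hSA ht)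
  choose! f hf using hcover
  calc ((S : Set α).ncard : ℝ) = ∑ i ∈ S.image f, (({t ∈ S | f t = i}.card : ℕ) : ℝ) := by
        rw [Set.ncard_coe_finset, Finset.card_eq_sum_card_image f S, Nat.cast_sum]
    _ ≤ ∑ i ∈ S.image f, F i := by
        refine Finset.sum_le_sum fun i _ ↦ le_trans ?_ (hA i)
        rw [← Set.ncard_coe_finset]
        refine Nat.cast_le.2 (Set.ncard_le_ncard ?_ (S.finite_toSet.inter_of_left _))
        intro t ht
        obtain ⟨htS, rfl⟩ := Finset.mem_filter.1 ht
        exact ⟨htS, hf t htS⟩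
    _ ≤ ∑' i, F i := hF.sum_le_tsum _ fun i _ ↦ hF_nonneg i

theorem sum_Icc_inv_sqrt_le (N : ℕ) : ∑ n ∈ Finset.Icc 1 N, (√(n : ℝ))⁻¹ ≤ 2 * √(N : ℝ) := by
  induction N with
  | zero => simp
  | succ N ih =>
    rw [Finset.sum_Icc_succ_top (by omega)]
    have hpos : 0 < √((N + 1 : ℕ) : ℝ) := Real.sqrt_pos.2 (by positivity)
    have hsq : √((N + 1 : ℕ) : ℝ) ^ 2 = √(N : ℝ) ^ 2 + 1 := by
      rw [Real.sq_sqrt (by positivity), Real.sq_sqrt (by positivity), Nat.cast_succ]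
    have hinv : (√((N + 1 : ℕ) : ℝ))⁻¹ ≤ 2 * (√((N + 1 : ℕ) : ℝ) - √(N : ℝ)) := by
      rw [inv_le_iff_one_le_mul₀ hpos]
      nlinarith [sq_nonneg (√((N + 1 : ℕ) : ℝ) - √(N : ℝ))]
    linarith

theorem sum_Icc_floor_inv_sqrt_le {b : ℝ} (hb : 0 ≤ b) :
    ∑ n ∈ Finset.Icc 1 ⌊b⌋₊, (√(n : ℝ))⁻¹ ≤ 2 * √b :=
  (sum_Icc_inv_sqrt_le _).trans (by gcongr; exact Nat.floor_le hb)

-- Multiplying the two bounds gives `x² y z ≤ X Y`, hence control of `x` for fixed `y` and `z`.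
theorem le_sqrt_mul_inv_sqrt_mul_inv_sqrt {x y z X Y : ℝ} (hx : 0 ≤ x) (hy : 0 < y) (hz : 0 < z)
    (hX : x * y ≤ X) (hY : x * z ≤ Y) : x ≤ √(X * Y) * (√y)⁻¹ * (√z)⁻¹ := by
  rw [mul_assoc, ← mul_inv, ← Real.sqrt_mul hy.le, ← div_eq_mul_inv, le_div_iff₀ (by positivity)]
  refine Real.le_sqrt_of_sq_le ?_
  rw [mul_pow, Real.sq_sqrt (by positivity)]
  calc x ^ 2 * (y * z) = (x * y) * (x * z) := by ring
    _ ≤ X * Y := mul_le_mul hX hY (by positivity) (le_trans (by positivity) hX)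

theorem card_le_of_mul_le_of_le {T : Finset α} {x y z : α → ℕ}
    (hinj : ∀ t ∈ T, ∀ t' ∈ T, x t = x t' → y t = y t' → z t = z t' → t = t')
    {X Y b c : ℝ} (hb : 0 ≤ b) (hc : 0 ≤ c)
    (hpos : ∀ t ∈ T, 0 < x t ∧ 0 < y t ∧ 0 < z t)
    (hmul : ∀ t ∈ T, (x t * y t : ℝ) ≤ X ∧ (x t * z t : ℝ) ≤ Y)
    (hle : ∀ t ∈ T, (y t : ℝ) ≤ b ∧ (z t : ℝ) ≤ c) :
    (T.card : ℝ) ≤ 4 * √(X * Y * (b * c)) := by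
  let N (y z : ℕ) : ℕ := ⌊√(X * Y) * (√(y : ℝ))⁻¹ * (√(z : ℝ))⁻¹⌋₊
  let cells : Finset (Σ _ : ℕ × ℕ, ℕ) :=
    (Finset.Icc 1 ⌊b⌋₊ ×ˢ Finset.Icc 1 ⌊c⌋₊).sigma fun w ↦ Finset.Icc 1 (N w.1 w.2)
  have hcard : T.card ≤ cells.card := by
    refine Finset.card_le_card_of_injOn (fun t ↦ ⟨(y t, z t), x t⟩) (fun t ht ↦ ?_) ?_
    · obtain ⟨hx₀, hy₀, hz₀⟩ := hpos t ht
      simp only [cells, Finset.mem_coe, Finset.mem_sigma, Finset.mem_product, Finset.mem_Icc]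
      exact ⟨⟨⟨hy₀, Nat.le_floor (hle t ht).1⟩, hz₀, Nat.le_floor (hle t ht).2⟩,
        hx₀, Nat.le_floor (le_sqrt_mul_inv_sqrt_mul_inv_sqrt (by positivity) (by positivity)
          (by positivity) (hmul t ht).1 (hmul t ht).2)⟩
    · intro t ht t' ht' h
      simp only [Sigma.mk.injEq, Prod.mk.injEq, heq_eq_eq] at h
      exact hinj t ht t' ht' h.2 h.1.1 h.1.2
  calc (T.card : ℝ) ≤ ∑ w ∈ Finset.Icc 1 ⌊b⌋₊ ×ˢ Finset.Icc 1 ⌊c⌋₊, (N w.1 w.2 : ℝ) := by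
        refine (Nat.cast_le.2 hcard).trans_eq ?_
        simp [cells]
    _ ≤ ∑ w ∈ Finset.Icc 1 ⌊b⌋₊ ×ˢ Finset.Icc 1 ⌊c⌋₊,
          √(X * Y) * (√(w.1 : ℝ))⁻¹ * (√(w.2 : ℝ))⁻¹ :=
        Finset.sum_le_sum fun w _ ↦ Nat.floor_le (by positivity)
    _ = √(X * Y) * ((∑ n ∈ Finset.Icc 1 ⌊b⌋₊, (√(n : ℝ))⁻¹) *
          ∑ n ∈ Finset.Icc 1 ⌊c⌋₊, (√(n : ℝ))⁻¹) := by
        simp only [Finset.sum_product, ← Finset.mul_sum, ← Finset.sum_mul, mul_assoc]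
    _ ≤ √(X * Y) * ((2 * √b) * (2 * √c)) := by
        gcongr
        exacts [sum_Icc_floor_inv_sqrt_le hb, sum_Icc_floor_inv_sqrt_le hc]
    _ = 4 * √(X * Y * (b * c)) := by
        rw [Real.sqrt_mul' (X * Y) (mul_nonneg hb hc), Real.sqrt_mul hb]
        ring

theorem exists_pos_pairwise_mul_eq {X Y Z : ℝ} (hX : 0 < X) (hY : 0 < Y) (hZ : 0 < Z) :
    ∃ a b c : ℝ, 0 < a ∧ 0 < b ∧ 0 < c ∧ a * b = X ∧ a * c = Y ∧ b * c = Z := by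
  refine ⟨√X * √Y / √Z, √X * √Z / √Y, √Y * √Z / √X, by positivity, by positivity,
    by positivity, ?_, ?_, ?_⟩ <;> field_simp <;> exact Real.sq_sqrt (by positivity)

theorem card_le_sqrt_of_pairwise_mul_le {T : Finset α} {x y z : α → ℕ}
    (hinj : ∀ t ∈ T, ∀ t' ∈ T, x t = x t' → y t = y t' → z t = z t' → t = t')
    {X Y Z : ℝ} (hpos : ∀ t ∈ T, 0 < x t ∧ 0 < y t ∧ 0 < z t)
    (hmul : ∀ t ∈ T, (x t * y t : ℝ) ≤ X ∧ (x t * z t : ℝ) ≤ Y ∧ (y t * z t : ℝ) ≤ Z) :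
    (T.card : ℝ) ≤ 12 * √(X * Y * Z) := by
  classical
  rcases T.eq_empty_or_nonempty with rfl | ⟨t₀, ht₀⟩
  · simp
  obtain ⟨hX, hY, hZ⟩ : 0 < X ∧ 0 < Y ∧ 0 < Z := by
    obtain ⟨hx, hy, hz⟩ := hpos t₀ ht₀
    obtain ⟨hxy, hxz, hyz⟩ := hmul t₀ ht₀
    exact ⟨hxy.trans_lt' (by positivity), hxz.trans_lt' (by positivity),
      hyz.trans_lt' (by positivity)⟩
  obtain ⟨a, b, c, ha, hb, hc, rfl, rfl, rfl⟩ := exists_pos_pairwise_mul_eq hX hY hZ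
  let T₁ : Finset α := {t ∈ T | (y t : ℝ) ≤ b ∧ (z t : ℝ) ≤ c}
  let T₂ : Finset α := {t ∈ T | (x t : ℝ) ≤ a ∧ (z t : ℝ) ≤ c}
  let T₃ : Finset α := {t ∈ T | (x t : ℝ) ≤ a ∧ (y t : ℝ) ≤ b}
  have hcover : T ⊆ T₁ ∪ T₂ ∪ T₃ := by
    intro t ht
    obtain ⟨hxy, hxz, hyz⟩ := hmul t ht
    have hx_or_hy : (x t : ℝ) ≤ a ∨ (y t : ℝ) ≤ b := by by_contra! h; nlinarith
    have hx_or_hz : (x t : ℝ) ≤ a ∨ (z t : ℝ) ≤ c := by by_contra! h; nlinarith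
    have hy_or_hz : (y t : ℝ) ≤ b ∨ (z t : ℝ) ≤ c := by by_contra! h; nlinarith
    simp only [T₁, T₂, T₃, Finset.mem_union, Finset.mem_filter]
    tauto
  have h₁ : (T₁.card : ℝ) ≤ 4 * √(a * b * (a * c) * (b * c)) := by
    refine card_le_of_mul_le_of_le (x := x) (y := y) (z := z) ?_ hb.le hc.le ?_ ?_ ?_ <;> grind
  have h₂ : (T₂.card : ℝ) ≤ 4 * √(a * b * (b * c) * (a * c)) := by
    refine card_le_of_mul_le_of_le (x := y) (y := x) (z := z) ?_ ha.le hc.le ?_ ?_ ?_ <;> grind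
  have h₃ : (T₃.card : ℝ) ≤ 4 * √(a * c * (b * c) * (a * b)) := by
    refine card_le_of_mul_le_of_le (x := z) (y := x) (z := y) ?_ ha.le hb.le ?_ ?_ ?_ <;> grind
  have hunion : (T.card : ℝ) ≤ T₁.card + T₂.card + T₃.card := by
    have h₁₂ := Finset.card_union_le T₁ T₂
    have h₁₂₃ := Finset.card_union_le (T₁ ∪ T₂) T₃
    exact_mod_cast (by linarith [Finset.card_le_card hcover])
  rw [mul_right_comm (a * b) (b * c)] at h₂
  rw [show a * c * (b * c) * (a * b) = a * b * (a * c) * (b * c) by ring] at h₃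
  linarith

end Counting

section Boxes

/-- The triples of positive integers that are at most `B`. -/
def positiveBox (B : ℝ) : Set (ℕ × ℕ × ℕ) :=
  {t | 0 < t.1 ∧ 0 < t.2.1 ∧ 0 < t.2.2 ∧ (t.1 : ℝ) ≤ B ∧ (t.2.1 : ℝ) ≤ B ∧ (t.2.2 : ℝ) ≤ B}

/-- The triples `(D₁ x y, D₂ x z, D₃ y z)`, where `D = (D₁, D₂, D₃)`: each pair of entries shares
one of the three variables. -/
def pairwiseMultiples (D : ℕ × ℕ × ℕ) : Set (ℕ × ℕ × ℕ) :=
  {t | ∃ x y z, (D.1 * (x * y), D.2.1 * (x * z), D.2.2 * (y * z)) = t}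

theorem finite_positiveBox (B : ℝ) : (positiveBox B).Finite := by
  refine (Set.finite_Icc 0 (⌊B⌋₊, ⌊B⌋₊, ⌊B⌋₊)).subset ?_
  rintro t ⟨-, -, -, h₁, h₂, h₃⟩
  exact ⟨zero_le, Nat.le_floor h₁, Nat.le_floor h₂, Nat.le_floor h₃⟩

theorem pos_and_mul_le_div_of_mem_positiveBox {B : ℝ} {D : ℕ × ℕ × ℕ} {x y z : ℕ}
    (h : (D.1 * (x * y), D.2.1 * (x * z), D.2.2 * (y * z)) ∈ positiveBox B) :
    (0 < x ∧ 0 < y ∧ 0 < z) ∧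
      (x * y : ℝ) ≤ B / D.1 ∧ (x * z : ℝ) ≤ B / D.2.1 ∧ (y * z : ℝ) ≤ B / D.2.2 := by
  obtain ⟨h₁, h₂, h₃, hB₁, hB₂, hB₃⟩ := h
  simp only [CanonicallyOrderedAdd.mul_pos] at h₁ h₂ h₃
  push_cast at hB₁ hB₂ hB₃
  rw [le_div_iff₀' (Nat.cast_pos.2 h₁.1), le_div_iff₀' (Nat.cast_pos.2 h₂.1),
    le_div_iff₀' (Nat.cast_pos.2 h₃.1)]
  exact ⟨⟨h₁.2.1, h₁.2.2, h₂.2.2⟩, hB₁, hB₂, hB₃⟩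

theorem sqrt_div_mul_div_mul_div {B D₁ D₂ D₃ : ℝ} (hB : 0 ≤ B) (hD : 0 ≤ D₁ * D₂ * D₃) :
    √(B / D₁ * (B / D₂) * (B / D₃)) =
      B ^ (3 / 2 : ℝ) * (D₁ * D₂ * D₃) ^ (-(1 / 2) : ℝ) := by
  have hcube : B ^ (3 / 2 : ℝ) = √(B ^ 3) := by
    rw [Real.sqrt_eq_rpow, ← Real.rpow_natCast_mul hB]
    norm_num
  rw [hcube, Real.rpow_neg hD, ← Real.sqrt_eq_rpow, ← Real.sqrt_inv,
    ← Real.sqrt_mul (by positivity)]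
  congr 1
  rw [div_mul_div_comm, div_mul_div_comm, ← div_eq_mul_inv]
  ring

theorem ncard_positiveBox_inter_pairwiseMultiples_le {B : ℝ} (hB : 0 ≤ B) (D : ℕ × ℕ × ℕ) :
    ((positiveBox B ∩ pairwiseMultiples D).ncard : ℝ) ≤
      12 * B ^ (3 / 2 : ℝ) * (D.1 * D.2.1 * D.2.2 : ℝ) ^ (-(1 / 2) : ℝ) := by
  have hfin : (positiveBox B ∩ pairwiseMultiples D).Finite := (finite_positiveBox B).inter_of_left _
  rw [Set.ncard_eq_toFinset_card _ hfin, mul_assoc,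
    ← sqrt_div_mul_div_mul_div hB (by positivity)]
  have hvars (t : ℕ × ℕ × ℕ) (ht : t ∈ hfin.toFinset) := (hfin.mem_toFinset.1 ht).2
  choose! x y z hxyz using hvars
  have hbounds (t : ℕ × ℕ × ℕ) (ht : t ∈ hfin.toFinset) :=
    pos_and_mul_le_div_of_mem_positiveBox ((hxyz t ht).symm ▸ (hfin.mem_toFinset.1 ht).1)
  refine card_le_sqrt_of_pairwise_mul_le (fun t ht t' ht' hx hy hz ↦ ?_)
    (fun t ht ↦ (hbounds t ht).1) fun t ht ↦ (hbounds t ht).2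
  rw [← hxyz t ht, ← hxyz t' ht', hx, hy, hz]

theorem ncard_positiveBox_inter_iUnion_pairwiseMultiples_le {ι : Type*} {D : ι → ℕ × ℕ × ℕ}
    (hD : Summable fun i ↦ ((D i).1 * (D i).2.1 * (D i).2.2 : ℝ) ^ (-(1 / 2) : ℝ))
    {B : ℝ} (hB : 0 ≤ B) :
    ((positiveBox B ∩ ⋃ i, pairwiseMultiples (D i)).ncard : ℝ) ≤ 12 * B ^ (3 / 2 : ℝ) *
      ∑' i, ((D i).1 * (D i).2.1 * (D i).2.2 : ℝ) ^ (-(1 / 2) : ℝ) := by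
  rw [← tsum_mul_left]
  refine ncard_le_tsum_of_subset_iUnion ((finite_positiveBox B).inter_of_left _)
    (hD.mul_left _) Set.inter_subset_right fun i ↦ ?_
  refine (Nat.cast_le.2 (Set.ncard_le_ncard ?_ ((finite_positiveBox B).inter_of_left _))).trans
    (ncard_positiveBox_inter_pairwiseMultiples_le hB (D i))
  exact Set.inter_subset_inter_left _ Set.inter_subset_left

end Boxes

section Summability

theorem summable_factoredNumbers_rpow_neg (s : Finset ℕ) {σ : ℝ} (hσ : 0 < σ) :
    Summable fun r : Nat.factoredNumbers s ↦ (r : ℝ) ^ (-σ) := by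
  let f : ℕ →* ℝ :=
    { toFun := fun n ↦ (n : ℝ) ^ (-σ)
      map_one' := by simp
      map_mul' := fun m n ↦ by
        rw [Nat.cast_mul, Real.mul_rpow m.cast_nonneg n.cast_nonneg] }
  have hf {p : ℕ} (hp : p.Prime) : ‖f p‖ < 1 := by
    change ‖(p : ℝ) ^ (-σ)‖ < 1
    rw [Real.norm_of_nonneg (Real.rpow_nonneg p.cast_nonneg _)]
    exact Real.rpow_lt_one_of_one_lt_of_neg (Nat.one_lt_cast.2 hp.one_lt) (neg_lt_zero.2 hσ)
  exact (EulerProduct.summable_and_hasSum_factoredNumbers_prod_filter_prime_geometric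
    hf s).1.of_norm

theorem summable_pi_prod_of_nonneg {α : Type*} {f : α → ℝ} (hf : Summable f) (hf₀ : ∀ a, 0 ≤ f a)
    (n : ℕ) : Summable fun x : Fin n → α ↦ ∏ i, f (x i) := by
  induction n with
  | zero => exact (hasSum_fintype _).summable
  | succ n ih =>
    rw [← (Fin.consEquiv fun _ ↦ α).summable_iff]
    refine (hf.mul_of_nonneg ih hf₀ fun x ↦ Finset.prod_nonneg fun i _ ↦ hf₀ _).congr fun x ↦ ?_
    simp [Fin.consEquiv, Fin.prod_univ_succ]

end Summability

/-- The factors of the `aᵢ` other than `u₁₂`, `u₁₃`, `u₂₃`, with the `rᵢ` composed of primes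
in `s`. -/
structure Cofactors (s : Finset ℕ) where
  (r₁ r₂ r₃ : Nat.factoredNumbers s)
  (b₁ b₂ b₃ v₁₂ v₂₁ v₁₃ v₃₁ v₂₃ v₃₂ : ℕ)

namespace Cofactors

variable {s : Finset ℕ}

/-- The quotients `(a₁ / (u₁₂ u₁₃), a₂ / (u₁₂ u₂₃), a₃ / (u₁₃ u₂₃))`. -/
def toTriple (d : Cofactors s) : ℕ × ℕ × ℕ :=
  (d.r₁ * d.b₁ ^ 3 * d.v₁₂ * d.v₂₁ ^ 2 * d.v₁₃ * d.v₃₁ ^ 2,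
    d.r₂ * d.b₂ ^ 3 * d.v₂₁ * d.v₁₂ ^ 2 * d.v₂₃ * d.v₃₂ ^ 2,
    d.r₃ * d.b₃ ^ 3 * d.v₃₁ * d.v₁₃ ^ 2 * d.v₃₂ * d.v₂₃ ^ 2)

/-- The factors on which the product of the entries of `toTriple` depends linearly. -/
def linearPart (d : Cofactors s) : Fin 3 → Nat.factoredNumbers s :=
  ![d.r₁, d.r₂, d.r₃]

/-- The factors that enter the product of the entries of `toTriple` as cubes. -/
def cubicPart (d : Cofactors s) : Fin 9 → ℕ :=
  ![d.b₁, d.b₂, d.b₃, d.v₁₂, d.v₂₁, d.v₁₃, d.v₃₁, d.v₂₃, d.v₃₂]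

theorem injective_linearPart_cubicPart :
    Function.Injective fun d : Cofactors s ↦ (d.linearPart, d.cubicPart) := by
  rintro ⟨⟩ ⟨⟩ h
  simp_all [linearPart, cubicPart]

theorem toTriple_prod_eq (d : Cofactors s) :
    d.toTriple.1 * d.toTriple.2.1 * d.toTriple.2.2 =
      (∏ i, (d.linearPart i : ℕ)) * ∏ i, d.cubicPart i ^ 3 := by
  simp only [toTriple, linearPart, cubicPart, Fin.prod_univ_three, Fin.prod_univ_castSucc (n := 8),
    Fin.prod_univ_eight, Fin.reduceCastSucc, Fin.reduceLast, Matrix.cons_val]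
  ring

theorem toTriple_prod_rpow_eq (d : Cofactors s) :
    (d.toTriple.1 * d.toTriple.2.1 * d.toTriple.2.2 : ℝ) ^ (-(1 / 2) : ℝ) =
      (∏ i, (d.linearPart i : ℝ) ^ (-(1 / 2) : ℝ)) * ∏ i, (d.cubicPart i : ℝ) ^ (-(3 / 2) : ℝ) := by
  have hcube (n : ℕ) : ((n : ℝ) ^ 3) ^ (-(1 / 2) : ℝ) = (n : ℝ) ^ (-(3 / 2) : ℝ) := by
    rw [← Real.rpow_natCast_mul n.cast_nonneg]
    norm_num
  have hprod := congrArg (Nat.cast : ℕ → ℝ) d.toTriple_prod_eq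
  push_cast at hprod
  rw [hprod, Real.mul_rpow (by positivity) (by positivity),
    ← Real.finsetProd_rpow _ _ fun i _ ↦ by positivity,
    ← Real.finsetProd_rpow _ _ fun i _ ↦ by positivity]
  simp only [hcube]

theorem summable_toTriple_prod_rpow :
    Summable fun d : Cofactors s ↦
      (d.toTriple.1 * d.toTriple.2.1 * d.toTriple.2.2 : ℝ) ^ (-(1 / 2) : ℝ) := by
  have hnonneg (σ : ℝ) (n : ℕ) : 0 ≤ (n : ℝ) ^ σ := Real.rpow_nonneg n.cast_nonneg σ
  have hlinear := summable_pi_prod_of_nonneg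
    (summable_factoredNumbers_rpow_neg s one_half_pos) (fun r ↦ hnonneg _ r) 3
  have hcubic := summable_pi_prod_of_nonneg
    (Real.summable_nat_rpow.2 (show (-(3 / 2) : ℝ) < -1 by norm_num)) (hnonneg _) 9
  have hprod := hlinear.mul_of_nonneg hcubic (fun x ↦ Finset.prod_nonneg fun i _ ↦ hnonneg _ _)
    fun x ↦ Finset.prod_nonneg fun i _ ↦ hnonneg _ _
  simpa only [toTriple_prod_rpow_eq, Function.comp_def] using
    hprod.comp_injective injective_linearPart_cubicPart

end Cofactors

theorem mem_factoredNumbers_primeFactors_union_range {a : ℤ} (ha : a ≠ 0) {k r : ℕ} (hr : 0 < r)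
    (h : ∀ p : ℕ, p.Prime → p ∣ r → (p : ℤ) ∣ a ∨ p < k) :
    r ∈ Nat.factoredNumbers (a.natAbs.primeFactors ∪ Finset.range k) := by
  refine Nat.mem_factoredNumbers_of_primeFactors_subset hr.ne' fun p hp ↦ ?_
  have hprime := Nat.prime_of_mem_primeFactors hp
  simpa [hprime, ha, Int.natCast_dvd] using h p hprime (Nat.dvd_of_mem_primeFactors hp)

theorem stmt_12_general (s : Finset ℕ) :
    ∃ C : ℝ, 0 < C ∧ ∀ B : ℝ, 0 ≤ B →
      ((positiveBox B ∩ ⋃ d : Cofactors s, pairwiseMultiples d.toTriple).ncard : ℝ) ≤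
        C * B ^ (3 / 2 : ℝ) := by
  set K := ∑' d : Cofactors s, (d.toTriple.1 * d.toTriple.2.1 * d.toTriple.2.2 : ℝ) ^ (-(1 / 2) : ℝ)
  have hK : 0 ≤ K := tsum_nonneg fun d ↦ by positivity
  refine ⟨12 * K + 1, by linarith only [hK], fun B hB ↦ ?_⟩
  have hB_pow : 0 ≤ B ^ (3 / 2 : ℝ) := by positivity
  have hcount := ncard_positiveBox_inter_iUnion_pairwiseMultiples_le
    (Cofactors.summable_toTriple_prod_rpow (s := s)) hB
  linarith

/-- For a fixed nonzero integer `a₀`, the number of triples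
`(a₁,a₂,a₃)` of positive integers at most `B` admitting the factorization from the
proof of Theorem 1.3 (primes dividing `r₁r₂r₃` divide `a₀` or are less than 17,
`u`'s and `v`'s squarefree) is at most `C·B^{3/2}`. -/
theorem stmt_12 (a₀ : ℤ) (h₀ : a₀ ≠ 0) :
    ∃ C : ℝ, 0 < C ∧ ∀ B : ℝ, 1 ≤ B →
      (({t : ℕ × ℕ × ℕ |
          0 < t.1 ∧ 0 < t.2.1 ∧ 0 < t.2.2 ∧
          (t.1 : ℝ) ≤ B ∧ (t.2.1 : ℝ) ≤ B ∧ (t.2.2 : ℝ) ≤ B ∧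
          ∃ r₁ r₂ r₃ b₁ b₂ b₃ u12 u13 u23 v12 v21 v13 v31 v23 v32 : ℕ,
            0 < r₁ ∧ 0 < r₂ ∧ 0 < r₃ ∧ 0 < b₁ ∧ 0 < b₂ ∧ 0 < b₃ ∧
            Squarefree u12 ∧ Squarefree u13 ∧ Squarefree u23 ∧
            Squarefree v12 ∧ Squarefree v21 ∧ Squarefree v13 ∧
            Squarefree v31 ∧ Squarefree v23 ∧ Squarefree v32 ∧
            t.1 = r₁ * b₁ ^ 3 * u12 * u13 * v12 * v21 ^ 2 * v13 * v31 ^ 2 ∧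
            t.2.1 = r₂ * b₂ ^ 3 * u12 * u23 * v21 * v12 ^ 2 * v23 * v32 ^ 2 ∧
            t.2.2 = r₃ * b₃ ^ 3 * u13 * u23 * v31 * v13 ^ 2 * v32 * v23 ^ 2 ∧
            (∀ p : ℕ, p.Prime → (p ∣ r₁ ∨ p ∣ r₂ ∨ p ∣ r₃) →
              ((p : ℤ) ∣ a₀ ∨ p < 17))}.ncard : ℝ)) ≤
        C * B ^ ((3 : ℝ) / 2) := by
  obtain ⟨C, hC, hcount⟩ := stmt_12_general (a₀.natAbs.primeFactors ∪ Finset.range 17)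
  refine ⟨C, hC, fun B hB ↦ (Nat.cast_le.2 (Set.ncard_le_ncard ?_
    ((finite_positiveBox B).inter_of_left _))).trans (hcount B (by positivity))⟩
  rintro t ⟨ht₁, ht₂, ht₃, hB₁, hB₂, hB₃, r₁, r₂, r₃, b₁, b₂, b₃, u12, u13, u23, v12, v21, v13, v31,
    v23, v32, hr₁, hr₂, hr₃, -, -, -, -, -, -, -, -, -, -, -, -, ha₁, ha₂, ha₃, hp⟩
  have hmem {r : ℕ} (hr : 0 < r) (hdvd : ∀ p, p ∣ r → p ∣ r₁ ∨ p ∣ r₂ ∨ p ∣ r₃) :=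
    mem_factoredNumbers_primeFactors_union_range h₀ hr fun p hprime hpr ↦ hp p hprime (hdvd p hpr)
  let d : Cofactors (a₀.natAbs.primeFactors ∪ Finset.range 17) :=
    ⟨⟨r₁, hmem hr₁ (by tauto)⟩, ⟨r₂, hmem hr₂ (by tauto)⟩, ⟨r₃, hmem hr₃ (by tauto)⟩,
      b₁, b₂, b₃, v12, v21, v13, v31, v23, v32⟩
  refine ⟨⟨ht₁, ht₂, ht₃, hB₁, hB₂, hB₃⟩, Set.mem_iUnion.2 ⟨d, u12, u13, u23, ?_⟩⟩
  refine Prod.ext (.trans ?_ ha₁.symm) (Prod.ext (.trans ?_ ha₂.symm) (.trans ?_ ha₃.symm)) <;>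
    simp only [d, Cofactors.toTriple] <;> ring
end

section
/- Let q be a prime number with q ≡ 8 (mod 9). Let K = ℚ(β) be the cubic field obtained by adjoining to ℚ a root β of X³ − 4/5 (equivalently, K = ℚ(∛10)). Then there exists an element ε of the ring of integers of K with Norm_{K/ℚ}(ε) = −5q. -/
/-!
`K` is generated by the integer `u = (4 + θ + θ²) / 3`, where `θ = ∛10 = (5/2) β²`, a root of the
Eisenstein polynomial `f = X³ - 4X² + 2X - 2`. Since `N(a - u) = f(a)`, the elements `-u`, `1 - u`
and `3 - u` have norms `-2`, `-3` and `-5`, so `f'(u) = -(3 - u)² u² (1 - u)` has norm `300`. As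
`f'(u)` generates the product of the different of `K` and the conductor of `ℤ[u]`, both `|disc K|`
and the exponent of `𝓞 K / ℤ[u]` divide `300`. Minkowski's bound then leaves only primes of norm
less than `5`; these contain `2` or `3` and are principal because `2 ∣ u³` and `3 = (1 - u)² γ` with
`N(γ) = 3`. So `𝓞 K` is a principal ideal domain.

Cubing is bijective modulo a prime `q ≡ 2 (mod 3)`, so `10` is a cube modulo `q`. Hence `f` has a
root modulo `q`, which by Dedekind–Kummer gives an ideal of norm `q`, and multiplying a generator
of norm `q` by `3 - u` gives norm `-5q`.
-/

open Module NumberField Polynomial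

theorem surjective_pow_of_card_sub_one_coprime {F : Type*} [Field F] [Finite F] {n : ℕ}
    (hn : n ≠ 0) (h : (Nat.card F - 1).Coprime n) : Function.Surjective fun a : F ↦ a ^ n := by
  intro a
  obtain rfl | ha := eq_or_ne a 0
  · exact ⟨0, zero_pow hn⟩
  · obtain ⟨b, hb⟩ := (powCoprime (Nat.card_units F ▸ h)).surjective (Units.mk0 a ha)
    exact ⟨b, by simpa using congrArg Units.val hb⟩

theorem surjective_cube_of_mod_three_eq_two {p : ℕ} [Fact p.Prime] (hp : p % 3 = 2) :
    Function.Surjective fun a : ZMod p ↦ a ^ 3 := by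
  refine surjective_pow_of_card_sub_one_coprime three_ne_zero ?_
  rw [Nat.card_zmod, Nat.coprime_comm, Nat.prime_three.coprime_iff_not_dvd]
  lia

section Norm

theorem norm_neg_eq_neg_one_pow_mul_norm {R S : Type*} [CommRing R] [Ring S] [Algebra R S]
    [Free R S] (x : S) : Algebra.norm R (-x) = (-1) ^ finrank R S * Algebra.norm R x := by
  rw [neg_eq_neg_one_mul, map_mul, ← Algebra.norm_algebraMap (S := S) (-1 : R)]
  simp

theorem norm_algebraMap_sub_gen_eq_eval_minpoly {R S : Type*} [CommRing R] [CommRing S]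
    [Nontrivial R] [Algebra R S] (pb : PowerBasis R S) (r : R) :
    Algebra.norm R (algebraMap R S r - pb.gen) = (minpoly R pb.gen).eval r := by
  rw [← charpoly_leftMulMatrix, Matrix.eval_charpoly, Algebra.norm_eq_matrix_det pb.basis, map_sub,
    AlgHom.commutes]
  rfl

end Norm

section Generator

variable {K : Type*} [Field K] [NumberField K] {x : 𝓞 K}

theorem norm_intCast_sub_eq_eval_minpoly (hx : Algebra.adjoin ℚ {(x : K)} = ⊤) (a : ℤ) :
    Algebra.norm ℤ (a - x) = (minpoly ℤ x).eval a := by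
  have h := norm_algebraMap_sub_gen_eq_eval_minpoly
    (PowerBasis.ofAdjoinEqTop (x.isIntegral_coe.tower_top) hx) (a : ℚ)
  rw [PowerBasis.ofAdjoinEqTop_gen,
    minpoly.isIntegrallyClosed_eq_field_fractions ℚ K x.isIntegral] at h
  apply Int.cast_injective (α := ℚ)
  rw [Algebra.coe_norm_int]
  simpa using h

theorem absNorm_conductor_mul_natAbs_discr (hx : Algebra.adjoin ℚ {(x : K)} = ⊤) :
    (conductor ℤ x).absNorm * (discr K).natAbs =
      (Algebra.norm ℤ (aeval x (derivative (minpoly ℤ x)))).natAbs := by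
  rw [← absNorm_differentIdeal K (𝓞 K), ← map_mul, conductor_mul_differentIdeal ℤ ℚ K x hx,
    Ideal.absNorm_span_singleton]

theorem exists_absNorm_eq_of_aeval_minpoly_eq_zero {p : ℕ} [Fact p.Prime]
    (hp : ¬ p ∣ RingOfIntegers.exponent x) {a : ZMod p} (ha : aeval a (minpoly ℤ x) = 0) :
    ∃ I : Ideal (𝓞 K), I.absNorm = p := by
  have hQ : X - C a ∈ RingOfIntegers.monicFactorsMod x p := by
    rw [Multiset.mem_toFinset, Polynomial.mem_normalizedFactors_iff
      (map_monic_ne_zero (minpoly.monic x.isIntegral))]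
    refine ⟨irreducible_X_sub_C _, monic_X_sub_C _, dvd_iff_isRoot.mpr ?_⟩
    simpa [aeval_def, eval_map] using ha
  let P := (NumberField.Ideal.primesOverSpanEquivMonicFactorsMod hp).symm ⟨X - C a, hQ⟩
  have hP := NumberField.Ideal.inertiaDeg_primesOverSpanEquivMonicFactorsMod_symm_apply' hp hQ
  have := P.2.1
  have := P.2.2
  refine ⟨P, ?_⟩
  rw [← Ideal.pow_inertiaDeg p P.1, hP, natDegree_X_sub_C, pow_one]

end Generator

section Ideals

variable {K : Type*} [Field K] [NumberField K]

theorem exists_norm_eq_absNorm (hK : Odd (finrank ℚ K)) (I : Ideal (𝓞 K)) [I.IsPrincipal] :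
    ∃ x : 𝓞 K, Algebra.norm ℤ x = I.absNorm := by
  obtain ⟨x, rfl⟩ := Submodule.IsPrincipal.principal I
  rw [Ideal.submodule_span_eq, Ideal.absNorm_span_singleton]
  obtain h | h := Int.natAbs_eq (Algebra.norm ℤ x)
  · exact ⟨x, h⟩
  · refine ⟨-x, ?_⟩
    rw [norm_neg_eq_neg_one_pow_mul_norm, RingOfIntegers.rank, hK.neg_one_pow]
    lia

theorem isPrincipal_of_mem_of_prime_norm {P : Ideal (𝓞 K)} (hP : P ≠ ⊤) {x : 𝓞 K}
    (hx : Prime (Algebra.norm ℤ x)) (hxP : x ∈ P) : P.IsPrincipal := by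
  have hirr : Irreducible (Ideal.span {x}).absNorm := by
    rw [Ideal.absNorm_span_singleton]
    exact Int.prime_iff_natAbs_prime.mp hx
  have hne : Ideal.span {x} ≠ ⊥ := fun h ↦ by simp [h] at hirr
  have hmax := (Ideal.isPrime_of_irreducible_absNorm hirr).isMaximal hne
  exact ⟨x, (hmax.eq_of_le hP ((Ideal.span_singleton_le_iff_mem P).mpr hxP)).symm⟩

theorem isPrincipalIdealRing_of_finrank_eq_three (hK : finrank ℚ K = 3) {n : ℕ}
    (hD : |discr K| < (9 * Real.pi / 8 * n) ^ 2)
    (h : ∀ P : Ideal (𝓞 K), P.IsPrime → P ≠ ⊥ → P.absNorm < n → P.IsPrincipal) :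
    IsPrincipalIdealRing (𝓞 K) := by
  refine RingOfIntegers.isPrincipalIdealRing_of_isPrincipal_of_norm_le_of_isPrime
    fun ⟨P, hP₀⟩ hP hle ↦ h P hP (nonZeroDivisors.ne_zero hP₀) ?_
  have hr : InfinitePlace.nrComplexPlaces K ≤ 1 := by
    have := InfinitePlace.card_add_two_mul_card_eq_rank K
    lia
  have hsqrt : √|(discr K : ℝ)| < 9 * Real.pi / 8 * n :=
    (Real.sqrt_lt (abs_nonneg _) (by positivity)).mpr (by exact_mod_cast hD)
  have hpi : 1 ≤ 4 / Real.pi := (one_le_div Real.pi_pos).mpr Real.pi_le_four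
  rify
  -- Minkowski's bound is `(4/π)^r₂ (3!/3³) √|discr K|`, with `r₂ ≤ 1` in degree three.
  calc (P.absNorm : ℝ)
      ≤ (4 / Real.pi) ^ InfinitePlace.nrComplexPlaces K * (6 / 27 * √|(discr K : ℝ)|) := by
        convert hle using 3
        norm_num [hK, Nat.factorial]
    _ ≤ 4 / Real.pi * (6 / 27 * √|(discr K : ℝ)|) := by
        gcongr
        simpa using pow_le_pow_right₀ hpi hr
    _ < 4 / Real.pi * (6 / 27 * (9 * Real.pi / 8 * n)) := by gcongr
    _ = n := by field_simp; norm_num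

end Ideals

/-- The minimal polynomial over `ℤ` of `(4 + ∛10 + ∛100) / 3`, an integral generator of `ℚ(∛10)`. -/
noncomputable def eisensteinCubic : ℤ[X] := X ^ 3 - 4 * X ^ 2 + 2 * X - 2

namespace eisensteinCubic

theorem natDegree_eq : eisensteinCubic.natDegree = 3 := by
  unfold eisensteinCubic
  compute_degree!

theorem monic : eisensteinCubic.Monic := by
  unfold eisensteinCubic
  monicity!

theorem aeval_eq {R : Type*} [CommRing R] (a : R) :
    aeval a eisensteinCubic = a ^ 3 - 4 * a ^ 2 + 2 * a - 2 := by
  simp only [eisensteinCubic, map_sub, map_add, map_mul, map_pow, aeval_X, map_ofNat]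

theorem aeval_derivative_eq {R : Type*} [CommRing R] (a : R) :
    aeval a (derivative eisensteinCubic) = 3 * a ^ 2 - 8 * a + 2 := by
  have hderiv : derivative eisensteinCubic = 3 * X ^ 2 - 8 * X + 2 := by
    simp only [eisensteinCubic, derivative_sub, derivative_add, derivative_mul, derivative_X_pow,
      derivative_X, derivative_ofNat, map_ofNat, Nat.cast_ofNat]
    ring
  simp only [hderiv, map_sub, map_add, map_mul, map_pow, aeval_X, map_ofNat]

theorem irreducible : Irreducible eisensteinCubic := by
  have hprime : (Ideal.span {(2 : ℤ)}).IsPrime :=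
    (Ideal.span_singleton_prime two_ne_zero).mpr Int.prime_two
  refine (monic.isEisensteinAt_of_mem_of_notMem hprime.ne_top (fun {n} hn ↦ ?_) ?_).irreducible
    hprime monic.isPrimitive (by simp [natDegree_eq])
  · rw [natDegree_eq] at hn
    rw [Ideal.mem_span_singleton]
    interval_cases n <;> simp [eisensteinCubic, coeff_X, coeff_ofNat_mul]
  · rw [Ideal.span_singleton_pow, Ideal.mem_span_singleton]
    simp [eisensteinCubic]

theorem aeval_eq_zero_of_cube_eq_ten {F : Type*} [Field F] (h3 : (3 : F) ≠ 0) {s : F}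
    (hs : s ^ 3 = 10) : aeval ((4 + s + s ^ 2) / 3) eisensteinCubic = 0 := by
  rw [aeval_eq]
  field_simp
  linear_combination (s ^ 3 + 3 * s ^ 2 + 3 * s + 11) * hs

variable {K : Type*} [Field K] [NumberField K] {u : 𝓞 K}

theorem minpoly_eq (hu : aeval u eisensteinCubic = 0) : minpoly ℤ u = eisensteinCubic :=
  eq_of_monic_of_associated (minpoly.monic u.isIntegral) monic <|
    (minpoly.irreducible u.isIntegral).associated_of_dvd irreducible
      (minpoly.isIntegrallyClosed_dvd u.isIntegral hu)

theorem adjoin_eq_top (hK : finrank ℚ K = 3) (hu : aeval u eisensteinCubic = 0) :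
    Algebra.adjoin ℚ {(u : K)} = ⊤ := by
  refine Algebra.adjoin_eq_top_of_primitive_element (u.isIntegral_coe.tower_top).isAlgebraic ?_
  rw [Field.primitive_element_iff_minpoly_natDegree_eq, hK,
    minpoly.isIntegrallyClosed_eq_field_fractions ℚ K u.isIntegral, minpoly_eq hu,
    monic.natDegree_map, natDegree_eq]

theorem norm_intCast_sub_root (hK : finrank ℚ K = 3) (hu : aeval u eisensteinCubic = 0) (a : ℤ) :
    Algebra.norm ℤ (a - u) = a ^ 3 - 4 * a ^ 2 + 2 * a - 2 := by
  rw [norm_intCast_sub_eq_eval_minpoly (adjoin_eq_top hK hu), minpoly_eq hu,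
    ← coe_aeval_eq_eval, aeval_eq]

theorem norm_neg_root (hK : finrank ℚ K = 3) (hu : aeval u eisensteinCubic = 0) :
    Algebra.norm ℤ (-u) = -2 := by
  simpa using norm_intCast_sub_root hK hu 0

theorem norm_one_sub_root (hK : finrank ℚ K = 3) (hu : aeval u eisensteinCubic = 0) :
    Algebra.norm ℤ (1 - u) = -3 := by
  simpa using norm_intCast_sub_root hK hu 1

theorem norm_three_sub_root (hK : finrank ℚ K = 3) (hu : aeval u eisensteinCubic = 0) :
    Algebra.norm ℤ (3 - u) = -5 := by
  simpa using norm_intCast_sub_root hK hu 3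

theorem norm_aeval_derivative (hK : finrank ℚ K = 3) (hu : aeval u eisensteinCubic = 0) :
    Algebra.norm ℤ (aeval u (derivative eisensteinCubic)) = 300 := by
  have hfactor : aeval u (derivative eisensteinCubic) = -((3 - u) ^ 2 * (-u) ^ 2 * (1 - u)) := by
    rw [aeval_eq] at hu
    rw [aeval_derivative_eq]
    linear_combination -(u ^ 2 - 3 * u + 1) * hu
  rw [hfactor, norm_neg_eq_neg_one_pow_mul_norm, RingOfIntegers.rank, hK]
  simp only [map_mul, map_pow, norm_neg_root hK hu, norm_one_sub_root hK hu,
    norm_three_sub_root hK hu]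
  norm_num

theorem absNorm_conductor_mul_natAbs_discr_eq (hK : finrank ℚ K = 3)
    (hu : aeval u eisensteinCubic = 0) :
    (conductor ℤ u).absNorm * (discr K).natAbs = 300 := by
  rw [absNorm_conductor_mul_natAbs_discr (adjoin_eq_top hK hu), minpoly_eq hu,
    norm_aeval_derivative hK hu]
  rfl

theorem exponent_dvd (hK : finrank ℚ K = 3) (hu : aeval u eisensteinCubic = 0) :
    RingOfIntegers.exponent u ∣ 300 :=
  (Int.absNorm_under_dvd_absNorm _).trans
    (Dvd.intro _ (absNorm_conductor_mul_natAbs_discr_eq hK hu))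

theorem abs_discr_le (hK : finrank ℚ K = 3) (hu : aeval u eisensteinCubic = 0) :
    |discr K| ≤ 300 := by
  rw [Int.abs_eq_natAbs]
  exact_mod_cast Nat.le_of_dvd (by norm_num)
    (Dvd.intro_left _ (absNorm_conductor_mul_natAbs_discr_eq hK hu))

theorem isPrincipal_of_two_mem (hK : finrank ℚ K = 3) (hu : aeval u eisensteinCubic = 0)
    {P : Ideal (𝓞 K)} [hP : P.IsPrime] (h2 : 2 ∈ P) : P.IsPrincipal := by
  have hcube : (-u) ^ 3 = 2 * (-2 * u ^ 2 + u - 1) := by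
    rw [aeval_eq] at hu
    linear_combination -hu
  refine isPrincipal_of_mem_of_prime_norm hP.ne_top ?_
    (hP.mem_of_pow_mem 3 (hcube ▸ P.mul_mem_right _ h2))
  rw [norm_neg_root hK hu]
  exact Int.prime_two.neg

theorem isPrincipal_of_three_mem (hK : finrank ℚ K = 3) (hu : aeval u eisensteinCubic = 0)
    {P : Ideal (𝓞 K)} [hP : P.IsPrime] (h3 : 3 ∈ P) : P.IsPrincipal := by
  have hfactor : (1 - u) ^ 2 * (4 * u - u ^ 2 - 1) = 3 := by
    rw [aeval_eq] at hu
    linear_combination (2 - u) * hu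
  have hnorm : Algebra.norm ℤ (4 * u - u ^ 2 - 1) = 3 := by
    have := congrArg (Algebra.norm ℤ) hfactor
    have h27 : Algebra.norm ℤ (3 : 𝓞 K) = 27 := by
      simpa [RingOfIntegers.rank, hK] using Algebra.norm_algebraMap (S := 𝓞 K) (3 : ℤ)
    rw [map_mul, map_pow, norm_one_sub_root hK hu, h27] at this
    lia
  obtain h | h := hP.mem_or_mem (hfactor ▸ h3)
  · refine isPrincipal_of_mem_of_prime_norm hP.ne_top ?_ (hP.mem_of_pow_mem 2 h)
    rw [norm_one_sub_root hK hu]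
    exact Int.prime_three.neg
  · exact isPrincipal_of_mem_of_prime_norm hP.ne_top (hnorm ▸ Int.prime_three) h

theorem isPrincipalIdealRing (hK : finrank ℚ K = 3) (hu : aeval u eisensteinCubic = 0) :
    IsPrincipalIdealRing (𝓞 K) := by
  have hdiscr : ((|discr K| : ℤ) : ℝ) < (9 * Real.pi / 8 * (5 : ℕ)) ^ 2 := by
    calc ((|discr K| : ℤ) : ℝ) ≤ 300 := by exact_mod_cast abs_discr_le hK hu
      _ < (9 * 3.14 / 8 * (5 : ℕ)) ^ 2 := by norm_num
      _ < (9 * Real.pi / 8 * (5 : ℕ)) ^ 2 := by gcongr; exact Real.pi_gt_d2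
  refine isPrincipalIdealRing_of_finrank_eq_three hK hdiscr fun P hP hP₀ hlt ↦ ?_
  have hmem := Ideal.absNorm_mem P
  have h0 : P.absNorm ≠ 0 := mt Ideal.absNorm_eq_zero_iff.mp hP₀
  have h1 : P.absNorm ≠ 1 := mt Ideal.absNorm_eq_one_iff.mp hP.ne_top
  interval_cases P.absNorm
  · contradiction
  · contradiction
  · exact isPrincipal_of_two_mem hK hu (by exact_mod_cast hmem)
  · exact isPrincipal_of_three_mem hK hu (by exact_mod_cast hmem)
  · have h4 : (2 : 𝓞 K) ^ 2 ∈ P := by convert hmem using 1; norm_num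
    exact isPrincipal_of_two_mem hK hu (hP.mem_of_pow_mem 2 h4)

theorem exists_absNorm_eq_of_cube_eq_ten (hK : finrank ℚ K = 3) (hu : aeval u eisensteinCubic = 0)
    {q : ℕ} [hq : Fact q.Prime] {s : ZMod q} (hs : s ^ 3 = 10) :
    ∃ I : Ideal (𝓞 K), I.absNorm = q := by
  by_cases hq300 : q ∣ 300
  · have hsmall : q = 2 ∨ q = 3 ∨ q = 5 := by
      rwa [show 300 = 2 ^ 2 * 3 * 5 ^ 2 from rfl, hq.out.dvd_mul, hq.out.dvd_mul,
        hq.out.prime.dvd_pow_iff_dvd two_ne_zero, hq.out.prime.dvd_pow_iff_dvd two_ne_zero,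
        Nat.prime_dvd_prime_iff_eq hq.out Nat.prime_two,
        Nat.prime_dvd_prime_iff_eq hq.out Nat.prime_three,
        Nat.prime_dvd_prime_iff_eq hq.out Nat.prime_five, or_assoc] at hq300
    rcases hsmall with rfl | rfl | rfl
    · exact ⟨Ideal.span {-u}, by rw [Ideal.absNorm_span_singleton, norm_neg_root hK hu]; rfl⟩
    · exact ⟨Ideal.span {1 - u}, by simp [norm_one_sub_root hK hu]⟩
    · exact ⟨Ideal.span {3 - u}, by simp [norm_three_sub_root hK hu]⟩
  · have h3 : (3 : ZMod q) ≠ 0 := fun h ↦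
      hq300 (((ZMod.natCast_eq_zero_iff 3 q).mp (by exact_mod_cast h)).trans (by norm_num))
    refine exists_absNorm_eq_of_aeval_minpoly_eq_zero (x := u)
      (fun h ↦ hq300 (h.trans (exponent_dvd hK hu))) (a := (4 + s + s ^ 2) / 3) ?_
    rw [minpoly_eq hu, aeval_eq_zero_of_cube_eq_ten h3 hs]

theorem exists_aeval_eq_zero {θ : K} (hθ : θ ^ 3 = 10) :
    ∃ u : 𝓞 K, aeval u eisensteinCubic = 0 := by
  have h := aeval_eq_zero_of_cube_eq_ten three_ne_zero hθ
  let u : 𝓞 K := ⟨(4 + θ + θ ^ 2) / 3, eisensteinCubic, monic, h⟩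
  refine ⟨u, RingOfIntegers.coe_injective ?_⟩
  rw [← aeval_algebraMap_apply, map_zero]
  exact h

end eisensteinCubic

theorem stmt_13_general (q : ℕ) (hq : q.Prime) (hcube : ∃ s : ZMod q, s ^ 3 = 10)
    (K : Type*) [Field K] [NumberField K] (β : K) (hβ : β ^ 3 = 4 / 5)
    (hrank : Module.finrank ℚ K = 3) :
    ∃ ε : NumberField.RingOfIntegers K,
      Algebra.norm ℚ (ε : K) = -(5 * q) := by
  have hθ : (5 / 2 * β ^ 2) ^ 3 = 10 := by
    linear_combination (125 / 8 * (β ^ 3 + 4 / 5)) * hβ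
  obtain ⟨u, hu⟩ := eisensteinCubic.exists_aeval_eq_zero hθ
  obtain ⟨s, hs⟩ := hcube
  have := Fact.mk hq
  have := eisensteinCubic.isPrincipalIdealRing hrank hu
  obtain ⟨I, hI⟩ := eisensteinCubic.exists_absNorm_eq_of_cube_eq_ten hrank hu hs
  obtain ⟨x, hx⟩ := exists_norm_eq_absNorm (hrank ▸ by decide) I
  refine ⟨(3 - u) * x, ?_⟩
  rw [← Algebra.coe_norm_int, map_mul, eisensteinCubic.norm_three_sub_root hrank hu, hx, hI]
  push_cast
  ring

/-- Let `q ≡ 8 (mod 9)` be prime and `K = ℚ(β)` the cubic field with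
`β³ = 4/5`. Then there is an element `ε` of the ring of integers of `K` with
`Norm_{K/ℚ}(ε) = −5q`. -/
theorem stmt_13 (q : ℕ) (hq : q.Prime) (hq9 : q % 9 = 8)
    (K : Type*) [Field K] [NumberField K] (β : K) (hβ : β ^ 3 = 4 / 5)
    (hrank : Module.finrank ℚ K = 3) :
    ∃ ε : NumberField.RingOfIntegers K,
      Algebra.norm ℚ (ε : K) = -(5 * q) := by
  have := Fact.mk hq
  exact stmt_13_general q hq (surjective_cube_of_mod_three_eq_two (by lia) 10) K β hβ hrank
end
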